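/- arXiv:math/0609513 — 2 statements merged into one kernel-verified Lean document; each statement's English description precedes it below -/
import Mathlib

section
/- Let N ≥ 3 and 0 < m < (N-2)/N. Let u and v be two solutions of the fast diffusion equation on ℝ^N × (0,T) with initial values u₀, v₀ such that u₀ - v₀ ∈ L¹(ℝ^N) and has compact support. Then for every τ ∈ [-log T, ∞) there is a finite constant C(τ) such that ∫_{ℝ^N} |ũ(x,τ) - ṽ(x,τ)| dx ≤ C(τ), where ũ and ṽ are the rescaled solutions of u and v. -/
/-!
The rescaling is a dilation in `x` and a multiplication by a constant, so it suffices to bound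
`‖u(t) - v(t)‖₁` at each time `0 ≤ t < T`. Put `d = u - v` and `a = u ^ m - v ^ m`. Then
`∂ₜ d = Δ a`, the functions `a` and `d` have the same sign, and `|a| ≤ |d| ^ m`. For a nonnegative
compactly supported weight `η`, Kato's inequality (`kato_test`) gives formally
`d/dt ∫ η |d| ≤ ∫ |a| Δη`.

For a plain cut-off at radius `R`, Hölder's inequality bounds the right-hand side by a quantity of
order `R ^ (N(1 - m) - 2)` times a power of `∫ η |d|`. Since `m < (N - 2)/N` this exponent is
positive, so plain cut-offs do not suffice. `exists_good_test` therefore uses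
`η(x) = (1 + |x|² / S) ^ (-κ) ζ(|x|² / Q)` with `κ = (N - 2)/2`. The first factor is superharmonic,
so only the derivatives of the cut-off `ζ` contribute to the upper bound for `Δη`. They live on
`Q ≤ |x|² ≤ 2Q`, where `Δη` is at most a constant times `S ^ κ Q ^ (-κ - 1) ζ ^ m` and the volume is
of order `Q ^ (κ + 1)`. The elementary inequality `s ^ m ≤ l ^ (m - 1) s + l ^ m`, with `l` small
depending on `S` and then `Q` large depending on `l`, gives `∫ |a| Δη ≤ ∫ η |d| + 1`, while `η` is
bounded below on `|x|² ≤ S` independently of `S`.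

Gronwall's inequality (`gronwall_left`) then yields
`∫ η |d(t)| ≤ exp t (‖u₀ - v₀‖₁ + 1)` (`weighted_estimate`), and `S → ∞` finishes the proof
(`lintegral_diff_lt_top`).
-/

open MeasureTheory Real Filter Topology RealInnerProductSpace

noncomputable section

abbrev Euc (N : ℕ) := EuclideanSpace ℝ (Fin N)

/-- Laplacian: trace of the second derivative. -/
def lapl {N : ℕ} (f : Euc N → ℝ) (x : Euc N) : ℝ :=
  ∑ i : Fin N, iteratedFDeriv ℝ 2 f x ![EuclideanSpace.single i 1, EuclideanSpace.single i 1]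

/-- The constant C* = 2m(N-2-mN)/(1-m). -/
def Cst (N : ℕ) (m : ℝ) : ℝ := 2 * m * ((N : ℝ) - 2 - m * N) / (1 - m)

/-- β = N/(N-2-Nm). -/
def betaC (N : ℕ) (m : ℝ) : ℝ := (N : ℝ) / ((N : ℝ) - 2 - N * m)

/-- γ = -β/N. -/
def gammaC (N : ℕ) (m : ℝ) : ℝ := -betaC N m / N

/-- Barenblatt solution with extinction time T. -/
def Bb (N : ℕ) (m T k : ℝ) (x : Euc N) (t : ℝ) : ℝ :=
  (Cst N m * (T - t) / (k * (T - t) ^ (2 * gammaC N m) + ‖x‖ ^ 2)) ^ (1 / (1 - m))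

/-- Rescaled Barenblatt profile. -/
def BbTil (N : ℕ) (m k : ℝ) (x : Euc N) : ℝ :=
  (Cst N m / (k + ‖x‖ ^ 2)) ^ (1 / (1 - m))

/-- u is a solution of the fast diffusion equation on ℝ^N × (0,T) with initial value u₀. -/
def IsFDESol (N : ℕ) (m T : ℝ) (u : Euc N → ℝ → ℝ) (u₀ : Euc N → ℝ) : Prop :=
  (∀ x : Euc N, ∀ t ∈ Set.Ioo (0:ℝ) T, 0 < u x t) ∧
  ContDiffOn ℝ (⊤ : ℕ∞) (fun p : Euc N × ℝ => u p.1 p.2) (Set.univ ×ˢ Set.Ioo (0:ℝ) T) ∧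
  ContinuousOn (fun p : Euc N × ℝ => u p.1 p.2) (Set.univ ×ˢ Set.Ico (0:ℝ) T) ∧
  (∀ x, u x 0 = u₀ x) ∧
  (∀ x : Euc N, ∀ t ∈ Set.Ioo (0:ℝ) T,
    deriv (fun s => u x s) t = lapl (fun y => u y t ^ m) x)

/-- Rescaled solution ũ(x,τ) = (T-t)^(-β) u(x (T-t)^γ, t), τ = -log(T-t). -/
def rescaleSol (N : ℕ) (m T : ℝ) (u : Euc N → ℝ → ℝ) (x : Euc N) (τ : ℝ) : ℝ :=
  Real.exp (betaC N m * τ) * u (Real.exp (-gammaC N m * τ) • x) (T - Real.exp (-τ))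

/-- f is radially symmetric. -/
def IsRadial {N : ℕ} (f : Euc N → ℝ) : Prop := ∀ x y : Euc N, ‖x‖ = ‖y‖ → f x = f y

/-! ### The Laplacian on smooth functions -/

lemma lapl_eq_sum {N : ℕ} {f : Euc N → ℝ} (hf : ContDiff ℝ 2 f) (x : Euc N) :
    lapl f x = ∑ i : Fin N, fderiv ℝ (fun y => fderiv ℝ f y (EuclideanSpace.single i 1)) x
      (EuclideanSpace.single i 1) := by
  unfold lapl
  refine Finset.sum_congr rfl fun i _ => ?_
  rw [iteratedFDeriv_two_apply]
  have h : DifferentiableAt ℝ (fderiv ℝ f) x :=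
    ((hf.fderiv_right (m := 1) (by norm_num)).differentiable (by norm_num)) x
  rw [fderiv_clm_apply h (differentiableAt_const _)]
  simp

lemma contDiff_fderiv_apply {N : ℕ} {f : Euc N → ℝ} (hf : ContDiff ℝ 2 f) (v : Euc N) :
    ContDiff ℝ 1 fun y => fderiv ℝ f y v :=
  (hf.fderiv_right (m := 1) (by norm_num)).clm_apply contDiff_const

lemma continuous_lapl {N : ℕ} {f : Euc N → ℝ} (hf : ContDiff ℝ 2 f) : Continuous (lapl f) := by
  rw [show lapl f = _ from funext (lapl_eq_sum hf)]
  refine continuous_finsetSum _ fun i _ => ?_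
  exact ((contDiff_fderiv_apply hf _).continuous_fderiv (by norm_num)).clm_apply continuous_const

lemma lapl_sub {N : ℕ} {f g : Euc N → ℝ} (hf : ContDiff ℝ 2 f) (hg : ContDiff ℝ 2 g)
    (x : Euc N) : lapl (fun y => f y - g y) x = lapl f x - lapl g x := by
  rw [lapl_eq_sum (hf.sub hg), lapl_eq_sum hf, lapl_eq_sum hg, ← Finset.sum_sub_distrib]
  refine Finset.sum_congr rfl fun i _ => ?_
  have : (fun y => fderiv ℝ (fun y => f y - g y) y (EuclideanSpace.single i 1)) =
      fun y => fderiv ℝ f y (EuclideanSpace.single i 1)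
        - fderiv ℝ g y (EuclideanSpace.single i 1) := by
    funext y
    rw [fderiv_fun_sub (hf.differentiable (by norm_num) y) (hg.differentiable (by norm_num) y)]
    simp
  rw [this, fderiv_fun_sub ((contDiff_fderiv_apply hf _).differentiable (by norm_num) x)
    ((contDiff_fderiv_apply hg _).differentiable (by norm_num) x)]
  simp

/-- Chain rule for the Laplacian, `Δ(h ∘ f) = h''(f) |∇f|² + h'(f) Δf`. The outer function only
needs derivatives on the range of `f`. -/
lemma lapl_comp {N : ℕ} {f : Euc N → ℝ} (hf : ContDiff ℝ 2 f) {h h' h'' : ℝ → ℝ}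
    (hh : ∀ y, HasDerivAt h (h' (f y)) (f y)) (hh' : ∀ y, HasDerivAt h' (h'' (f y)) (f y))
    (hc : ContDiff ℝ 2 fun y => h (f y)) (x : Euc N) :
    lapl (fun y => h (f y)) x =
      h'' (f x) * (∑ i : Fin N, (fderiv ℝ f x (EuclideanSpace.single i 1)) ^ 2)
        + h' (f x) * lapl f x := by
  rw [lapl_eq_sum hc, lapl_eq_sum hf, Finset.mul_sum, Finset.mul_sum, ← Finset.sum_add_distrib]
  refine Finset.sum_congr rfl fun i _ => ?_
  have hfd := hf.differentiable (by norm_num)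
  have : (fun y => fderiv ℝ (fun y => h (f y)) y (EuclideanSpace.single i 1)) =
      fun y => h' (f y) * fderiv ℝ f y (EuclideanSpace.single i 1) := by
    funext y
    have := ((hh y).comp_hasFDerivAt y (hfd y).hasFDerivAt).fderiv
    simp only [Function.comp_def] at this
    rw [this]; simp
  rw [this]
  have h1 : HasFDerivAt (fun y => h' (f y)) (h'' (f x) • fderiv ℝ f x) x :=
    (hh' x).comp_hasFDerivAt x (hfd x).hasFDerivAt
  have h2 := ((contDiff_fderiv_apply hf (EuclideanSpace.single i 1)).differentiable
    (by norm_num) x).hasFDerivAt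
  rw [(h1.fun_mul h2).fderiv]
  simp; ring

/-- Laplacian of a radial function, with the profile `h` written in the variable `q = |x|²`. -/
lemma lapl_radial {N : ℕ} {h h' h'' : ℝ → ℝ}
    (hh : ∀ q, 0 ≤ q → HasDerivAt h (h' q) q) (hh' : ∀ q, 0 ≤ q → HasDerivAt h' (h'' q) q)
    (hc : ContDiff ℝ 2 fun y : Euc N => h (‖y‖ ^ 2)) (x : Euc N) :
    lapl (fun y : Euc N => h (‖y‖ ^ 2)) x =
      4 * ‖x‖ ^ 2 * h'' (‖x‖ ^ 2) + 2 * N * h' (‖x‖ ^ 2) := by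
  have hf : ContDiff ℝ 2 fun y : Euc N => ‖y‖ ^ 2 := contDiff_norm_sq ℝ
  have hd : ∀ (v y : Euc N), fderiv ℝ (fun y : Euc N => ‖y‖ ^ 2) y v = 2 * inner ℝ y v := by
    intro v y
    rw [(hasStrictFDerivAt_norm_sq y).hasFDerivAt.fderiv]
    simp
  rw [lapl_comp (f := fun y : Euc N => ‖y‖ ^ 2) hf (fun y => hh _ (by positivity))
    (fun y => hh' _ (by positivity)) hc, lapl_eq_sum hf]
  simp only [hd]
  have h2 : ∀ i : Fin N, fderiv ℝ (fun y : Euc N => 2 * inner ℝ y (EuclideanSpace.single i 1)) x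
      (EuclideanSpace.single i (1:ℝ)) = 2 := by
    intro i
    have : (fun y : Euc N => (2:ℝ) * inner ℝ y (EuclideanSpace.single i 1)) =
        ((2:ℝ) • innerSL ℝ (EuclideanSpace.single i (1:ℝ)) : Euc N →L[ℝ] ℝ) := by
      funext y; simp [real_inner_comm]
    rw [this, ContinuousLinearMap.fderiv]
    simp
  simp only [h2]
  have h3 : ∀ i : Fin N, inner ℝ x (EuclideanSpace.single i (1:ℝ)) = x i := fun i => by
    rw [EuclideanSpace.inner_single_right]; simp
  simp only [h3, mul_pow, ← Finset.mul_sum]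
  rw [show ∑ i, x i ^ 2 = ‖x‖ ^ 2 by simp [EuclideanSpace.norm_sq_eq]]
  simp
  ring

/-- Symmetry of the Laplacian against a compactly supported function. -/
lemma integral_mul_lapl {N : ℕ} {f η : Euc N → ℝ} (hf : ContDiff ℝ 2 f) (hη : ContDiff ℝ 2 η)
    (hs : HasCompactSupport η) : ∫ x, f x * lapl η x = ∫ x, lapl f x * η x := by
  have cη := fun i : Fin N => contDiff_fderiv_apply hη (EuclideanSpace.single i 1)
  have cf := fun i : Fin N => contDiff_fderiv_apply hf (EuclideanSpace.single i 1)
  have sη := fun i : Fin N => hs.fderiv_apply (𝕜 := ℝ) (EuclideanSpace.single i (1:ℝ))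
  have ccη := fun i : Fin N => ((cη i).continuous_fderiv (by norm_num)).clm_apply
    (continuous_const (y := EuclideanSpace.single i (1:ℝ)))
  have ccf := fun i : Fin N => ((cf i).continuous_fderiv (by norm_num)).clm_apply
    (continuous_const (y := EuclideanSpace.single i (1:ℝ)))
  have ssη := fun i : Fin N => (sη i).fderiv_apply (𝕜 := ℝ) (EuclideanSpace.single i (1:ℝ))
  simp only [lapl_eq_sum hf, lapl_eq_sum hη, Finset.mul_sum, Finset.sum_mul]
  have i1 := fun i : Fin N => (hf.continuous.mul (ccη i)).integrable_of_hasCompactSupport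
    (μ := (volume : Measure (Euc N))) (ssη i).mul_left
  have i2 := fun i : Fin N => ((ccf i).mul hη.continuous).integrable_of_hasCompactSupport
    (μ := (volume : Measure (Euc N))) hs.mul_left
  have i3 := fun i : Fin N => ((cf i).continuous.mul (cη i).continuous).integrable_of_hasCompactSupport
    (μ := (volume : Measure (Euc N))) (sη i).mul_left
  have i4 := fun i : Fin N => (hf.continuous.mul (cη i).continuous).integrable_of_hasCompactSupport
    (μ := (volume : Measure (Euc N))) (sη i).mul_left
  have i5 := fun i : Fin N => ((cf i).continuous.mul hη.continuous).integrable_of_hasCompactSupport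
    (μ := (volume : Measure (Euc N))) hs.mul_left
  simp only [Pi.mul_def] at i1 i2 i3 i4 i5
  rw [integral_finsetSum _ fun i _ => i1 i, integral_finsetSum _ fun i _ => i2 i]
  refine Finset.sum_congr rfl fun i _ => ?_
  rw [integral_mul_fderiv_eq_neg_fderiv_mul_of_integrable (i3 i) (i1 i) (i4 i)
    (fun x _ => hf.differentiable (by norm_num) x)
    (fun x _ => (cη i).differentiable (by norm_num) x),
    integral_mul_fderiv_eq_neg_fderiv_mul_of_integrable (i2 i) (i3 i) (i5 i)
    (fun x _ => (cf i).differentiable (by norm_num) x)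
    (fun x _ => hη.differentiable (by norm_num) x), neg_neg]

lemma hasCompactSupport_lapl {N : ℕ} {η : Euc N → ℝ} (hs : HasCompactSupport η) :
    HasCompactSupport (lapl η) := by
  refine hs.mono' fun x hx => ?_
  by_contra hx'
  refine hx ?_
  have h0 : η =ᶠ[𝓝 x] fun _ => 0 := notMem_tsupport_iff_eventuallyEq.1 hx'
  have h1 := h0.iteratedFDeriv ℝ 2
  unfold lapl
  rw [h1.eq_of_nhds]
  refine Finset.sum_eq_zero fun i _ => ?_
  rw [iteratedFDeriv_two_apply]
  simp

/-- Kato's inequality tested against `η ≥ 0`. The quotient `a / |a|` is the sign of `a`; it is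
`0` where `a = 0`. -/
lemma kato_test {N : ℕ} {a η : Euc N → ℝ} (ha : ContDiff ℝ 2 a) (hη : ContDiff ℝ 2 η)
    (hs : HasCompactSupport η) (hη0 : ∀ x, 0 ≤ η x) :
    ∫ x, a x / |a x| * (η x * lapl a x) ≤ ∫ x, |a x| * lapl η x := by
  have cla := continuous_lapl ha
  have clη := continuous_lapl hη
  have slη := hasCompactSupport_lapl hs
  have int1 : Integrable (fun x => η x * lapl a x) :=
    (hη.continuous.mul cla).integrable_of_hasCompactSupport hs.mul_right
  have int2 : ∀ b : Euc N → ℝ, Continuous b → Integrable (fun x => b x * lapl η x) := fun b hb =>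
    (hb.mul clη).integrable_of_hasCompactSupport slη.mul_left
  -- `√(ε² + a²)` is a smooth convex approximation of `|a|`
  have key : ∀ ε : ℝ, 0 < ε →
      ∫ x, a x / √(ε ^ 2 + a x ^ 2) * (η x * lapl a x) ≤
        ∫ x, √(ε ^ 2 + a x ^ 2) * lapl η x := by
    intro ε hε
    have hpos : ∀ s : ℝ, 0 < ε ^ 2 + s ^ 2 := fun s => by positivity
    have hsq : ∀ s : ℝ, 0 < √(ε ^ 2 + s ^ 2) := fun s => Real.sqrt_pos.2 (hpos s)
    have d1 : ∀ s : ℝ, HasDerivAt (fun s => √(ε ^ 2 + s ^ 2)) (s / √(ε ^ 2 + s ^ 2)) s := by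
      intro s
      have := ((hasDerivAt_pow 2 s).const_add (ε ^ 2)).sqrt (hpos s).ne'
      convert this using 1
      have := (hsq s).ne'
      simp
      field_simp
    have d2 : ∀ s : ℝ, HasDerivAt (fun s => s / √(ε ^ 2 + s ^ 2))
        ((1 * √(ε ^ 2 + s ^ 2) - s * (s / √(ε ^ 2 + s ^ 2))) / √(ε ^ 2 + s ^ 2) ^ 2) s :=
      fun s => (hasDerivAt_id s).div (d1 s) (hsq s).ne'
    have hc : ContDiff ℝ 2 fun y => √(ε ^ 2 + a y ^ 2) :=
      (contDiff_const.add (ha.pow 2)).sqrt fun y => (hpos _).ne'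
    rw [integral_mul_lapl hc hη hs]
    refine integral_mono ?_ ?_ fun x => ?_
    · refine Continuous.integrable_of_hasCompactSupport ?_ (hs.mul_right.mul_left)
      exact ((ha.continuous.div hc.continuous fun y => (hsq _).ne')).mul (hη.continuous.mul cla)
    · exact ((continuous_lapl hc).mul hη.continuous).integrable_of_hasCompactSupport hs.mul_left
    · simp only
      rw [lapl_comp ha (h := fun s => √(ε ^ 2 + s ^ 2))
        (h' := fun s => s / √(ε ^ 2 + s ^ 2))
        (h'' := fun s => (1 * √(ε ^ 2 + s ^ 2) - s * (s / √(ε ^ 2 + s ^ 2))) /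
          √(ε ^ 2 + s ^ 2) ^ 2) (fun y => d1 _) (fun y => d2 _) hc x]
      have h0 : 0 ≤ (1 * √(ε ^ 2 + a x ^ 2) - a x * (a x / √(ε ^ 2 + a x ^ 2))) /
          √(ε ^ 2 + a x ^ 2) ^ 2 := by
        refine div_nonneg ?_ (by positivity)
        have h1 := hsq (a x)
        have h2 : √(ε ^ 2 + a x ^ 2) ^ 2 = ε ^ 2 + a x ^ 2 := Real.sq_sqrt (hpos _).le
        rw [one_mul, ← mul_div_assoc, sub_nonneg, div_le_iff₀ h1]
        nlinarith [sq_nonneg ε]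
      have h3 := mul_nonneg (mul_nonneg h0 (Finset.sum_nonneg (s := Finset.univ)
        fun (i : Fin N) _ => sq_nonneg (fderiv ℝ a x (EuclideanSpace.single i 1)))) (hη0 x)
      nlinarith
  have e0 : Tendsto (fun n : ℕ => 1 / ((n : ℝ) + 1)) atTop (𝓝 0) :=
    tendsto_one_div_add_atTop_nhds_zero_nat
  have e1 : ∀ x, Tendsto (fun n : ℕ => √((1 / ((n : ℝ) + 1)) ^ 2 + a x ^ 2)) atTop (𝓝 |a x|) := by
    intro x
    have : Tendsto (fun e : ℝ => √(e ^ 2 + a x ^ 2)) (𝓝 0) (𝓝 √((0:ℝ) ^ 2 + a x ^ 2)) :=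
      Continuous.tendsto (by fun_prop) 0
    have h2 := this.comp e0
    rwa [show √((0:ℝ) ^ 2 + a x ^ 2) = |a x| by rw [← Real.sqrt_sq_eq_abs]; simp] at h2
  have ca := ha.continuous
  have t1 : Tendsto (fun n : ℕ => ∫ x, a x / √((1 / ((n : ℝ) + 1)) ^ 2 + a x ^ 2) *
      (η x * lapl a x)) atTop (𝓝 (∫ x, a x / |a x| * (η x * lapl a x))) := by
    refine tendsto_integral_of_dominated_convergence (fun x => ‖η x * lapl a x‖) ?_ int1.norm ?_ ?_
    · intro n
      refine AEStronglyMeasurable.mul ?_ int1.aestronglyMeasurable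
      have := ca.measurable
      exact Measurable.aestronglyMeasurable (by fun_prop)
    · intro n
      refine .of_forall fun x => ?_
      rw [norm_mul]
      refine mul_le_of_le_one_left (norm_nonneg _) ?_
      rw [norm_div, Real.norm_eq_abs, Real.norm_eq_abs, abs_of_nonneg (Real.sqrt_nonneg _)]
      refine div_le_one_of_le₀ ?_ (Real.sqrt_nonneg _)
      rw [← Real.sqrt_sq_eq_abs]
      exact Real.sqrt_le_sqrt (by nlinarith [sq_nonneg (1 / ((n : ℝ) + 1))])
    · refine .of_forall fun x => ?_
      refine Tendsto.mul_const _ ?_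
      by_cases h : a x = 0
      · simp [h]
      · exact tendsto_const_nhds.div (e1 x) (abs_ne_zero.2 h)
  have t2 : Tendsto (fun n : ℕ => ∫ x, √((1 / ((n : ℝ) + 1)) ^ 2 + a x ^ 2) * lapl η x)
      atTop (𝓝 (∫ x, |a x| * lapl η x)) := by
    refine tendsto_integral_of_dominated_convergence (fun x => ‖(1 + |a x|) * lapl η x‖) ?_
      (int2 _ (by fun_prop)).norm ?_ ?_
    · intro n
      exact Continuous.aestronglyMeasurable (by fun_prop)
    · intro n
      refine .of_forall fun x => ?_
      rw [norm_mul, norm_mul]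
      refine mul_le_mul_of_nonneg_right ?_ (norm_nonneg _)
      rw [Real.norm_eq_abs, Real.norm_eq_abs, abs_of_nonneg (Real.sqrt_nonneg _),
        abs_of_nonneg (by positivity)]
      refine Real.sqrt_le_iff.2 ⟨by positivity, ?_⟩
      have h1 : 1 / ((n : ℝ) + 1) ≤ 1 := by
        rw [div_le_one (by positivity)]; linarith [Nat.cast_nonneg (α := ℝ) n]
      have h2 : 0 ≤ 1 / ((n : ℝ) + 1) := by positivity
      nlinarith [abs_nonneg (a x), sq_abs (a x)]
    · exact .of_forall fun x => (e1 x).mul_const _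
  exact le_of_tendsto_of_tendsto' t1 t2 fun n => key _ (by positivity)

/-! ### Time derivatives and Gronwall's inequality -/

/-- Differentiation in time under the integral sign; `φ` is only bounded and measurable. -/
lemma hasDerivAt_test {N : ℕ} {w w' : Euc N → ℝ → ℝ} {η φ : Euc N → ℝ} {δ t : ℝ} (hδ : 0 < δ)
    (hw : ∀ x, ∀ s ∈ Set.Icc (t - δ) (t + δ), HasDerivAt (w x) (w' x s) s)
    (cw : ContinuousOn (fun p : Euc N × ℝ => w p.1 p.2) (Set.univ ×ˢ Set.Icc (t - δ) (t + δ)))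
    (cw' : ContinuousOn (fun p : Euc N × ℝ => w' p.1 p.2) (Set.univ ×ˢ Set.Icc (t - δ) (t + δ)))
    (hη : Continuous η) (hs : HasCompactSupport η) (hφ : Measurable φ) (hφ1 : ∀ x, |φ x| ≤ 1) :
    HasDerivAt (fun s => ∫ x, φ x * (η x * w x s)) (∫ x, φ x * (η x * w' x t)) t := by
  have slice : ∀ f : Euc N → ℝ → ℝ, ContinuousOn (fun p : Euc N × ℝ => f p.1 p.2)
      (Set.univ ×ˢ Set.Icc (t - δ) (t + δ)) → ∀ s ∈ Set.Icc (t - δ) (t + δ),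
      Continuous fun x => f x s := fun f hf s hs =>
    hf.comp_continuous (f := fun x => (x, s)) (by fun_prop) fun x => ⟨trivial, hs⟩
  have ht : t ∈ Set.Icc (t - δ) (t + δ) := ⟨by linarith, by linarith⟩
  have hnhds : Set.Icc (t - δ) (t + δ) ∈ 𝓝 t := Icc_mem_nhds (by linarith) (by linarith)
  obtain ⟨C, hC⟩ : ∃ C, ∀ p ∈ tsupport η ×ˢ Set.Icc (t - δ) (t + δ), ‖w' p.1 p.2‖ ≤ C :=
    IsCompact.exists_bound_of_continuousOn (IsCompact.prod hs isCompact_Icc)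
      (cw'.mono (Set.prod_mono (Set.subset_univ _) subset_rfl))
  have meas : ∀ f : Euc N → ℝ → ℝ, ContinuousOn (fun p : Euc N × ℝ => f p.1 p.2)
      (Set.univ ×ˢ Set.Icc (t - δ) (t + δ)) → ∀ s ∈ Set.Icc (t - δ) (t + δ),
      AEStronglyMeasurable (fun x => φ x * (η x * f x s)) volume := fun f hf s hs =>
    hφ.aestronglyMeasurable.mul (hη.mul (slice f hf s hs)).aestronglyMeasurable
  refine (hasDerivAt_integral_of_dominated_loc_of_deriv_le
    (F := fun s x => φ x * (η x * w x s)) (F' := fun s x => φ x * (η x * w' x s))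
    (bound := fun x => C * ‖η x‖) hnhds ?_ ?_ (meas w' cw' t ht) ?_ ?_ ?_).2
  · filter_upwards [hnhds] with s hs using meas w cw s hs
  · have : Integrable (fun x => η x * w x t) :=
      (hη.mul (slice w cw t ht)).integrable_of_hasCompactSupport hs.mul_right
    exact this.bdd_mul hφ.aestronglyMeasurable (c := 1) (.of_forall hφ1)
  · refine .of_forall fun x s hs' => ?_
    rw [norm_mul, norm_mul]
    by_cases hx : x ∈ tsupport η
    · have h1 := hC (x, s) ⟨hx, hs'⟩
      have h2 : ‖φ x‖ ≤ 1 := hφ1 x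
      calc ‖φ x‖ * (‖η x‖ * ‖w' x s‖) ≤ 1 * (‖η x‖ * C) := by gcongr
        _ = C * ‖η x‖ := by ring
    · simp [image_eq_zero_of_notMem_tsupport hx]
  · exact (hη.integrable_of_hasCompactSupport hs).norm.const_mul C
  · exact .of_forall fun x s hs' => ((hw x s hs').const_mul _).const_mul _

/-- Gronwall's inequality for a function touched from below, on the left of each time `t`, by a
function `G` with `G'(t) ≤ F(t) + 1`. It follows from the library version with right slopes,
applied to `s ↦ -F (t₁ - s)`. -/
lemma gronwall_left {F : ℝ → ℝ} {t₁ : ℝ} (ht₁ : 0 ≤ t₁) (hF : ContinuousOn F (Set.Icc 0 t₁))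
    (h : ∀ t ∈ Set.Ioc 0 t₁, ∃ (G : ℝ → ℝ) (g : ℝ), HasDerivAt G g t ∧
      (∀ᶠ s in 𝓝[<] t, G s ≤ F s) ∧ G t = F t ∧ g ≤ F t + 1) :
    F t₁ ≤ Real.exp t₁ * (F 0 + 1) := by
  have key := le_gronwallBound_of_liminf_deriv_right_le (f := fun s => -F (t₁ - s))
    (f' := fun s => F (t₁ - s) + 1) (δ := -F t₁) (K := -1) (ε := 1) (a := 0) (b := t₁)
    ?_ ?_ (by simp) (fun s _ => by simp) t₁ ⟨ht₁, le_rfl⟩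
  · rw [gronwallBound_of_K_ne_0 (by norm_num)] at key
    simp only [sub_self, sub_zero] at key
    have e1 : Real.exp t₁ * Real.exp (-1 * t₁) = 1 := by rw [← Real.exp_add]; simp
    have e2 := Real.exp_pos t₁
    have e3 := mul_le_mul_of_nonneg_left key e2.le
    have e4 : rexp t₁ * (-F t₁ * rexp (-1 * t₁) + 1 / -1 * (rexp (-1 * t₁) - 1)) =
      -F t₁ * (rexp t₁ * rexp (-1 * t₁)) - (rexp t₁ * rexp (-1 * t₁)) + rexp t₁ := by ring
    rw [e4, e1] at e3
    nlinarith
  · refine (hF.comp (by fun_prop) fun s hs => ?_).neg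
    exact ⟨by linarith [hs.2], by linarith [hs.1]⟩
  · intro x hx r hr
    obtain ⟨G, g, hG, hle, heq, hg⟩ := h (t₁ - x) ⟨by linarith [hx.2], by linarith [hx.1]⟩
    have hd : HasDerivAt (fun s => -G (t₁ - s)) g x := by
      have h1 : HasDerivAt (fun s => t₁ - s) (-1) x := by
        simpa using (hasDerivAt_id x).const_sub t₁
      have := (HasDerivAt.comp x hG h1).neg
      simpa using! this
    have hsl := hasDerivAt_iff_tendsto_slope.1 hd
    have h1 : ∀ᶠ z in 𝓝[>] x, slope (fun s => -G (t₁ - s)) x z < r :=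
      (hsl.mono_left (nhdsWithin_mono x fun z hz => ne_of_gt hz)).eventually_lt_const
        (lt_of_le_of_lt hg hr)
    have h2 : Tendsto (fun z => t₁ - z) (𝓝[>] x) (𝓝[<] (t₁ - x)) := by
      refine tendsto_nhdsWithin_of_tendsto_nhds_of_eventually_within _ ?_ ?_
      · exact ((Continuous.tendsto (by fun_prop) x : Tendsto (fun z => t₁ - z) (𝓝 x) _)).mono_left
          nhdsWithin_le_nhds
      · filter_upwards [self_mem_nhdsWithin] with z hz
        simp only [Set.mem_Ioi, Set.mem_Iio] at *
        linarith
    refine Eventually.frequently ?_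
    filter_upwards [h1, h2.eventually hle, self_mem_nhdsWithin] with z hz1 hz2 hz3
    refine lt_of_le_of_lt ?_ hz1
    rw [slope_def_field, div_eq_inv_mul]
    have : 0 ≤ (z - x)⁻¹ := inv_nonneg.2 (sub_nonneg.2 (le_of_lt hz3))
    refine mul_le_mul_of_nonneg_left ?_ this
    linarith

/-! ### Test functions -/

/-- A smooth cut-off whose first two derivatives are controlled by its `m`-th power: a high power
of a standard cut-off. -/
lemma exists_cutoff {m : ℝ} (hm0 : 0 < m) (hm1 : m < 1) :
    ∃ (ζ ζ₁ ζ₂ : ℝ → ℝ) (M : ℝ), ContDiff ℝ 2 ζ ∧ (∀ s, HasDerivAt ζ (ζ₁ s) s) ∧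
      (∀ s, HasDerivAt ζ₁ (ζ₂ s) s) ∧ (∀ s, 0 ≤ ζ s) ∧ (∀ s, ζ s ≤ 1) ∧ (∀ s ≤ 1, ζ s = 1) ∧
      (∀ s, 2 ≤ s → ζ s = 0) ∧ (∀ s < 1, ζ₁ s = 0) ∧ (∀ s < 1, ζ₂ s = 0) ∧ 0 ≤ M ∧
      (∀ s, |ζ₁ s| ≤ M * ζ s ^ m) ∧ (∀ s, |ζ₂ s| ≤ M * ζ s ^ m) := by
  -- the exponent `k + 2` is chosen so that `k ≥ m (k + 2)`
  obtain ⟨k, hk⟩ := exists_nat_ge (2 * m / (1 - m))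
  have hk' : m * ((k : ℝ) + 2) ≤ k := by
    rw [div_le_iff₀ (by linarith)] at hk
    linarith
  set χ : ℝ → ℝ := fun s => smoothTransition (2 - s) with hχ
  have cχ : ContDiff ℝ 3 χ :=
    (smoothTransition.contDiff (n := 3)).comp (contDiff_const.sub contDiff_id)
  have d1 : ∀ s, HasDerivAt χ (deriv χ s) s := fun s =>
    (cχ.differentiable (by norm_num) s).hasDerivAt
  have cχ1 : ContDiff ℝ 2 (deriv χ) := by
    have h : ContDiff ℝ (2 + 1) χ := by convert cχ using 1; norm_num
    exact (contDiff_succ_iff_deriv.1 h).2.2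
  have cχ2 : ContDiff ℝ 1 (deriv (deriv χ)) := by
    have h : ContDiff ℝ (1 + 1) (deriv χ) := by convert cχ1 using 1; norm_num
    exact (contDiff_succ_iff_deriv.1 h).2.2
  have d2 : ∀ s, HasDerivAt (deriv χ) (deriv (deriv χ) s) s := fun s =>
    (cχ1.differentiable (by norm_num) s).hasDerivAt
  have χ0 : ∀ s, 0 ≤ χ s := fun s => smoothTransition.nonneg _
  have χ1 : ∀ s, χ s ≤ 1 := fun s => smoothTransition.le_one _
  have χone : ∀ s ≤ 1, χ s = 1 := fun s hs => smoothTransition.one_of_one_le (by linarith)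
  have χzero : ∀ s, 2 ≤ s → χ s = 0 := fun s hs => smoothTransition.zero_of_nonpos (by linarith)
  have z1 : ∀ s < 1, deriv χ s = 0 := fun s hs => by
    have : χ =ᶠ[𝓝 s] fun _ => 1 := by
      filter_upwards [Iio_mem_nhds hs] with y hy using χone y (le_of_lt hy)
    rw [this.deriv_eq]; simp
  have z2 : ∀ s < 1, deriv (deriv χ) s = 0 := fun s hs => by
    have : deriv χ =ᶠ[𝓝 s] fun _ => 0 := by
      filter_upwards [Iio_mem_nhds hs] with y hy using z1 y hy
    rw [this.deriv_eq]; simp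
  have y1 : ∀ s, 2 < s → deriv χ s = 0 := fun s hs => by
    have : χ =ᶠ[𝓝 s] fun _ => 0 := by
      filter_upwards [Ioi_mem_nhds hs] with y hy using χzero y (le_of_lt hy)
    rw [this.deriv_eq]; simp
  have y2 : ∀ s, 2 < s → deriv (deriv χ) s = 0 := fun s hs => by
    have : deriv χ =ᶠ[𝓝 s] fun _ => 0 := by
      filter_upwards [Ioi_mem_nhds hs] with y hy using y1 y hy
    rw [this.deriv_eq]; simp
  obtain ⟨A₁, hA₁⟩ := (isCompact_Icc (a := (1:ℝ)) (b := 2)).exists_bound_of_continuousOn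
    cχ1.continuous.continuousOn
  obtain ⟨A₂, hA₂⟩ := (isCompact_Icc (a := (1:ℝ)) (b := 2)).exists_bound_of_continuousOn
    cχ2.continuous.continuousOn
  set A := max A₁ A₂
  have hA0 : 0 ≤ A := (norm_nonneg _).trans ((hA₁ 1 (by norm_num)).trans (le_max_left _ _))
  have b1 : ∀ s, |deriv χ s| ≤ A := fun s => by
    rcases lt_or_ge s 1 with h | h
    · simp [z1 s h, hA0]
    rcases lt_or_ge 2 s with h' | h'
    · simp [y1 s h', hA0]
    exact (hA₁ s ⟨h, h'⟩).trans (le_max_left _ _)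
  have b2 : ∀ s, |deriv (deriv χ) s| ≤ A := fun s => by
    rcases lt_or_ge s 1 with h | h
    · simp [z2 s h, hA0]
    rcases lt_or_ge 2 s with h' | h'
    · simp [y2 s h', hA0]
    exact (hA₂ s ⟨h, h'⟩).trans (le_max_right _ _)
  have pw : ∀ s, χ s ^ k ≤ (χ s ^ (k + 2)) ^ m := fun s => by
    rw [← Real.rpow_natCast, ← Real.rpow_natCast, ← Real.rpow_mul (χ0 s)]
    refine Real.rpow_le_rpow_of_exponent_ge' (χ0 s) (χ1 s) (by positivity) ?_
    push_cast
    linarith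
  refine ⟨fun s => χ s ^ (k + 2), fun s => (k + 2) * χ s ^ (k + 1) * deriv χ s,
    fun s => (k + 2) * ((k + 1) * χ s ^ k * deriv χ s * deriv χ s
      + χ s ^ (k + 1) * deriv (deriv χ) s),
    (k + 2) * ((k + 1) * A * A + A), ?_, ?_, ?_, ?_, ?_, ?_, ?_, ?_, ?_, ?_, ?_, ?_⟩
  · exact (cχ.of_le (by norm_num)).pow _
  · intro s
    refine ((d1 s).fun_pow (k + 2)).congr_deriv ?_
    push_cast; rfl
  · intro s
    have := (((d1 s).fun_pow (k + 1)).const_mul ((k : ℝ) + 2)).fun_mul (d2 s)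
    refine this.congr_deriv ?_
    push_cast; ring
  · exact fun s => pow_nonneg (χ0 s) _
  · exact fun s => pow_le_one₀ (χ0 s) (χ1 s)
  · intro s hs; simp [χone s hs]
  · intro s hs; simp [χzero s hs]
  · intro s hs; simp [z1 s hs]
  · intro s hs; simp [z1 s hs, z2 s hs]
  · positivity
  · intro s
    have h1 : χ s ^ (k + 1) ≤ χ s ^ k := pow_le_pow_of_le_one (χ0 s) (χ1 s) (by lia)
    have h2 := pw s
    have hz : 0 ≤ (χ s ^ (k + 2)) ^ m := (pow_nonneg (χ0 s) k).trans h2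
    have h3 := pow_nonneg (χ0 s) (k + 1)
    rw [abs_mul, abs_of_nonneg (by positivity : (0:ℝ) ≤ (k + 2) * χ s ^ (k + 1))]
    calc (k + 2) * χ s ^ (k + 1) * |deriv χ s| ≤ (k + 2) * (χ s ^ (k + 2)) ^ m * A := by
          gcongr
          · exact h1.trans h2
          · exact b1 s
      _ = (k + 2) * A * (χ s ^ (k + 2)) ^ m := by ring
      _ ≤ _ := by
          gcongr
          exact le_add_of_nonneg_left (by positivity)
  · intro s
    have h1 : χ s ^ (k + 1) ≤ χ s ^ k := pow_le_pow_of_le_one (χ0 s) (χ1 s) (by lia)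
    have h2 := pw s
    have hz : 0 ≤ (χ s ^ (k + 2)) ^ m := (pow_nonneg (χ0 s) k).trans h2
    have h3 := pow_nonneg (χ0 s) (k + 1)
    have h4 := pow_nonneg (χ0 s) k
    have h5 := pow_nonneg (χ0 s) (k + 2)
    have h6 : (0:ℝ) ≤ (k : ℝ) + 2 := by positivity
    have h7 : (0:ℝ) ≤ ((k : ℝ) + 1) * χ s ^ k := by positivity
    rw [abs_mul, abs_of_nonneg h6, mul_assoc ((k : ℝ) + 2)]
    refine mul_le_mul_of_nonneg_left ?_ h6
    refine (abs_add_le _ _).trans ?_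
    rw [abs_mul, abs_mul, abs_mul (χ s ^ (k + 1)), abs_of_nonneg h7, abs_of_nonneg h3]
    calc (k + 1) * χ s ^ k * |deriv χ s| * |deriv χ s| + χ s ^ (k + 1) * |deriv (deriv χ) s|
        ≤ (k + 1) * (χ s ^ (k + 2)) ^ m * A * A + (χ s ^ (k + 2)) ^ m * A := by
          refine add_le_add ?_ (mul_le_mul (h1.trans h2) (b2 s) (abs_nonneg _) hz)
          gcongr
          · exact b1 s
          · exact b1 s
      _ = _ := by ring

/-- The radial function with profile `h(q) = (1 + q/S)^(-κ) ζ(q/Q)`, `q = |x|²`,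
`κ = (N - 2)/2`. The factor `(1 + q/S)^(-κ)` is superharmonic, so only terms with derivatives of
the cut-off `ζ` contribute to the upper bound; they live in `Q ≤ q ≤ 2Q`. -/
lemma lapl_profile_le {N : ℕ} {m κ M S Q : ℝ} {ζ ζ₁ ζ₂ : ℝ → ℝ} (hm0 : 0 < m) (hκ : 0 < κ)
    (hN : 2 * κ + 2 = N) (hS : 0 < S) (hQ : 0 < Q) (cζ : ContDiff ℝ 2 ζ)
    (d1 : ∀ s, HasDerivAt ζ (ζ₁ s) s) (d2 : ∀ s, HasDerivAt ζ₁ (ζ₂ s) s)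
    (z0 : ∀ s, 0 ≤ ζ s) (zz : ∀ s, 2 ≤ s → ζ s = 0) (y1 : ∀ s < 1, ζ₁ s = 0)
    (y2 : ∀ s < 1, ζ₂ s = 0) (hM : 0 ≤ M)
    (b1 : ∀ s, |ζ₁ s| ≤ M * ζ s ^ m) (b2 : ∀ s, |ζ₂ s| ≤ M * ζ s ^ m) :
    ContDiff ℝ 2 (fun x : Euc N => (1 + ‖x‖ ^ 2 / S) ^ (-κ) * ζ (‖x‖ ^ 2 / Q)) ∧ ∀ x : Euc N,
      lapl (fun x : Euc N => (1 + ‖x‖ ^ 2 / S) ^ (-κ) * ζ (‖x‖ ^ 2 / Q)) x ≤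
        M * (8 * κ + 8 + 2 * N) * ((Q / S) ^ (-κ) / Q) * ζ (‖x‖ ^ 2 / Q) ^ m := by
  have hpos : ∀ q : ℝ, 0 ≤ q → 0 < 1 + q / S := fun q hq => by positivity
  have hc : ContDiff ℝ 2 (fun x : Euc N => (1 + ‖x‖ ^ 2 / S) ^ (-κ) * ζ (‖x‖ ^ 2 / Q)) := by
    have hn : ContDiff ℝ 2 fun x : Euc N => ‖x‖ ^ 2 := contDiff_norm_sq ℝ
    refine ContDiff.mul ?_ (cζ.comp (hn.div_const Q))
    exact (contDiff_const.add (hn.div_const S)).rpow_const_of_ne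
      fun x => (hpos _ (by positivity)).ne'
  refine ⟨hc, fun x => ?_⟩
  have dp : ∀ q, HasDerivAt (fun q : ℝ => 1 + q / S) (1 / S) q := fun q =>
    ((hasDerivAt_id q).div_const S).const_add 1
  have dg : ∀ q, 0 ≤ q → HasDerivAt (fun q : ℝ => (1 + q / S) ^ (-κ))
      (1 / S * (-κ) * (1 + q / S) ^ (-κ - 1)) q := fun q hq =>
    (dp q).rpow_const (Or.inl (hpos q hq).ne')
  have dg' : ∀ q, 0 ≤ q → HasDerivAt (fun q : ℝ => 1 / S * (-κ) * (1 + q / S) ^ (-κ - 1))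
      (1 / S * (-κ) * (1 / S * (-κ - 1) * (1 + q / S) ^ (-κ - 1 - 1))) q := fun q hq =>
    ((dp q).rpow_const (Or.inl (hpos q hq).ne')).const_mul _
  have dz : ∀ q, HasDerivAt (fun q : ℝ => ζ (q / Q)) (ζ₁ (q / Q) * (1 / Q)) q := fun q =>
    (d1 (q / Q)).comp q ((hasDerivAt_id q).div_const Q)
  have dz' : ∀ q, HasDerivAt (fun q : ℝ => ζ₁ (q / Q) * (1 / Q))
      (ζ₂ (q / Q) * (1 / Q) * (1 / Q)) q := fun q =>
    ((d2 (q / Q)).comp q ((hasDerivAt_id q).div_const Q)).mul_const _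
  rw [lapl_radial (h := fun q => (1 + q / S) ^ (-κ) * ζ (q / Q))
    (fun q hq => (dg q hq).fun_mul (dz q))
    (fun q hq => ((dg' q hq).fun_mul (dz q)).fun_add ((dg q hq).fun_mul (dz' q))) hc x]
  have hq0 : 0 ≤ ‖x‖ ^ 2 := by positivity
  generalize ‖x‖ ^ 2 = q at hq0 ⊢
  have hp := hpos q hq0
  rw [Real.rpow_sub_one hp.ne', Real.rpow_sub_one hp.ne']
  have hg : 0 ≤ (1 + q / S) ^ (-κ) := Real.rpow_nonneg hp.le _
  have hgb : Q ≤ q → (1 + q / S) ^ (-κ) ≤ (Q / S) ^ (-κ) := fun h => by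
    refine Real.rpow_le_rpow_of_nonpos (by positivity) ?_ (by linarith)
    have : Q / S ≤ q / S := by gcongr
    linarith
  have hqp : q / S / (1 + q / S) ≤ 1 := by rw [div_le_one hp]; linarith
  have hqp0 : 0 ≤ q / S / (1 + q / S) := by positivity
  have hG : 0 ≤ (Q / S) ^ (-κ) := by positivity
  have hZ : 0 ≤ ζ (q / Q) ^ m := Real.rpow_nonneg (z0 _) _
  generalize (1 + q / S) ^ (-κ) = g at *
  generalize (Q / S) ^ (-κ) = G at *
  have b1q := b1 (q / Q)
  have b2q := b2 (q / Q)
  -- the choice of `κ` makes the terms in `ζ` combine to a nonpositive one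
  have split : 4 * q * (1 / S * -κ * (1 / S * (-κ - 1) * (g / (1 + q / S) / (1 + q / S))) *
        ζ (q / Q) + 1 / S * -κ * (g / (1 + q / S)) * (ζ₁ (q / Q) * (1 / Q)) +
        (1 / S * -κ * (g / (1 + q / S)) * (ζ₁ (q / Q) * (1 / Q)) +
          g * (ζ₂ (q / Q) * (1 / Q) * (1 / Q)))) +
      2 * N * (1 / S * -κ * (g / (1 + q / S)) * ζ (q / Q) + g * (ζ₁ (q / Q) * (1 / Q))) =
      -(4 * κ * (κ + 1) / S * g / (1 + q / S) ^ 2 * ζ (q / Q)) +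
      (-(8 * κ * (q / S / (1 + q / S)) * g * ζ₁ (q / Q) / Q) +
        4 * (q / Q) * g * ζ₂ (q / Q) / Q + 2 * N * g * ζ₁ (q / Q) / Q) := by
    have hp' : S + q ≠ 0 := by positivity
    rw [← hN]
    have : 1 + q / S = (S + q) / S := by field_simp
    rw [this]
    field_simp
    ring
  rw [split]
  have t1 : 0 ≤ 4 * κ * (κ + 1) / S * g / (1 + q / S) ^ 2 * ζ (q / Q) := by
    have := z0 (q / Q)
    positivity
  refine (add_le_of_nonpos_left (neg_nonpos.2 t1)).trans ?_
  rcases lt_or_ge (q / Q) 1 with h | h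
  · rw [y1 _ h, y2 _ h]
    simp only [mul_zero, zero_div, neg_zero, add_zero]
    positivity
  rcases lt_or_ge 2 (q / Q) with h' | h'
  · have hz : ζ (q / Q) ^ m = 0 := by rw [zz _ h'.le, Real.zero_rpow hm0.ne']
    rw [hz, mul_zero] at b1q b2q
    rw [abs_nonpos_iff.1 b1q, abs_nonpos_iff.1 b2q, hz]
    simp
  have hgG := hgb ((one_le_div hQ).1 h)
  generalize q / S / (1 + q / S) = r at *
  generalize q / Q = s at *
  generalize ζ s ^ m = Z at *
  have e1 : -(8 * κ * r * g * ζ₁ s / Q) ≤ 8 * κ * 1 * G * (M * Z) / Q := by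
    rw [← neg_div]
    refine div_le_div_of_nonneg_right ?_ hQ.le
    rw [← mul_neg]
    calc 8 * κ * r * g * -ζ₁ s ≤ 8 * κ * r * g * (M * Z) := by
          gcongr; exact (neg_le_abs _).trans b1q
      _ ≤ _ := by gcongr
  have e2 : 4 * s * g * ζ₂ s / Q ≤ 4 * 2 * G * (M * Z) / Q := by
    refine div_le_div_of_nonneg_right ?_ hQ.le
    calc 4 * s * g * ζ₂ s ≤ 4 * s * g * (M * Z) := by
          gcongr; exact (le_abs_self _).trans b2q
      _ ≤ _ := by gcongr
  have e3 : 2 * N * g * ζ₁ s / Q ≤ 2 * N * G * (M * Z) / Q := by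
    refine div_le_div_of_nonneg_right ?_ hQ.le
    calc 2 * N * g * ζ₁ s ≤ 2 * N * g * (M * Z) := by
          gcongr; exact (le_abs_self _).trans b1q
      _ ≤ _ := by gcongr
  calc _ ≤ 8 * κ * 1 * G * (M * Z) / Q + 4 * 2 * G * (M * Z) / Q + 2 * N * G * (M * Z) / Q := by
        linarith
    _ = _ := by ring

/-- A weighted Young inequality, with a free threshold `l` separating the two regimes. -/
lemma rpow_le_linear {m l s : ℝ} (hm0 : 0 < m) (hm1 : m < 1) (hl : 0 < l) (hs : 0 ≤ s) :
    s ^ m ≤ l ^ (m - 1) * s + l ^ m := by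
  rcases le_or_gt s l with h | h
  · have := Real.rpow_le_rpow hs h hm0.le
    have : 0 ≤ l ^ (m - 1) * s := by positivity
    linarith
  · have hs' : 0 < s := hl.trans h
    have h1 : s ^ m = s ^ (m - 1) * s := by rw [Real.rpow_sub_one hs'.ne']; field_simp
    have h2 : s ^ (m - 1) ≤ l ^ (m - 1) := Real.rpow_le_rpow_of_nonpos hl h.le (by linarith)
    have h3 := mul_le_mul_of_nonneg_right h2 hs
    have : 0 ≤ l ^ m := by positivity
    linarith

/-- Test functions adapted to the equation: `η` is bounded below by a constant independent of `S`
on the ball `|x|² ≤ S`, and every nonnegative pair `A ≤ D ^ m` satisfies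
`∫ A Δη ≤ ∫ D η + 1`. -/
lemma exists_good_test {N : ℕ} (hN : 3 ≤ N) {m : ℝ} (hm0 : 0 < m) (hm1 : m < 1) :
    ∃ c : ℝ, 0 < c ∧ ∀ S : ℝ, 0 < S → ∃ η : Euc N → ℝ, ContDiff ℝ 2 η ∧ HasCompactSupport η ∧
      (∀ x, 0 ≤ η x) ∧ (∀ x, η x ≤ 1) ∧ (∀ x, ‖x‖ ^ 2 ≤ S → c ≤ η x) ∧
      ∀ A D : Euc N → ℝ, Continuous A → Continuous D → (∀ x, 0 ≤ A x) → (∀ x, 0 ≤ D x) →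
        (∀ x, A x ≤ D x ^ m) → ∫ x, A x * lapl η x ≤ (∫ x, η x * D x) + 1 := by
  obtain ⟨ζ, ζ₁, ζ₂, M, cζ, d1, d2, z0, zle, zone, zz, y1, y2, hM, b1, b2⟩ :=
    exists_cutoff hm0 hm1
  have hN' : (3:ℝ) ≤ N := by exact_mod_cast hN
  obtain ⟨κ, hκN⟩ : ∃ κ : ℝ, 2 * κ + 2 = N := ⟨((N:ℝ) - 2) / 2, by ring⟩
  have hκ : 0 < κ := by linarith
  refine ⟨2 ^ (-κ), by positivity, fun S hS => ?_⟩
  set B : ℝ := M * (8 * κ + 8 + 2 * N) with hB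
  have hB0 : 0 ≤ B := by positivity
  set ν : ℝ := volume.real (Metric.closedBall (0 : Euc N) 1) with hν
  have hν0 : 0 ≤ ν := measureReal_nonneg
  -- `l` small makes the constant term `l ^ m`, integrated over the support of `η`, at most `1`;
  -- then `Q` large makes the coefficient `l ^ (m - 1)` of the linear term at most `1`
  obtain ⟨l, hl0, hl⟩ : ∃ l : ℝ, 0 < l ∧ B * S ^ κ * 2 ^ (κ + 1) * ν * l ^ m ≤ 1 := by
    set K := B * S ^ κ * 2 ^ (κ + 1) * ν
    have hK : 0 ≤ K := by positivity
    refine ⟨(1 / (K + 1)) ^ (1 / m), by positivity, ?_⟩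
    rw [← Real.rpow_mul (by positivity), one_div_mul_cancel hm0.ne', Real.rpow_one,
      mul_one_div, div_le_one (by positivity)]
    linarith
  obtain ⟨Q, hSQ, hQ⟩ : ∃ Q : ℝ, S ≤ Q ∧ B * 3 ^ κ * l ^ (m - 1) ≤ Q :=
    ⟨max S (B * 3 ^ κ * l ^ (m - 1)), le_max_left _ _, le_max_right _ _⟩
  have hQ0 : 0 < Q := hS.trans_le hSQ
  obtain ⟨cη, hη⟩ := lapl_profile_le hm0 hκ hκN hS hQ0 cζ d1 d2 z0 zz y1 y2 hM b1 b2
  set η : Euc N → ℝ := fun x => (1 + ‖x‖ ^ 2 / S) ^ (-κ) * ζ (‖x‖ ^ 2 / Q) with hηdef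
  have p1 : ∀ x : Euc N, 1 ≤ 1 + ‖x‖ ^ 2 / S := fun x => by
    have : 0 ≤ ‖x‖ ^ 2 / S := by positivity
    linarith
  have zout : ∀ x : Euc N, x ∉ Metric.closedBall (0 : Euc N) √(2 * Q) → ζ (‖x‖ ^ 2 / Q) = 0 := by
    intro x hx
    refine zz _ ?_
    rw [mem_closedBall_zero_iff, not_le] at hx
    rw [Real.sqrt_lt' ((Real.sqrt_nonneg _).trans_lt hx)] at hx
    rw [le_div_iff₀ hQ0]
    exact hx.le
  have sη : HasCompactSupport η := by
    refine HasCompactSupport.intro (isCompact_closedBall (0 : Euc N) √(2 * Q)) fun x hx => ?_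
    simp [hηdef, zout x hx]
  have η0 : ∀ x, 0 ≤ η x := fun x => mul_nonneg (Real.rpow_nonneg (by linarith [p1 x]) _) (z0 _)
  refine ⟨η, cη, sη, η0, fun x => ?_, fun x hx => ?_, fun A D cA cD A0 D0 hAD => ?_⟩
  · exact mul_le_one₀ (Real.rpow_le_one_of_one_le_of_nonpos (p1 x) (by linarith)) (z0 _) (zle _)
  · have h1 : ζ (‖x‖ ^ 2 / Q) = 1 := zone _ (by rw [div_le_one hQ0]; linarith)
    simp only [hηdef, h1, mul_one]
    refine Real.rpow_le_rpow_of_nonpos (by linarith [p1 x]) ?_ (by linarith)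
    have : ‖x‖ ^ 2 / S ≤ 1 := by rwa [div_le_one hS]
    linarith
  · set b : ℝ := (Q / S) ^ (-κ) / Q with hb
    have hb0 : 0 ≤ b := by positivity
    have key : ∀ x, A x * lapl η x ≤ η x * D x +
        (Metric.closedBall (0 : Euc N) √(2 * Q)).indicator (fun _ => B * b * l ^ m) x := by
      intro x
      have hL := mul_le_mul_of_nonneg_left (hη x) (A0 x)
      by_cases hx : x ∈ Metric.closedBall (0 : Euc N) √(2 * Q)
      · rw [Set.indicator_of_mem hx]
        set z := ζ (‖x‖ ^ 2 / Q) with hz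
        have hz0 : 0 ≤ z := z0 _
        have hxq : ‖x‖ ^ 2 ≤ 2 * Q := by
          rw [mem_closedBall_zero_iff] at hx
          exact (Real.le_sqrt (norm_nonneg _) (by positivity)).1 hx
        have h1 : A x * z ^ m ≤ l ^ (m - 1) * (D x * z) + l ^ m := by
          refine le_trans ?_ (rpow_le_linear hm0 hm1 hl0 (mul_nonneg (D0 x) hz0))
          rw [Real.mul_rpow (D0 x) hz0]
          exact mul_le_mul_of_nonneg_right (hAD x) (Real.rpow_nonneg hz0 _)
        -- comparison of the cut-off with `η` on its support
        have h2 : z ≤ (3 * (Q / S)) ^ κ * η x := by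
          have e1 : z = (1 + ‖x‖ ^ 2 / S) ^ κ * η x := by
            have hp : 0 < 1 + ‖x‖ ^ 2 / S := by linarith [p1 x]
            simp only [hηdef, ← mul_assoc]
            rw [← Real.rpow_add hp]
            simp [hz]
          have e2 : 1 + ‖x‖ ^ 2 / S ≤ 3 * (Q / S) := by
            have : ‖x‖ ^ 2 / S ≤ 2 * Q / S := by gcongr
            have h3 : 1 ≤ Q / S := by rwa [one_le_div hS]
            have : 2 * Q / S = 2 * (Q / S) := by ring
            linarith
          calc z = (1 + ‖x‖ ^ 2 / S) ^ κ * η x := e1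
            _ ≤ _ := mul_le_mul_of_nonneg_right
              (Real.rpow_le_rpow (by linarith [p1 x]) e2 hκ.le) (η0 x)
        have h3 : B * b * l ^ (m - 1) * (3 * (Q / S)) ^ κ ≤ 1 := by
          have : B * b * l ^ (m - 1) * (3 * (Q / S)) ^ κ = B * 3 ^ κ * l ^ (m - 1) / Q := by
            rw [Real.mul_rpow (by norm_num) (by positivity), hb,
              Real.rpow_neg (by positivity)]
            have : (Q / S) ^ κ ≠ 0 := by positivity
            field_simp
          rw [this, div_le_one hQ0]
          exact hQ
        have hBb : 0 ≤ B * b := by positivity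
        calc A x * lapl η x ≤ A x * (B * b * z ^ m) := hL
          _ = B * b * (A x * z ^ m) := by ring
          _ ≤ B * b * (l ^ (m - 1) * (D x * ((3 * (Q / S)) ^ κ * η x)) + l ^ m) := by
              refine mul_le_mul_of_nonneg_left (h1.trans ?_) hBb
              have := mul_le_mul_of_nonneg_left h2 (D0 x)
              have := mul_le_mul_of_nonneg_left this (by positivity : 0 ≤ l ^ (m - 1))
              linarith
          _ = B * b * l ^ (m - 1) * (3 * (Q / S)) ^ κ * (η x * D x) + B * b * l ^ m := by ring
          _ ≤ _ := by
              have := mul_le_mul_of_nonneg_right h3 (mul_nonneg (η0 x) (D0 x))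
              linarith
      · rw [Set.indicator_of_notMem hx, add_zero]
        rw [zout x hx, Real.zero_rpow hm0.ne', mul_zero, mul_zero] at hL
        exact hL.trans (mul_nonneg (η0 x) (D0 x))
    have i1 : Integrable fun x => A x * lapl η x :=
      (cA.mul (continuous_lapl cη)).integrable_of_hasCompactSupport
        (hasCompactSupport_lapl sη).mul_left
    have i2 : Integrable fun x => η x * D x :=
      (cη.continuous.mul cD).integrable_of_hasCompactSupport sη.mul_right
    have i3 : Integrable ((Metric.closedBall (0 : Euc N) √(2 * Q)).indicator
        (fun _ => B * b * l ^ m)) := by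
      refine (integrable_indicator_iff measurableSet_closedBall).2 ?_
      exact integrableOn_const (isCompact_closedBall _ _).measure_ne_top
    refine (integral_mono i1 (i2.add i3) key).trans ?_
    rw [integral_add' i2 i3, integral_indicator_const _ measurableSet_closedBall, smul_eq_mul]
    refine add_le_add le_rfl ?_
    have hvol : volume.real (Metric.closedBall (0 : Euc N) √(2 * Q)) = (2 * Q) ^ (κ + 1) * ν := by
      rw [hν, measureReal_def, measureReal_def,
        Measure.addHaar_closedBall' volume (0 : Euc N) (Real.sqrt_nonneg _), ENNReal.toReal_mul,
        ENNReal.toReal_ofReal (by positivity), finrank_euclideanSpace_fin,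
        Real.sqrt_eq_rpow, ← Real.rpow_natCast, ← Real.rpow_mul (by positivity)]
      congr 2
      rw [← hκN]; ring
    have e : (2 * Q) ^ (κ + 1) * b = S ^ κ * 2 ^ (κ + 1) := by
      rw [hb, Real.rpow_neg (by positivity), Real.mul_rpow (by norm_num) hQ0.le,
        Real.div_rpow hQ0.le hS.le, Real.rpow_add_one hQ0.ne']
      have : Q ^ κ ≠ 0 := by positivity
      have : S ^ κ ≠ 0 := by positivity
      field_simp
    rw [hvol]
    calc (2 * Q) ^ (κ + 1) * ν * (B * b * l ^ m)
        = ((2 * Q) ^ (κ + 1) * b) * ν * B * l ^ m := by ring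
      _ = B * S ^ κ * 2 ^ (κ + 1) * ν * l ^ m := by rw [e]; ring
      _ ≤ 1 := hl

/-! ### Elementary inequalities for powers -/

lemma abs_rpow_sub_le {m x y : ℝ} (hm0 : 0 < m) (hm1 : m < 1) (hx : 0 ≤ x) (hy : 0 ≤ y) :
    |x ^ m - y ^ m| ≤ |x - y| ^ m := by
  wlog h : y ≤ x generalizing x y
  · rw [abs_sub_comm, abs_sub_comm x]
    exact this hy hx (le_of_not_ge h)
  rw [abs_of_nonneg (sub_nonneg.2 (Real.rpow_le_rpow hy h hm0.le)), abs_of_nonneg (sub_nonneg.2 h)]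
  have := Real.rpow_add_le_add_rpow (sub_nonneg.2 h) hy hm0.le hm1.le
  rw [sub_add_cancel] at this
  linarith

/-- The differences `x ^ m - y ^ m` and `x - y` have the same sign. -/
lemma rpow_sub_div_abs {m x y : ℝ} (hm0 : 0 < m) (hx : 0 < x) (hy : 0 < y) :
    (x ^ m - y ^ m) / |x ^ m - y ^ m| = (x - y) / |x - y| := by
  rcases lt_trichotomy x y with h | h | h
  · have h1 := sub_neg.2 h
    have h2 := sub_neg.2 (Real.rpow_lt_rpow hx.le h hm0)
    rw [abs_of_neg h1, abs_of_neg h2, div_neg, div_neg, div_self h1.ne, div_self h2.ne]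
  · simp [h]
  · have h1 := sub_pos.2 h
    have h2 := sub_pos.2 (Real.rpow_lt_rpow hy.le h hm0)
    rw [abs_of_pos h1, abs_of_pos h2, div_self h1.ne', div_self h2.ne']

/-! ### Regularity of solutions -/

section Regularity

variable {N : ℕ} {m T : ℝ} {u : Euc N → ℝ → ℝ} {u₀ : Euc N → ℝ}

lemma IsFDESol.contDiff_slice (hu : IsFDESol N m T u u₀) {t : ℝ} (ht : t ∈ Set.Ioo 0 T) :
    ContDiff ℝ 2 fun x => u x t := by
  rw [← contDiffOn_univ]
  have h : ContDiffOn ℝ 2 (fun p : Euc N × ℝ => u p.1 p.2) (Set.univ ×ˢ Set.Ioo (0:ℝ) T) :=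
    hu.2.1.of_le (WithTop.coe_le_coe.2 (le_top : (2 : ℕ∞) ≤ ⊤))
  exact h.comp (f := fun x : Euc N => (x, t)) (contDiff_id.prodMk contDiff_const).contDiffOn
    fun x _ => ⟨trivial, ht⟩

lemma IsFDESol.contDiff_rpow (hu : IsFDESol N m T u u₀) {t : ℝ} (ht : t ∈ Set.Ioo 0 T) :
    ContDiff ℝ 2 fun x => u x t ^ m :=
  (hu.contDiff_slice ht).rpow_const_of_ne fun x => (hu.1 x t ht).ne'

lemma IsFDESol.differentiableAt (hu : IsFDESol N m T u u₀) (x : Euc N) {t : ℝ}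
    (ht : t ∈ Set.Ioo 0 T) : DifferentiableAt ℝ (fun p : Euc N × ℝ => u p.1 p.2) (x, t) :=
  (hu.2.1.contDiffAt ((isOpen_univ.prod isOpen_Ioo).mem_nhds ⟨trivial, ht⟩)).differentiableAt
    (by simp)

lemma IsFDESol.hasDerivAt_fderiv (hu : IsFDESol N m T u u₀) (x : Euc N) {t : ℝ}
    (ht : t ∈ Set.Ioo 0 T) : HasDerivAt (u x)
      (fderiv ℝ (fun p : Euc N × ℝ => u p.1 p.2) (x, t) (0, 1)) t := by
  have h := (hu.differentiableAt x ht).hasFDerivAt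
  exact h.comp_hasDerivAt t ((hasDerivAt_const t x).prodMk (hasDerivAt_id t))

lemma IsFDESol.hasDerivAt (hu : IsFDESol N m T u u₀) (x : Euc N) {t : ℝ}
    (ht : t ∈ Set.Ioo 0 T) : HasDerivAt (u x) (lapl (fun y => u y t ^ m) x) t := by
  rw [← hu.2.2.2.2 x t ht]
  exact (hu.hasDerivAt_fderiv x ht).differentiableAt.hasDerivAt

/-- The right-hand side of the equation is jointly continuous, being a time derivative of a jointly
smooth function. -/
lemma IsFDESol.continuousOn_lapl (hu : IsFDESol N m T u u₀) :
    ContinuousOn (fun p : Euc N × ℝ => lapl (fun y => u y p.2 ^ m) p.1)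
      (Set.univ ×ˢ Set.Ioo (0:ℝ) T) := by
  have h := (hu.2.1.continuousOn_fderiv_of_isOpen (isOpen_univ.prod isOpen_Ioo)
    (by exact_mod_cast le_top)).clm_apply (continuousOn_const (c := ((0 : Euc N), (1:ℝ))))
  refine h.congr fun p hp => ?_
  exact (hu.hasDerivAt p.1 hp.2).unique (hu.hasDerivAt_fderiv p.1 hp.2)

end Regularity

/-! ### The contraction estimate -/

/-- The weighted `L¹` estimate. At each time `t` the function `s ↦ ∫ η sign(d(t)) d(s)`, with
`d = u - v`, touches `s ↦ ∫ η |d(s)|` from below at `s = t`, and Kato's inequality bounds its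
derivative there; this replaces differentiating the absolute value. -/
lemma weighted_estimate {N : ℕ} {m T : ℝ} (hm0 : 0 < m) (hm1 : m < 1)
    {u v : Euc N → ℝ → ℝ} {u₀ v₀ : Euc N → ℝ}
    (hu : IsFDESol N m T u u₀) (hv : IsFDESol N m T v v₀)
    (hf : Integrable (fun x => u₀ x - v₀ x) volume)
    {η : Euc N → ℝ} (cη : ContDiff ℝ 2 η) (sη : HasCompactSupport η)
    (η0 : ∀ x, 0 ≤ η x) (η1 : ∀ x, η x ≤ 1)
    (hη : ∀ A D : Euc N → ℝ, Continuous A → Continuous D → (∀ x, 0 ≤ A x) → (∀ x, 0 ≤ D x) →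
        (∀ x, A x ≤ D x ^ m) → ∫ x, A x * lapl η x ≤ (∫ x, η x * D x) + 1)
    {t₁ : ℝ} (h0 : 0 ≤ t₁) (hT : t₁ < T) :
    ∫ x, η x * |u x t₁ - v x t₁| ≤ exp t₁ * ((∫ x, |u₀ x - v₀ x|) + 1) := by
  have cd : ContinuousOn (fun p : Euc N × ℝ => u p.1 p.2 - v p.1 p.2)
      (Set.univ ×ˢ Set.Ico (0:ℝ) T) := hu.2.2.1.sub hv.2.2.1
  have cslice : ∀ t ∈ Set.Ico 0 T, Continuous fun x => u x t - v x t := fun t ht => by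
    rw [← continuousOn_univ]
    exact cd.comp (f := fun x : Euc N => (x, t)) (by fun_prop) fun x _ => ⟨trivial, ht⟩
  have hF : ContinuousOn (fun t => ∫ x, η x * |u x t - v x t|) (Set.Icc 0 t₁) := by
    refine continuousOn_integral_of_compact_support (k := tsupport η) sη ?_ ?_
    · have : ContinuousOn (fun p : ℝ × Euc N => u p.2 p.1 - v p.2 p.1)
          (Set.Icc 0 t₁ ×ˢ Set.univ) :=
        cd.comp (f := fun p : ℝ × Euc N => (p.2, p.1)) (by fun_prop)
          fun p hp => ⟨trivial, hp.1.1, hp.1.2.trans_lt hT⟩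
      exact (cη.continuous.comp continuous_snd).continuousOn.mul this.abs
    · intro t x _ hx
      rw [image_eq_zero_of_notMem_tsupport hx, zero_mul]
  have hG := gronwall_left h0 hF ?_
  · refine hG.trans ?_
    refine mul_le_mul_of_nonneg_left (add_le_add ?_ le_rfl) (exp_pos _).le
    simp only [hu.2.2.2.1, hv.2.2.2.1]
    refine integral_mono_of_nonneg (ae_of_all _ fun x => ?_) hf.abs (ae_of_all _ fun x => ?_)
    · exact mul_nonneg (η0 x) (abs_nonneg _)
    · exact mul_le_of_le_one_left (abs_nonneg _) (η1 x)
  · intro t ht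
    have htT : t ∈ Set.Ioo 0 T := ⟨ht.1, ht.2.trans_lt hT⟩
    obtain ⟨δ, hδ, hsub⟩ : ∃ δ > 0, Set.Icc (t - δ) (t + δ) ⊆ Set.Ioo 0 T := by
      obtain ⟨δ, hδ, h⟩ := Metric.nhds_basis_closedBall.mem_iff.1 (Ioo_mem_nhds htT.1 htT.2)
      exact ⟨δ, hδ, by rwa [Real.closedBall_eq_Icc] at h⟩
    have ca : ContDiff ℝ 2 fun x => u x t ^ m - v x t ^ m :=
      (hu.contDiff_rpow htT).sub (hv.contDiff_rpow htT)
    have cdt := cslice t ⟨htT.1.le, htT.2⟩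
    set φ : Euc N → ℝ := fun x => (u x t - v x t) / |u x t - v x t| with hφ
    have hφ1 : ∀ x, |φ x| ≤ 1 := fun x => by
      rw [hφ, abs_div, abs_abs]; exact div_self_le_one _
    have hder := hasDerivAt_test (t := t) (δ := δ) (w := fun x s => u x s - v x s)
      (w' := fun x s => lapl (fun y => u y s ^ m) x - lapl (fun y => v y s ^ m) x) (η := η)
      (φ := φ) hδ
      (fun x s hs => (hu.hasDerivAt x (hsub hs)).fun_sub (hv.hasDerivAt x (hsub hs)))
      (cd.mono (Set.prod_mono le_rfl (hsub.trans Set.Ioo_subset_Ico_self)))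
      ((hu.continuousOn_lapl.sub hv.continuousOn_lapl).mono (Set.prod_mono le_rfl hsub))
      cη.continuous sη (cdt.measurable.div cdt.abs.measurable) hφ1
    refine ⟨_, _, hder, ?_, ?_, ?_⟩
    · have hmem : ∀ᶠ s in 𝓝[<] t, s ∈ Set.Ioo 0 T :=
        mem_nhdsWithin_of_mem_nhds (Ioo_mem_nhds htT.1 htT.2)
      filter_upwards [hmem] with s hs
      have cds := cslice s ⟨hs.1.le, hs.2⟩
      have hi : Integrable fun x => η x * |u x s - v x s| :=
        (cη.continuous.mul cds.abs).integrable_of_hasCompactSupport sη.mul_right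
      have hi' : Integrable fun x => η x * (u x s - v x s) :=
        (cη.continuous.mul cds).integrable_of_hasCompactSupport sη.mul_right
      refine integral_mono (hi'.bdd_mul (c := 1)
        (cdt.measurable.div cdt.abs.measurable).aestronglyMeasurable
        (ae_of_all _ hφ1)) hi fun x => ?_
      refine (le_abs_self _).trans ?_
      simp only [abs_mul, abs_of_nonneg (η0 x)]
      exact mul_le_of_le_one_left (mul_nonneg (η0 x) (abs_nonneg _)) (hφ1 x)
    · refine integral_congr_ae (ae_of_all _ fun x => ?_)
      by_cases hx : u x t - v x t = 0
      · simp [hφ, hx]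
      · have := abs_ne_zero.2 hx
        have h2 := abs_mul_abs_self (u x t - v x t)
        simp only [hφ]
        field_simp
        rw [sq, ← h2]; ring
    · have hk := kato_test ca cη sη η0
      have e : ∀ x, φ x * (η x * (lapl (fun y => u y t ^ m) x - lapl (fun y => v y t ^ m) x)) =
          (u x t ^ m - v x t ^ m) / |u x t ^ m - v x t ^ m| *
            (η x * lapl (fun y => u y t ^ m - v y t ^ m) x) := fun x => by
        rw [rpow_sub_div_abs hm0 (hu.1 x t htT) (hv.1 x t htT),
          lapl_sub (hu.contDiff_rpow htT) (hv.contDiff_rpow htT)]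
      simp only [e]
      refine hk.trans (hη _ _ ca.continuous.abs cdt.abs (fun x => abs_nonneg _)
        (fun x => abs_nonneg _) fun x => ?_)
      exact abs_rpow_sub_le hm0 hm1 (hu.1 x t htT).le (hv.1 x t htT).le

/-- At each time the difference of the solutions is in `L¹`: the weighted estimate is uniform in
the radius of the ball where the weight is bounded below. -/
lemma lintegral_diff_lt_top {N : ℕ} (hN : 3 ≤ N) {m T : ℝ} (hm0 : 0 < m) (hm1 : m < 1)
    {u v : Euc N → ℝ → ℝ} {u₀ v₀ : Euc N → ℝ}
    (hu : IsFDESol N m T u u₀) (hv : IsFDESol N m T v v₀)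
    (hf : Integrable (fun x => u₀ x - v₀ x) volume) {t : ℝ} (h0 : 0 ≤ t) (hT : t < T) :
    ∫⁻ x, ENNReal.ofReal |u x t - v x t| < ⊤ := by
  obtain ⟨c, hc, H⟩ := exists_good_test hN hm0 hm1
  set K : ℝ := exp t * ((∫ x, |u₀ x - v₀ x|) + 1)
  have cd : Continuous fun x => u x t - v x t := by
    rw [← continuousOn_univ]
    exact (hu.2.2.1.sub hv.2.2.1).comp (f := fun x : Euc N => (x, t)) (by fun_prop)
      fun x _ => ⟨trivial, h0, hT⟩
  have hball : ∀ n : ℕ, ∫⁻ x in Metric.closedBall 0 (n : ℝ), ENNReal.ofReal |u x t - v x t| ≤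
      ENNReal.ofReal (c⁻¹ * K) := by
    intro n
    -- `S` must be positive, also for `n = 0`
    obtain ⟨η, cη, sη, η0, η1, ηc, hη⟩ := H ((n : ℝ) ^ 2 + 1) (by positivity)
    have hK := weighted_estimate hm0 hm1 hu hv hf cη sη η0 η1 hη h0 hT
    have hi : Integrable fun x => η x * |u x t - v x t| :=
      (cη.continuous.mul cd.abs).integrable_of_hasCompactSupport sη.mul_right
    calc ∫⁻ x in Metric.closedBall 0 (n : ℝ), ENNReal.ofReal |u x t - v x t|
        ≤ ∫⁻ x in Metric.closedBall 0 (n : ℝ),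
            ENNReal.ofReal (c⁻¹ * (η x * |u x t - v x t|)) := by
          refine setLIntegral_mono' measurableSet_closedBall fun x hx => ?_
          refine ENNReal.ofReal_le_ofReal ?_
          rw [← mul_assoc]
          refine le_mul_of_one_le_left (abs_nonneg _) ?_
          rw [inv_mul_eq_div, one_le_div hc]
          refine ηc x ?_
          rw [mem_closedBall_zero_iff] at hx
          have := pow_le_pow_left₀ (norm_nonneg x) hx 2
          linarith
      _ ≤ ∫⁻ x, ENNReal.ofReal (c⁻¹ * (η x * |u x t - v x t|)) := setLIntegral_le_lintegral _ _
      _ = ENNReal.ofReal (∫ x, c⁻¹ * (η x * |u x t - v x t|)) := by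
          rw [ofReal_integral_eq_lintegral_ofReal (hi.const_mul _)]
          refine ae_of_all _ fun x => ?_
          exact mul_nonneg (inv_nonneg.2 hc.le) (mul_nonneg (η0 x) (abs_nonneg _))
      _ ≤ _ := by
          rw [integral_const_mul]
          exact ENNReal.ofReal_le_ofReal (mul_le_mul_of_nonneg_left hK (inv_nonneg.2 hc.le))
  have hU : ⋃ n : ℕ, Metric.closedBall (0 : Euc N) (n : ℝ) = Set.univ :=
    Metric.iUnion_closedBall_nat 0
  rw [← setLIntegral_univ, ← hU, setLIntegral_iUnion_of_directed]
  · exact (iSup_le hball).trans_lt ENNReal.ofReal_lt_top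
  · exact (directed_of_isDirected_le fun i j hij =>
      Metric.closedBall_subset_closedBall (Nat.cast_le.2 hij))

lemma lintegral_comp_smul_lt_top {N : ℕ} {g : Euc N → ENNReal} (hg : ∫⁻ x, g x < ⊤) {r : ℝ}
    (hr : r ≠ 0) : ∫⁻ x, g (r • x) < ⊤ := by
  have h := (Homeomorph.smulOfNeZero r hr).measurableEmbedding.lintegral_map
    (μ := (volume : Measure (Euc N))) g
  rw [show ((Homeomorph.smulOfNeZero r hr : Euc N ≃ₜ Euc N) : Euc N → Euc N) = (r • ·) from rfl,
    Measure.map_addHaar_smul _ hr, lintegral_smul_measure] at h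
  rw [← h]
  exact ENNReal.mul_lt_top ENNReal.ofReal_lt_top hg

/-- If u₀ - v₀ ∈ L¹ has compact support, then for every τ ∈ [-log T, ∞)
the difference of the rescaled solutions is in L¹, with a finite bound C(τ). -/
theorem rescaled_difference_integrable (N : ℕ) (hN : 3 ≤ N) (m T : ℝ)
    (hm0 : 0 < m) (hm1 : m < ((N : ℝ) - 2) / N) (hT : 0 < T)
    (u v : Euc N → ℝ → ℝ) (u₀ v₀ : Euc N → ℝ)
    (hu : IsFDESol N m T u u₀) (hv : IsFDESol N m T v v₀)
    (hf : Integrable (fun x => u₀ x - v₀ x) volume)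
    (hsupp : HasCompactSupport fun x => u₀ x - v₀ x) :
    ∀ τ : ℝ, -Real.log T ≤ τ →
      ∃ C : ℝ, (∫⁻ x, ENNReal.ofReal |rescaleSol N m T u x τ - rescaleSol N m T v x τ|)
        ≤ ENNReal.ofReal C := by
  intro τ hτ
  have hN0 : (0:ℝ) < N := by exact_mod_cast (by lia : 0 < N)
  have hm1' : m < 1 := hm1.trans (by rw [div_lt_one hN0]; linarith)
  have h0 : 0 ≤ T - exp (-τ) := by
    have : exp (-τ) ≤ exp (Real.log T) := exp_le_exp.2 (by linarith)
    rw [Real.exp_log hT] at this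
    linarith
  have hlt : T - exp (-τ) < T := by linarith [exp_pos (-τ)]
  have hfin := lintegral_comp_smul_lt_top
    (lintegral_diff_lt_top hN hm0 hm1' hu hv hf h0 hlt) (exp_pos (-gammaC N m * τ)).ne'
  have hres : ∫⁻ x, ENNReal.ofReal |rescaleSol N m T u x τ - rescaleSol N m T v x τ| < ⊤ := by
    have e : ∀ x, ENNReal.ofReal |rescaleSol N m T u x τ - rescaleSol N m T v x τ| =
        ENNReal.ofReal (exp (betaC N m * τ)) *
          ENNReal.ofReal |u (exp (-gammaC N m * τ) • x) (T - exp (-τ)) -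
            v (exp (-gammaC N m * τ) • x) (T - exp (-τ))| := fun x => by
      rw [← ENNReal.ofReal_mul (exp_pos _).le, rescaleSol, rescaleSol, ← mul_sub, abs_mul,
        abs_of_pos (exp_pos _)]
    simp only [e]
    rw [lintegral_const_mul' _ _ ENNReal.ofReal_ne_top]
    exact ENNReal.mul_lt_top ENNReal.ofReal_lt_top hfin
  exact ⟨_, (ENNReal.ofReal_toReal hres.ne).ge⟩
end
end

section
/- Let N > 4 and 0 < m < (N-4)/(N-2), and set α = (N-2)(1-m)/2 - 1. Let u and v be two solutions of the fast diffusion equation on ℝ^N × (0,T) whose initial values both satisfy (C*T/(k₁+|x|²))^{1/(1-m)} ≤ u₀(x), v₀(x) ≤ (C*T/(k₂+|x|²))^{1/(1-m)} for some k₁ > k₂ > 0, and suppose B_{k₁} ≤ u, v ≤ B_{k₂} on ℝ^N × (0,T). Write B̃ = B̃_{k₂}, let ũ, ṽ be the rescaled solutions, and set ũ₀ = ũ(·,-log T), ṽ₀ = ṽ(·,-log T). Assume ∫_{ℝ^N} |ũ₀ - ṽ₀| B̃^α dx < ∞ and that ũ₀ - ṽ₀ is not identically zero. Then for every τ > -log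 T, ∫_{ℝ^N} |ũ(x,τ) - ṽ(x,τ)| B̃^α(x) dx < ∫_{ℝ^N} |ũ₀(x) - ṽ₀(x)| B̃^α(x) dx. -/
/-!
The rescaled weighted norm at `τ` is, up to a constant, the norm of `w = u - v` at time
`t = T - e^(-τ)` in the original variables with weight `Q^(-p)`, where `Q = 1 + κ(t)‖y‖²`,
`κ(t) = (T-t)^(2b)/k₂`, `b = β/N` and `p = (N-2)/2 - 1/(1-m)` (`lintegral_rescale`). The hypothesis
`m < (N-4)/(N-2)` says exactly that `p > 0`.

Put `z = u^m - v^m`, which has the sign of `w` and satisfies `∂ₜw = Δz`. By Kato's inequality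
(`kato_radial`) the derivative of `∫ |w| φ` is at most `∫ |z| Δφ + |w| ∂ₜφ`. For `φ = Q^(-p)` one has
`Δφ ≤ 0`, and since `u, v ≤ B_{k₂}`, concavity gives `|z| ≥ m B_{k₂}^(m-1) |w|`, a coefficient which is
an explicit multiple of `Q`. The exponent `α` is the one for which the terms with `κ‖y‖²` in
`m B_{k₂}^(m-1) Δφ` and in `∂ₜφ` cancel, and a strictly negative multiple of `∫ |w| Q^(-p-1)`
remains (`pointwise_ineq`).

To make the integrals legitimate, the weight is replaced by `e^(-λt) Q^(-p-δ) (1 - ‖y‖²/r)₊³`. The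
change of exponent breaks the cancellation by `O(δ)`, which `λ = O(δ)` absorbs. Since both solutions
lie between `B_{k₁}` and `B_{k₂}`, `|z| ≤ C Q^(-1/(1-m))`, one power of `Q` better than `u^m` itself,
so the terms created by the cutoff are `o(1)` as `r → ∞` for fixed `δ > 0` (`err_le`,
`integral_le`).

The norm `∫ |w| φ` need not be differentiable in time. Freezing the sign of `w` at time `t` gives a
differentiable minorant that touches it at `t` (`left_deriv`), and this suffices to integrate the
differential inequality (`le_of_left_minorant`). If `w(x₀, 0) ≠ 0`, continuity up to `t = 0` keeps
`w` away from `0` near `(x₀, 0)`, so the dissipation removes a fixed amount `c₀ > 0` that does not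
depend on `δ` and `r` (`diss_lower`, `decay`). Letting `r → ∞` and `δ → 0`, Fatou's lemma keeps
the inequality strict (`strict`).
-/

open MeasureTheory Real Filter Topology RealInnerProductSpace

noncomputable section

/-! ### The radial weight with cutoff -/

lemma hasDerivAt_max_zero_pow (n : ℕ) (x : ℝ) :
    HasDerivAt (fun y : ℝ => (max 0 y) ^ (n + 2)) ((n + 2 : ℝ) * (max 0 x) ^ (n + 1)) x := by
  rcases lt_trichotomy x 0 with hx | rfl | hx
  · have h : (fun y : ℝ => (max 0 y) ^ (n + 2)) =ᶠ[𝓝 x] fun _ => 0 := by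
      filter_upwards [eventually_lt_nhds hx] with y hy
      simp [max_eq_left hy.le]
    simpa [max_eq_left hx.le] using (hasDerivAt_const x (0 : ℝ)).congr_of_eventuallyEq h
  · have h1 : HasDerivWithinAt (fun y : ℝ => (max 0 y) ^ (n + 2)) 0 (Set.Iic 0) 0 :=
      (hasDerivWithinAt_const (0 : ℝ) _ (0 : ℝ)).congr
        (fun y hy => by simp [max_eq_left (Set.mem_Iic.1 hy)]) (by simp)
    have h2 : HasDerivWithinAt (fun y : ℝ => (max 0 y) ^ (n + 2)) 0 (Set.Ici 0) 0 := by
      have := (hasDerivAt_pow (n + 2) (0 : ℝ)).hasDerivWithinAt (s := Set.Ici 0)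
      simp only [Nat.add_one_sub_one, ne_eq, Nat.add_eq_zero_iff, one_ne_zero, and_false,
        not_false_eq_true, zero_pow, mul_zero] at this
      exact this.congr (fun y hy => by simp [max_eq_right (Set.mem_Ici.1 hy)]) (by simp)
    have := h1.union h2
    rw [Set.Iic_union_Ici, hasDerivWithinAt_univ] at this
    simpa using this
  · have h : (fun y : ℝ => (max 0 y) ^ (n + 2)) =ᶠ[𝓝 x] fun y => y ^ (n + 2) := by
      filter_upwards [eventually_gt_nhds hx] with y hy
      simp [max_eq_right hy.le]
    have := (hasDerivAt_pow (n + 2) x).congr_of_eventuallyEq h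
    simpa [max_eq_right hx.le] using this

/-- Radial weight, as a function of `ρ = ‖x‖²`: the profile `(1 + κρ)^(-q)` times the
`C²` cutoff `(1 - ρ/r)₊³`. -/
def radW (κ q r ρ : ℝ) : ℝ := (1 + κ * ρ) ^ (-q) * (max 0 (1 - ρ / r)) ^ 3

/-- First derivative of `radW` in `ρ`. -/
def radW1 (κ q r ρ : ℝ) : ℝ :=
  -(q * κ) * (1 + κ * ρ) ^ (-q - 1) * (max 0 (1 - ρ / r)) ^ 3
    - 3 / r * (1 + κ * ρ) ^ (-q) * (max 0 (1 - ρ / r)) ^ 2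

/-- Second derivative of `radW` in `ρ`. -/
def radW2 (κ q r ρ : ℝ) : ℝ :=
  q * (q + 1) * κ ^ 2 * (1 + κ * ρ) ^ (-q - 2) * (max 0 (1 - ρ / r)) ^ 3
    + 6 / r * (q * κ) * (1 + κ * ρ) ^ (-q - 1) * (max 0 (1 - ρ / r)) ^ 2
    + 6 / r ^ 2 * (1 + κ * ρ) ^ (-q) * max 0 (1 - ρ / r)

lemma hasDerivAt_one_add_rpow {κ ρ : ℝ} (a : ℝ) (h : 0 < 1 + κ * ρ) :
    HasDerivAt (fun ρ => (1 + κ * ρ) ^ a) (a * κ * (1 + κ * ρ) ^ (a - 1)) ρ := by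
  have h1 : HasDerivAt (fun ρ : ℝ => 1 + κ * ρ) κ ρ := by
    simpa using ((hasDerivAt_id ρ).const_mul κ).const_add 1
  have := h1.rpow_const (p := a) (Or.inl h.ne')
  convert this using 1; ring

lemma hasDerivAt_cut (r ρ : ℝ) (n : ℕ) :
    HasDerivAt (fun ρ => (max 0 (1 - ρ / r)) ^ (n + 2))
      (-((n + 2 : ℝ) / r * (max 0 (1 - ρ / r)) ^ (n + 1))) ρ := by
  have h1 : HasDerivAt (fun ρ : ℝ => 1 - ρ / r) (-(1 / r)) ρ := by
    simpa using ((hasDerivAt_id ρ).div_const r).const_sub 1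
  have := (hasDerivAt_max_zero_pow n (1 - ρ / r)).comp ρ h1
  refine this.congr_deriv ?_
  ring

lemma hasDerivAt_radW {κ q r ρ : ℝ} (h : 0 < 1 + κ * ρ) :
    HasDerivAt (radW κ q r) (radW1 κ q r ρ) ρ := by
  have := (hasDerivAt_one_add_rpow (-q) h).mul (hasDerivAt_cut r ρ 1)
  refine this.congr_deriv ?_
  simp only [radW1]; norm_num; ring

lemma hasDerivAt_radW1 {κ q r ρ : ℝ} (h : 0 < 1 + κ * ρ) :
    HasDerivAt (radW1 κ q r) (radW2 κ q r ρ) ρ := by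
  have h1 := ((hasDerivAt_one_add_rpow (-q - 1) h).const_mul (-(q * κ))).mul (hasDerivAt_cut r ρ 1)
  have h2 := ((hasDerivAt_one_add_rpow (-q) h).const_mul (3 / r)).mul (hasDerivAt_cut r ρ 0)
  have := h1.sub h2
  refine this.congr_deriv ?_
  simp only [radW2]; norm_num
  have : -q - 2 = -q - 1 - 1 := by ring
  rw [this]; ring

/-! ### The pointwise differential inequality -/

/-- Bound for the `d`-dimensional Laplacian `4ρ h'' + 2d h'` of the radial weight: the leading part
is the one in which the cutoff is not differentiated, and all other terms are `O(1/r)` times the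
uncut weight on `ρ < r`. -/
lemma radW_lap_le {κ q r ρ d : ℝ} (hκ : 0 < κ) (hq : 0 < q) (hr : 0 < r) (hρ : 0 ≤ ρ)
    (hd : 0 ≤ d) :
    4 * ρ * radW2 κ q r ρ + 2 * d * radW1 κ q r ρ ≤
      -(max 0 (1 - ρ / r)) ^ 3 * (2 * q * κ * (1 + κ * ρ) ^ (-q - 2)
          * (d * (1 + κ * ρ) - 2 * (q + 1) * (κ * ρ)))
        + 24 * (q + 1) / r * (1 + κ * ρ) ^ (-q) * (if ρ < r then 1 else 0) := by
  by_cases h : ρ < r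
  · have hX : max 0 (1 - ρ / r) = 1 - ρ / r := max_eq_right (by
      rw [sub_nonneg, div_le_one hr]; exact h.le)
    set X := 1 - ρ / r with hXdef
    have hX0 : 0 ≤ X := by rw [← hX]; exact le_max_left _ _
    have hX1 : X ≤ 1 := by have := div_nonneg hρ hr.le; linarith
    have hρX : ρ = r * (1 - X) := by rw [hXdef]; field_simp; ring
    have hQ : 1 ≤ 1 + κ * ρ := by have := mul_nonneg hκ.le hρ; linarith
    set Q := 1 + κ * ρ with hQdef
    have e1 : Q ^ (-q - 1) = Q ^ (-q - 2) * Q := by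
      rw [← Real.rpow_add_one (by linarith)]; congr 1; ring
    have e0 : Q ^ (-q) = Q ^ (-q - 2) * Q * Q := by
      rw [← Real.rpow_add_one (by linarith), ← Real.rpow_add_one (by linarith)]; congr 1; ring
    have hG : 0 < Q ^ (-q - 2) := Real.rpow_pos_of_pos (by linarith) _
    simp only [radW1, radW2, ← hXdef, hX, if_pos h, ← hQdef]
    rw [e1, e0]
    set G := Q ^ (-q - 2)
    -- the three terms in which the cutoff is differentiated
    have key : 4 * ρ * (6 / r * (q * κ) * (G * Q) * X ^ 2 + 6 / r ^ 2 * (G * Q * Q) * X)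
        - 2 * d * (3 / r * (G * Q * Q) * X ^ 2) ≤ 24 * (q + 1) / r * (G * Q * Q) := by
      have a1 : 4 * ρ * (6 / r * (q * κ) * (G * Q) * X ^ 2) ≤ 24 * q / r * (G * Q * Q) := by
        have : 4 * ρ * (6 / r * (q * κ) * (G * Q) * X ^ 2)
          = 24 * q / r * (G * Q * ((Q - 1) * X ^ 2)) := by rw [hQdef]; ring
        rw [this]
        have hx2 : X ^ 2 ≤ 1 := pow_le_one₀ hX0 hX1
        have : (Q - 1) * X ^ 2 ≤ Q := by nlinarith
        have : G * Q * ((Q - 1) * X ^ 2) ≤ G * Q * Q := by gcongr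
        gcongr
      have a2 : 4 * ρ * (6 / r ^ 2 * (G * Q * Q) * X) ≤ 24 / r * (G * Q * Q) := by
        have : 4 * ρ * (6 / r ^ 2 * (G * Q * Q) * X) = 24 / r * (G * Q * Q) * ((1 - X) * X) := by
          rw [hρX]; field_simp; ring
        rw [this]
        have : (1 - X) * X ≤ 1 := by nlinarith
        exact mul_le_of_le_one_right (by positivity) this
      have a3 : 0 ≤ 2 * d * (3 / r * (G * Q * Q) * X ^ 2) := by positivity
      have : 24 * (q + 1) / r * (G * Q * Q)
        = 24 * q / r * (G * Q * Q) + 24 / r * (G * Q * Q) := by ring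
      linarith
    have hκρ : κ * ρ = Q - 1 := by rw [hQdef]; ring
    have e : 4 * ρ * (q * (q + 1) * κ ^ 2 * G * X ^ 3) = 4 * q * (q + 1) * κ * (Q - 1) * G * X ^ 3 := by
      rw [← hκρ]; ring
    rw [hκρ]
    linear_combination key + e
  · have hX : max 0 (1 - ρ / r) = 0 := max_eq_left (by
      rw [sub_nonpos, le_div_iff₀ hr]; linarith)
    simp [radW1, radW2, hX, h]

/-- The pointwise differential inequality behind the contraction. For the exponent `q = p + δ`
with `p` the exponent of the weight, the coefficients of `κρ` in `a Δφ` and in `∂ₜφ` cancel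
up to `O(δ)`, which is absorbed by `lam`; the constant coefficient gives strict decay. -/
lemma pointwise_ineq {κ q r ρ d s b δ lam m W Z : ℝ} (hκ : 0 < κ) (hq : 0 < q) (hr : 0 < r)
    (hρ : 0 ≤ ρ) (hd : 0 ≤ d) (hs : 0 < s) (hb : 0 < b)
    (hm : (1 - m) * (d - 2 * q - 2) = 2 - 2 * (1 - m) * δ) (hdq : 0 ≤ d - 2 * q - 2)
    (hlam : 2 * b * q * (1 - m) * δ / s ≤ lam) (hlam0 : 0 ≤ lam) (hW : 0 ≤ W)
    (hZ : (1 - m) * b / (2 * s * κ) * (1 + κ * ρ) * W ≤ Z) (hZ0 : 0 ≤ Z) :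
    Z * (4 * ρ * radW2 κ q r ρ + 2 * d * radW1 κ q r ρ)
      + W * (2 * b * q / s * (κ * ρ) * (1 + κ * ρ) ^ (-q - 1) * (max 0 (1 - ρ / r)) ^ 3
        - lam * radW κ q r ρ)
    ≤ - (b * q * (1 - m) * d / s * (1 + κ * ρ) ^ (-q - 1) * W * (max 0 (1 - ρ / r)) ^ 3)
      + Z * (24 * (q + 1) / r * (1 + κ * ρ) ^ (-q) * (if ρ < r then 1 else 0)) := by
  have h1 := mul_le_mul_of_nonneg_left (radW_lap_le (d := d) hκ hq hr hρ hd) hZ0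
  have hY : 0 ≤ κ * ρ := mul_nonneg hκ.le hρ
  set E := (24 * (q + 1) / r * (1 + κ * ρ) ^ (-q) * (if ρ < r then (1 : ℝ) else 0))
  simp only [radW]
  have hX0 : 0 ≤ max 0 (1 - ρ / r) := le_max_left _ _
  set X := max 0 (1 - ρ / r)
  set Y := κ * ρ
  have e1 : (1 + Y) ^ (-q - 1) = (1 + Y) ^ (-q - 2) * (1 + Y) := by
    rw [← Real.rpow_add_one (by linarith)]; congr 1; ring
  have e0 : (1 + Y) ^ (-q) = (1 + Y) ^ (-q - 2) * (1 + Y) * (1 + Y) := by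
    rw [← Real.rpow_add_one (by linarith), ← Real.rpow_add_one (by linarith)]; congr 1; ring
  have hG : 0 < (1 + Y) ^ (-q - 2) := Real.rpow_pos_of_pos (by linarith) _
  rw [e1, e0]
  set G := (1 + Y) ^ (-q - 2)
  -- by `hdq` the leading part of the Laplacian is nonpositive, so `Z` may be replaced by its
  -- lower bound
  have hB : 0 ≤ d * (1 + Y) - 2 * (q + 1) * Y := by nlinarith
  have h2 : X ^ 3 * (2 * q * κ * G * (d * (1 + Y) - 2 * (q + 1) * Y))
      * ((1 - m) * b / (2 * s * κ) * (1 + Y) * W) ≤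
      X ^ 3 * (2 * q * κ * G * (d * (1 + Y) - 2 * (q + 1) * Y)) * Z := by
    apply mul_le_mul_of_nonneg_left hZ; positivity
  have e2 : X ^ 3 * (2 * q * κ * G * (d * (1 + Y) - 2 * (q + 1) * Y))
      * ((1 - m) * b / (2 * s * κ) * (1 + Y) * W)
      = X ^ 3 * (G * (1 + Y)) * W * (b * q / s) * ((1 - m) * d + (2 - 2 * (1 - m) * δ) * Y) := by
    rw [← hm]; field_simp; ring
  have h3 : X ^ 3 * (G * (1 + Y)) * W * (b * q / s) * (2 * (1 - m) * δ * Y)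
      ≤ W * (lam * (G * (1 + Y) * (1 + Y) * X ^ 3)) := by
    have : X ^ 3 * (G * (1 + Y)) * W * (b * q / s) * (2 * (1 - m) * δ * Y)
      = X ^ 3 * (G * (1 + Y)) * W * ((2 * b * q * (1 - m) * δ / s) * Y) := by ring
    rw [this]
    have h5 : (2 * b * q * (1 - m) * δ / s) * Y ≤ lam * (1 + Y) := by nlinarith
    have : X ^ 3 * (G * (1 + Y)) * W * ((2 * b * q * (1 - m) * δ / s) * Y)
      ≤ X ^ 3 * (G * (1 + Y)) * W * (lam * (1 + Y)) := by gcongr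
    refine this.trans (le_of_eq (by ring))
  have e3 : X ^ 3 * (G * (1 + Y)) * W * (b * q / s) * ((1 - m) * d + (2 - 2 * (1 - m) * δ) * Y)
     = b * q * (1 - m) * d / s * (G * (1 + Y)) * W * X ^ 3
      + W * (2 * b * q / s * Y * (G * (1 + Y)) * X ^ 3)
      - X ^ 3 * (G * (1 + Y)) * W * (b * q / s) * (2 * (1 - m) * δ * Y) := by ring
  linear_combination h1 + h2 + h3 - e2 - e3

/-! ### Powers and Barenblatt solutions -/

/-- Concavity of `x ↦ x^m`: on `(0, B]` its slope is at least `m B^(m-1)`. -/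
lemma rpow_sub_ge {m x y B : ℝ} (hm0 : 0 < m) (hm1 : m < 1) (hx : 0 < x) (hxy : x ≤ y)
    (hyB : y ≤ B) : m * B ^ (m - 1) * (y - x) ≤ y ^ m - x ^ m := by
  have hy : 0 < y := hx.trans_le hxy
  have h1 : (x / y) ^ m ≤ 1 + m * (x / y - 1) := by
    have := rpow_one_add_le_one_add_mul_self (s := x / y - 1) (p := m)
      (by have := (div_pos hx hy).le; linarith) hm0.le hm1.le
    simpa using this
  have h2 : x ^ m = y ^ m * (x / y) ^ m := by
    rw [← Real.mul_rpow hy.le (div_pos hx hy).le]; congr 1; field_simp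
  have h3 : x ^ m ≤ y ^ m + m * y ^ (m - 1) * (x - y) := by
    rw [h2]
    have := mul_le_mul_of_nonneg_left h1 (Real.rpow_pos_of_pos hy m).le
    refine this.trans (le_of_eq ?_)
    rw [Real.rpow_sub_one hy.ne']; field_simp
  have h4 : B ^ (m - 1) ≤ y ^ (m - 1) :=
    Real.rpow_le_rpow_of_nonpos hy hyB (by linarith)
  have h5 : m * B ^ (m - 1) * (y - x) ≤ m * y ^ (m - 1) * (y - x) := by
    have : 0 ≤ y - x := by linarith
    gcongr
  linarith

lemma abs_rpow_sub_ge {m x y B : ℝ} (hm0 : 0 < m) (hm1 : m < 1) (hx : 0 < x) (hy : 0 < y)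
    (hxB : x ≤ B) (hyB : y ≤ B) : m * B ^ (m - 1) * |x - y| ≤ |x ^ m - y ^ m| := by
  rcases le_total x y with h | h
  · rw [abs_of_nonpos (by linarith), abs_of_nonpos
      (by have := Real.rpow_le_rpow hx.le h hm0.le; linarith)]
    have := rpow_sub_ge hm0 hm1 hx h hyB; linarith
  · rw [abs_of_nonneg (by linarith), abs_of_nonneg
      (by have := Real.rpow_le_rpow hy.le h hm0.le; linarith)]
    exact rpow_sub_ge hm0 hm1 hy h hxB

lemma sign_rpow_sub {m x y : ℝ} (hm0 : 0 < m) (hx : 0 < x) (hy : 0 < y) :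
    Real.sign (x ^ m - y ^ m) = Real.sign (x - y) := by
  rcases lt_trichotomy x y with h | rfl | h
  · rw [Real.sign_of_neg (by have := Real.rpow_lt_rpow hx.le h hm0; linarith),
      Real.sign_of_neg (by linarith)]
  · simp
  · rw [Real.sign_of_pos (by have := Real.rpow_lt_rpow hy.le h hm0; linarith),
      Real.sign_of_pos (by linarith)]

/-- Convexity of `X ↦ X^(-μ)`. -/
lemma rpow_neg_sub_le {μ X Y : ℝ} (hμ : 0 < μ) (hX : 0 < X) (hXY : X ≤ Y) :
    X ^ (-μ) - Y ^ (-μ) ≤ μ * X ^ (-μ - 1) * (Y - X) := by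
  have hY := hX.trans_le hXY
  have h1 : 1 - μ * (Y / X - 1) ≤ (Y / X) ^ (-μ) := by
    rw [Real.rpow_def_of_pos (div_pos hY hX)]
    have a := Real.add_one_le_exp (Real.log (Y / X) * -μ)
    have c := Real.log_le_sub_one_of_pos (div_pos hY hX)
    nlinarith
  have h2 : Y ^ (-μ) = X ^ (-μ) * (Y / X) ^ (-μ) := by
    rw [← Real.mul_rpow hX.le (div_pos hY hX).le]; congr 1; field_simp
  have h3 := mul_le_mul_of_nonneg_left h1 (Real.rpow_pos_of_pos hX (-μ)).le
  rw [← h2] at h3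
  have h4 : X ^ (-μ) * (1 - μ * (Y / X - 1)) = X ^ (-μ) - μ * X ^ (-μ - 1) * (Y - X) := by
    rw [Real.rpow_sub_one hX.ne']; field_simp
  linarith

/-- The decay rate `1/(N-2-mN)`; it equals `β/N = -γ`. -/
def bC (N : ℕ) (m : ℝ) : ℝ := 1 / ((N : ℝ) - 2 - m * N)

/-- The coefficient `κ(t) = (T-t)^(2b)/k`, so that `1 + κ(t)‖y‖²` is `(k + ‖x‖²)/k` in the
rescaled variable `x`. -/
def kap (N : ℕ) (m k T t : ℝ) : ℝ := (T - t) ^ (2 * bC N m) / k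

lemma gammaC_eq {N : ℕ} {m : ℝ} (hN : 0 < N) : gammaC N m = -bC N m := by
  have : (N : ℝ) ≠ 0 := by positivity
  unfold gammaC betaC bC
  rw [mul_comm m]; field_simp

lemma Cst_eq {N : ℕ} {m : ℝ} (hb : 0 < bC N m) : Cst N m = 2 * m / ((1 - m) * bC N m) := by
  have : (N : ℝ) - 2 - m * N ≠ 0 := by
    intro h; rw [bC, h] at hb; simp at hb
  unfold Cst bC; field_simp

lemma Bb_eq {N : ℕ} {m T k : ℝ} (hN : 0 < N) (hk : 0 < k) {x : Euc N}
    {t : ℝ} (ht : t < T) :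
    Bb N m T k x t = (Cst N m * (T - t) ^ (1 + 2 * bC N m) /
      (k + (T - t) ^ (2 * bC N m) * ‖x‖ ^ 2)) ^ (1 / (1 - m)) := by
  have hs : 0 < T - t := by linarith
  unfold Bb
  rw [gammaC_eq hN]
  congr 1
  have e1 : (T - t) ^ (2 * -bC N m) = ((T - t) ^ (2 * bC N m))⁻¹ := by
    rw [← Real.rpow_neg hs.le]; congr 1; ring
  have e2 : (T - t) ^ (1 + 2 * bC N m) = (T - t) * (T - t) ^ (2 * bC N m) := by
    rw [Real.rpow_add hs, Real.rpow_one]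
  rw [e1, e2]
  have := Real.rpow_pos_of_pos hs (2 * bC N m)
  have h2 : 0 < k + (T - t) ^ (2 * bC N m) * ‖x‖ ^ 2 := by positivity
  have h3 : 0 < k * ((T - t) ^ (2 * bC N m))⁻¹ + ‖x‖ ^ 2 := by positivity
  rw [div_eq_div_iff h3.ne' h2.ne']
  field_simp

/-- The linearisation coefficient of `u ↦ u^m` at a Barenblatt solution is affine in `‖x‖²`. -/
lemma Bb_rpow_sub_one {N : ℕ} {m T k : ℝ} (hN : 0 < N) (hk : 0 < k) (hm0 : 0 < m) (hm1 : m < 1)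
    (hb : 0 < bC N m) {x : Euc N} {t : ℝ} (ht : t < T) :
    m * Bb N m T k x t ^ (m - 1) = (1 - m) * bC N m / (2 * (T - t) * kap N m k T t)
      * (1 + kap N m k T t * ‖x‖ ^ 2) := by
  have hs : 0 < T - t := by linarith
  have h1m : 0 < 1 - m := by linarith
  rw [Bb_eq hN hk ht, Cst_eq hb]
  have e2 : (T - t) ^ (1 + 2 * bC N m) = (T - t) * (T - t) ^ (2 * bC N m) := by
    rw [Real.rpow_add hs, Real.rpow_one]
  rw [e2, kap]
  have hS := Real.rpow_pos_of_pos hs (2 * bC N m)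
  set S := (T - t) ^ (2 * bC N m)
  have h2 : 0 < k + S * ‖x‖ ^ 2 := by positivity
  rw [← Real.rpow_mul (by positivity)]
  have : 1 / (1 - m) * (m - 1) = -1 := by field_simp; ring
  rw [this, Real.rpow_neg_one]
  field_simp

lemma Bb_pos {N : ℕ} {m T k : ℝ} (hN : 0 < N) (hk : 0 < k) (hm0 : 0 < m) (hm1 : m < 1)
    (hb : 0 < bC N m) {x : Euc N} {t : ℝ} (ht : t < T) : 0 < Bb N m T k x t := by
  have hs : 0 < T - t := by linarith
  have h1m : 0 < 1 - m := by linarith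
  rw [Bb_eq hN hk ht, Cst_eq hb]
  positivity

/-- `B_{k₂}^m - B_{k₁}^m` decays one power of `‖x‖²` faster than each of its terms. -/
lemma Bb_rpow_sub_le {N : ℕ} {m T k₁ k₂ : ℝ} (hN : 0 < N) (hk2 : 0 < k₂) (hk12 : k₂ < k₁)
    (hm0 : 0 < m) (hm1 : m < 1) (hb : 0 < bC N m) {x : Euc N} {t : ℝ} (ht : t < T) (ht0 : 0 ≤ t) :
    Bb N m T k₂ x t ^ m - Bb N m T k₁ x t ^ m ≤
      ((Cst N m * T ^ (1 + 2 * bC N m)) ^ (m / (1 - m)) * (m / (1 - m)) * (k₁ - k₂)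
        * k₂ ^ (-(m / (1 - m)) - 1)) * (1 + kap N m k₂ T t * ‖x‖ ^ 2) ^ (-(1 / (1 - m))) := by
  have hs : 0 < T - t := by linarith
  have h1m : 0 < 1 - m := by linarith
  have hC : 0 < Cst N m := by rw [Cst_eq hb]; positivity
  have hS := Real.rpow_pos_of_pos hs (2 * bC N m)
  have hμ : 0 < m / (1 - m) := by positivity
  have hform : ∀ k, 0 < k → Bb N m T k x t ^ m =
      (Cst N m * (T - t) ^ (1 + 2 * bC N m)) ^ (m / (1 - m)) *
        (k + (T - t) ^ (2 * bC N m) * ‖x‖ ^ 2) ^ (-(m / (1 - m))) := by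
    intro k hk
    rw [Bb_eq hN hk ht, ← Real.rpow_mul (by positivity), Real.div_rpow (by positivity)
      (by positivity), Real.rpow_neg (by positivity), div_eq_mul_inv]
    have : 1 / (1 - m) * m = m / (1 - m) := by ring
    rw [this]
  rw [hform k₁ (hk2.trans hk12), hform k₂ hk2, ← mul_sub]
  have h1 := rpow_neg_sub_le hμ (X := k₂ + (T - t) ^ (2 * bC N m) * ‖x‖ ^ 2)
    (Y := k₁ + (T - t) ^ (2 * bC N m) * ‖x‖ ^ 2) (by positivity) (by linarith)
  have h2 : k₂ + (T - t) ^ (2 * bC N m) * ‖x‖ ^ 2 = k₂ * (1 + kap N m k₂ T t * ‖x‖ ^ 2) := by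
    rw [kap]; field_simp
  have hQ : 0 < 1 + kap N m k₂ T t * ‖x‖ ^ 2 := by rw [kap]; positivity
  have h3 : (k₂ + (T - t) ^ (2 * bC N m) * ‖x‖ ^ 2) ^ (-(m / (1 - m)) - 1)
      = k₂ ^ (-(m / (1 - m)) - 1) * (1 + kap N m k₂ T t * ‖x‖ ^ 2) ^ (-(1 / (1 - m))) := by
    rw [h2, Real.mul_rpow hk2.le hQ.le]
    congr 2; field_simp; ring
  rw [h3] at h1
  have h4 : (Cst N m * (T - t) ^ (1 + 2 * bC N m)) ^ (m / (1 - m)) ≤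
      (Cst N m * T ^ (1 + 2 * bC N m)) ^ (m / (1 - m)) := by
    have : T - t ≤ T := by linarith
    gcongr
  calc _ ≤ (Cst N m * (T - t) ^ (1 + 2 * bC N m)) ^ (m / (1 - m)) * _ :=
        mul_le_mul_of_nonneg_left h1 (by positivity)
    _ ≤ (Cst N m * T ^ (1 + 2 * bC N m)) ^ (m / (1 - m)) * _ := by
        apply mul_le_mul_of_nonneg_right h4
        have : 0 < k₁ - k₂ := by linarith
        have h7 : k₁ + (T - t) ^ (2 * bC N m) * ‖x‖ ^ 2 -
          (k₂ + (T - t) ^ (2 * bC N m) * ‖x‖ ^ 2) = k₁ - k₂ := by ring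
        rw [h7]
        positivity
    _ = _ := by ring

/-! ### Kato's inequality -/

lemma measurable_realSign : Measurable Real.sign := by
  unfold Real.sign
  exact Measurable.ite measurableSet_Iio measurable_const
    (Measurable.ite measurableSet_Ioi measurable_const measurable_const)

lemma abs_realSign_le (x : ℝ) : |Real.sign x| ≤ 1 := by
  rcases Real.sign_apply_eq x with h | h | h <;> simp [h]

lemma realSign_mul_self (x : ℝ) : Real.sign x * x = |x| := by
  rcases lt_trichotomy x 0 with h | rfl | h
  · rw [Real.sign_of_neg h, abs_of_neg h]; ring
  · simp
  · rw [Real.sign_of_pos h, abs_of_pos h]; ring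

lemma ibp_dir {N : ℕ} {e : Euc N} {f f1 g g1 : Euc N → ℝ}
    (hf : ∀ x, HasLineDerivAt ℝ f (f1 x) x e) (hg : ∀ x, HasLineDerivAt ℝ g (g1 x) x e)
    (cf : Continuous f) (cf1 : Continuous f1) (cg : Continuous g) (cg1 : Continuous g1)
    (sg : HasCompactSupport g) (sg1 : HasCompactSupport g1) :
    ∫ x, f x * g1 x = -∫ x, f1 x * g x :=
  integral_bilinear_hasLineDerivAt_right_eq_neg_left_of_integrable
    (B := ContinuousLinearMap.mul ℝ ℝ) (μ := volume)
    ((cf1.mul cg).integrable_of_hasCompactSupport sg.mul_left)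
    ((cf.mul cg1).integrable_of_hasCompactSupport sg1.mul_left)
    ((cf.mul cg).integrable_of_hasCompactSupport sg.mul_left)
    (fun x _ => hf x) (fun x _ => hg x)

/-- Kato's inequality in one direction, tested against `ψ ≥ 0` of compact support. The modulus is
regularised by `√(f² + ε²)`, whose second derivative along `e` dominates `f f2 / √(f² + ε²)`. -/
lemma kato_dir {N : ℕ} {e : Euc N} {f f1 f2 ψ ψ1 ψ2 : Euc N → ℝ}
    (hf : ∀ x, HasLineDerivAt ℝ f (f1 x) x e) (hf1 : ∀ x, HasLineDerivAt ℝ f1 (f2 x) x e)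
    (cf : Continuous f) (cf1 : Continuous f1) (cf2 : Continuous f2)
    (hψ : ∀ x, HasLineDerivAt ℝ ψ (ψ1 x) x e) (hψ1 : ∀ x, HasLineDerivAt ℝ ψ1 (ψ2 x) x e)
    (cψ : Continuous ψ) (cψ1 : Continuous ψ1) (cψ2 : Continuous ψ2)
    (sψ : HasCompactSupport ψ) (sψ1 : HasCompactSupport ψ1) (sψ2 : HasCompactSupport ψ2)
    (ψ0 : ∀ x, 0 ≤ ψ x) :
    ∫ x, Real.sign (f x) * f2 x * ψ x ≤ ∫ x, |f x| * ψ2 x := by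
  have step : ∀ ε : ℝ, 0 < ε → ∫ x, f x / √(f x ^ 2 + ε ^ 2) * f2 x * ψ x ≤
      ∫ x, √(f x ^ 2 + ε ^ 2) * ψ2 x := by
    intro ε hε
    have hpos : ∀ x, 0 < f x ^ 2 + ε ^ 2 := fun x => by positivity
    have hj : ∀ x, 0 < √(f x ^ 2 + ε ^ 2) := fun x => Real.sqrt_pos.2 (hpos x)
    have cj : Continuous fun x => √(f x ^ 2 + ε ^ 2) := by fun_prop
    have dj : ∀ x, HasLineDerivAt ℝ (fun x => √(f x ^ 2 + ε ^ 2))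
        (f x * f1 x / √(f x ^ 2 + ε ^ 2)) x e := by
      intro x
      have h := hf x
      unfold HasLineDerivAt at h ⊢
      have h2 := ((h.pow 2).add_const (ε ^ 2)).sqrt (by simpa using (hpos x).ne')
      refine h2.congr_deriv ?_
      simp; field_simp
    have dj1 : ∀ x, HasLineDerivAt ℝ (fun x => f x * f1 x / √(f x ^ 2 + ε ^ 2))
        (f x / √(f x ^ 2 + ε ^ 2) * f2 x
          + ε ^ 2 * f1 x ^ 2 / (√(f x ^ 2 + ε ^ 2)) ^ 3) x e := by
      intro x
      have h := hf x
      have h' := hf1 x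
      have h'' := dj x
      unfold HasLineDerivAt at h h' h'' ⊢
      have h2 := (h.mul h').div h'' (by simpa using (hj x).ne')
      refine h2.congr_deriv ?_
      simp only [zero_smul, add_zero, Pi.mul_apply]
      have hne := (hj x).ne'
      have hsq : √(f x ^ 2 + ε ^ 2) ^ 2 = f x ^ 2 + ε ^ 2 := Real.sq_sqrt (hpos x).le
      set j := √(f x ^ 2 + ε ^ 2)
      field_simp
      have : ε ^ 2 = j ^ 2 - f x ^ 2 := by linarith
      rw [this]; ring
    have cj1 : Continuous fun x => f x * f1 x / √(f x ^ 2 + ε ^ 2) :=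
      (cf.mul cf1).div cj fun x => (hj x).ne'
    have cA : Continuous fun x => f x / √(f x ^ 2 + ε ^ 2) * f2 x :=
      (cf.div cj fun x => (hj x).ne').mul cf2
    have cj2 : Continuous fun x => f x / √(f x ^ 2 + ε ^ 2) * f2 x
          + ε ^ 2 * f1 x ^ 2 / (√(f x ^ 2 + ε ^ 2)) ^ 3 :=
      cA.add ((by fun_prop : Continuous fun x => ε ^ 2 * f1 x ^ 2).div (cj.pow 3)
        fun x => (pow_pos (hj x) 3).ne')
    rw [ibp_dir dj hψ1 cj cj1 cψ1 cψ2 sψ1 sψ2, ibp_dir dj1 hψ cj1 cj2 cψ cψ1 sψ sψ1, neg_neg]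
    refine integral_mono ((cA.mul cψ).integrable_of_hasCompactSupport sψ.mul_left)
      ((cj2.mul cψ).integrable_of_hasCompactSupport sψ.mul_left) fun x => ?_
    refine mul_le_mul_of_nonneg_right ?_ (ψ0 x)
    have : 0 ≤ ε ^ 2 * f1 x ^ 2 / (√(f x ^ 2 + ε ^ 2)) ^ 3 := by positivity
    linarith
  have hε : Tendsto (fun n : ℕ => (1 : ℝ) / (n + 1)) atTop (𝓝 0) :=
    tendsto_one_div_add_atTop_nhds_zero_nat
  have hsq : ∀ x, Tendsto (fun n : ℕ => √(f x ^ 2 + ((1 : ℝ) / (n + 1)) ^ 2)) atTop (𝓝 |f x|) := by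
    intro x
    have h : Continuous fun ε : ℝ => √(f x ^ 2 + ε ^ 2) := by fun_prop
    have := (h.tendsto 0).comp hε
    simpa only [Function.comp_def, ne_eq, OfNat.ofNat_ne_zero, not_false_eq_true, zero_pow,
      add_zero, Real.sqrt_sq_eq_abs] using this
  have lim1 : Tendsto (fun n : ℕ => ∫ x, f x / √(f x ^ 2 + ((1 : ℝ) / (n + 1)) ^ 2) * f2 x * ψ x)
      atTop (𝓝 (∫ x, Real.sign (f x) * f2 x * ψ x)) := by
    refine tendsto_integral_of_dominated_convergence (fun x => |f2 x * ψ x|) ?_ ?_ ?_ ?_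
    · intro n
      refine Continuous.aestronglyMeasurable ?_
      exact ((cf.div (by fun_prop) fun x => (Real.sqrt_pos.2 (by positivity)).ne').mul cf2).mul cψ
    · exact ((cf2.mul cψ).integrable_of_hasCompactSupport sψ.mul_left).abs
    · intro n
      refine Eventually.of_forall fun x => ?_
      rw [mul_assoc, Real.norm_eq_abs, abs_mul]
      refine mul_le_of_le_one_left (abs_nonneg _) ?_
      rw [abs_div, abs_of_nonneg (Real.sqrt_nonneg _)]
      refine div_le_one_of_le₀ ?_ (Real.sqrt_nonneg _)
      rw [← Real.sqrt_sq_eq_abs]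
      exact Real.sqrt_le_sqrt (by have := sq_nonneg ((1 : ℝ) / (n + 1)); linarith)
    · refine Eventually.of_forall fun x => ?_
      refine (Tendsto.mul_const _ (Tendsto.mul_const _ ?_))
      rcases eq_or_ne (f x) 0 with h | h
      · simp [h]
      · have := (tendsto_const_nhds (x := f x)).div (hsq x) (abs_ne_zero.2 h)
        have e : Real.sign (f x) = f x / |f x| := by
          rw [eq_div_iff (abs_ne_zero.2 h), ← realSign_mul_self, ← mul_assoc]
          rcases Real.sign_apply_eq_of_ne_zero _ h with h' | h' <;> simp [h']
        rw [e]; exact this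
  have lim2 : Tendsto (fun n : ℕ => ∫ x, √(f x ^ 2 + ((1 : ℝ) / (n + 1)) ^ 2) * ψ2 x)
      atTop (𝓝 (∫ x, |f x| * ψ2 x)) := by
    refine tendsto_integral_of_dominated_convergence (fun x => |(|f x| + 1) * ψ2 x|) ?_ ?_ ?_ ?_
    · intro n
      refine Continuous.aestronglyMeasurable ?_
      fun_prop
    · exact (((cf.abs.add continuous_const).mul cψ2).integrable_of_hasCompactSupport
        sψ2.mul_left).abs
    · intro n
      refine Eventually.of_forall fun x => ?_
      rw [Real.norm_eq_abs, abs_mul, abs_mul]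
      refine mul_le_mul_of_nonneg_right ?_ (abs_nonneg _)
      rw [abs_of_nonneg (Real.sqrt_nonneg _), abs_of_nonneg (by positivity)]
      rw [Real.sqrt_le_left (by positivity)]
      have h1 : ((1 : ℝ) / (n + 1)) ≤ 1 := by
        rw [div_le_one (by positivity)]; have : (0 : ℝ) ≤ n := by positivity
        linarith
      have h2 : ((1 : ℝ) / (n + 1)) ^ 2 ≤ 1 := pow_le_one₀ (by positivity) h1
      nlinarith [sq_abs (f x), abs_nonneg (f x)]
    · exact Eventually.of_forall fun x => (hsq x).mul_const _
  exact le_of_tendsto_of_tendsto' lim1 lim2 fun n => step _ (by positivity)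

lemma hasLineDerivAt_normSq {N : ℕ} (i : Fin N) {h : ℝ → ℝ} {h' : ℝ} {x : Euc N}
    (hh : HasDerivAt h h' (‖x‖ ^ 2)) :
    HasLineDerivAt ℝ (fun y : Euc N => h (‖y‖ ^ 2)) (h' * (2 * x i)) x
      (EuclideanSpace.single i (1 : ℝ)) := by
  unfold HasLineDerivAt
  have e : ∀ t : ℝ, ‖x + t • EuclideanSpace.single i (1 : ℝ)‖ ^ 2 = ‖x‖ ^ 2 + 2 * t * x i + t ^ 2 := by
    intro t
    rw [norm_add_sq_real, norm_smul, inner_smul_right]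
    simp [EuclideanSpace.inner_single_right]
    ring
  simp only [e]
  have h1 : HasDerivAt (fun t : ℝ => ‖x‖ ^ 2 + 2 * t * x i + t ^ 2) (2 * x i) 0 := by
    have := (((hasDerivAt_id (0 : ℝ)).const_mul 2).mul_const (x i)).const_add (‖x‖ ^ 2)
    exact (this.add (hasDerivAt_pow 2 (0 : ℝ))).congr_deriv (by simp)
  exact HasDerivAt.comp (h₂ := h) 0 (by simpa using hh) h1

lemma hasLineDerivAt_coord {N : ℕ} (i : Fin N) (x : Euc N) :
    HasLineDerivAt ℝ (fun y : Euc N => 2 * y i) 2 x (EuclideanSpace.single i (1 : ℝ)) := by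
  unfold HasLineDerivAt
  have := (((hasDerivAt_id (0 : ℝ)).const_add (x i)).const_mul 2)
  simpa using this

/-- Kato's inequality for the Laplacian, tested against a compactly supported radial function
`h(‖x‖²)`, for which `Δ = 4ρ h'' + 2N h'`. -/
lemma kato_radial {N : ℕ} {f : Euc N → ℝ} (hf : ContDiff ℝ 2 f) {h h1 h2 : ℝ → ℝ} {r : ℝ}
    (hh : ∀ ρ, 0 ≤ ρ → HasDerivAt h (h1 ρ) ρ) (hh1 : ∀ ρ, 0 ≤ ρ → HasDerivAt h1 (h2 ρ) ρ)
    (ch2 : ContinuousOn h2 (Set.Ici 0)) (sh : ∀ ρ, r ≤ ρ → h ρ = 0) (sh1 : ∀ ρ, r ≤ ρ → h1 ρ = 0)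
    (sh2 : ∀ ρ, r ≤ ρ → h2 ρ = 0) (h0 : ∀ ρ, 0 ≤ ρ → 0 ≤ h ρ) :
    ∫ x, Real.sign (f x) * lapl f x * h (‖x‖ ^ 2) ≤
      ∫ x, |f x| * (4 * ‖x‖ ^ 2 * h2 (‖x‖ ^ 2) + 2 * N * h1 (‖x‖ ^ 2)) := by
  have cn : Continuous fun x : Euc N => ‖x‖ ^ 2 := by fun_prop
  have c0 : Continuous fun x : Euc N => h (‖x‖ ^ 2) := continuous_iff_continuousAt.2 fun x =>
    (hh _ (by positivity)).continuousAt.comp (f := fun x : Euc N => ‖x‖ ^ 2) cn.continuousAt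
  have c1 : Continuous fun x : Euc N => h1 (‖x‖ ^ 2) := continuous_iff_continuousAt.2 fun x =>
    (hh1 _ (by positivity)).continuousAt.comp (f := fun x : Euc N => ‖x‖ ^ 2) cn.continuousAt
  have c2 : Continuous fun x : Euc N => h2 (‖x‖ ^ 2) :=
    ch2.comp_continuous cn fun x => by simp
  have hsupp : ∀ g : Euc N → ℝ, (∀ x, r ≤ ‖x‖ ^ 2 → g x = 0) → HasCompactSupport g := by
    intro g hg
    refine HasCompactSupport.intro (isCompact_closedBall (0 : Euc N) (√(max r 0))) fun x hx => hg x ?_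
    rw [mem_closedBall_zero_iff, not_le] at hx
    have := Real.lt_sq_of_sqrt_lt hx
    exact (le_max_left _ _).trans this.le
  let ei : Fin N → Euc N := fun i => EuclideanSpace.single i (1 : ℝ)
  let fi : Fin N → Euc N → ℝ := fun i x => fderiv ℝ f x (ei i)
  let fii : Fin N → Euc N → ℝ := fun i x => fderiv ℝ (fderiv ℝ f) x (ei i) (ei i)
  have hf1 : ContDiff ℝ 1 (fderiv ℝ f) := hf.fderiv_right (by norm_num)
  have dfi : ∀ i x, HasLineDerivAt ℝ f (fi i x) x (ei i) := fun i x =>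
    (hf.differentiable (by norm_num) x).hasFDerivAt.hasLineDerivAt _
  have dfii : ∀ i x, HasLineDerivAt ℝ (fi i) (fii i x) x (ei i) := fun i x =>
    ((hf1.differentiable (by norm_num) x).hasFDerivAt.clm_apply
      (hasFDerivAt_const (ei i) x)).hasLineDerivAt _ |> fun h => by simpa [fii] using h
  have cfi : ∀ i, Continuous (fi i) := fun i => hf1.continuous.clm_apply continuous_const
  have cfii : ∀ i, Continuous (fii i) := fun i =>
    ((hf1.continuous_fderiv (by norm_num)).clm_apply continuous_const).clm_apply continuous_const
  have hl : ∀ x, lapl f x = ∑ i, fii i x := by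
    intro x; unfold lapl
    refine Finset.sum_congr rfl fun i _ => ?_
    rw [iteratedFDeriv_two_apply]; rfl
  have d0 : ∀ (i : Fin N) x, HasLineDerivAt ℝ (fun y : Euc N => h (‖y‖ ^ 2))
      (h1 (‖x‖ ^ 2) * (2 * x i)) x (ei i) := fun i x =>
    hasLineDerivAt_normSq i (hh _ (by positivity))
  have d1 : ∀ (i : Fin N) x, HasLineDerivAt ℝ (fun y : Euc N => h1 (‖y‖ ^ 2) * (2 * y i))
      (h2 (‖x‖ ^ 2) * (2 * x i) ^ 2 + 2 * h1 (‖x‖ ^ 2)) x (ei i) := by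
    intro i x
    have a := hasLineDerivAt_normSq (x := x) i (hh1 _ (by positivity))
    have b := hasLineDerivAt_coord i x
    unfold HasLineDerivAt at a b ⊢
    refine (a.mul b).congr_deriv ?_
    simp only [zero_smul, add_zero]; ring
  have cx : ∀ i : Fin N, Continuous fun x : Euc N => x i := fun i => by fun_prop
  have cd1 : ∀ i : Fin N, Continuous fun x : Euc N => h1 (‖x‖ ^ 2) * (2 * x i) := fun i =>
    c1.mul (continuous_const.mul (cx i))
  have cd2 : ∀ i : Fin N, Continuous fun x : Euc N =>
      h2 (‖x‖ ^ 2) * (2 * x i) ^ 2 + 2 * h1 (‖x‖ ^ 2) := fun i =>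
    (c2.mul ((continuous_const.mul (cx i)).pow 2)).add (continuous_const.mul c1)
  have s0 := hsupp (fun x => h (‖x‖ ^ 2)) (fun x hx => sh _ hx)
  have s1 : ∀ i : Fin N, HasCompactSupport fun x : Euc N => h1 (‖x‖ ^ 2) * (2 * x i) := fun i =>
    hsupp _ (fun x hx => by simp [sh1 _ hx])
  have s2 : ∀ i : Fin N, HasCompactSupport fun x : Euc N =>
      h2 (‖x‖ ^ 2) * (2 * x i) ^ 2 + 2 * h1 (‖x‖ ^ 2) := fun i =>
    hsupp _ (fun x hx => by simp [sh1 _ hx, sh2 _ hx])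
  have eL : ∀ x, Real.sign (f x) * lapl f x * h (‖x‖ ^ 2)
      = ∑ i, Real.sign (f x) * fii i x * h (‖x‖ ^ 2) := by
    intro x; rw [hl, Finset.mul_sum, Finset.sum_mul]
  have eR : ∀ x : Euc N, |f x| * (4 * ‖x‖ ^ 2 * h2 (‖x‖ ^ 2) + 2 * N * h1 (‖x‖ ^ 2))
      = ∑ i, |f x| * (h2 (‖x‖ ^ 2) * (2 * x i) ^ 2 + 2 * h1 (‖x‖ ^ 2)) := by
    intro x
    rw [← Finset.mul_sum, Finset.sum_add_distrib, ← Finset.mul_sum]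
    have : ∑ i, (2 * x i) ^ 2 = 4 * ‖x‖ ^ 2 := by
      rw [EuclideanSpace.real_norm_sq_eq, Finset.mul_sum]
      exact Finset.sum_congr rfl fun i _ => by ring
    rw [this]; simp; left; ring
  simp only [eL, eR]
  rw [integral_finsetSum, integral_finsetSum]
  · exact Finset.sum_le_sum fun i _ => kato_dir (dfi i) (dfii i) hf.continuous (cfi i) (cfii i)
      (d0 i) (d1 i) c0 (cd1 i) (cd2 i) s0 (s1 i) (s2 i) (fun x => h0 _ (by positivity))
  · intro i _
    exact (hf.continuous.abs.mul (cd2 i)).integrable_of_hasCompactSupport (s2 i).mul_left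
  · intro i _
    have := ((cfii i).mul c0).integrable_of_hasCompactSupport (μ := volume) s0.mul_left
    refine (this.bdd_mul (c := 1) (f := fun x => Real.sign (f x))
      (measurable_realSign.comp hf.continuous.measurable).aestronglyMeasurable
      (Eventually.of_forall fun x => abs_realSign_le _)).congr
      (Eventually.of_forall fun x => by simp [mul_assoc])

/-! ### Differential inequalities through minorants -/

/-- If at every `t ∈ (a, b]` there is a differentiable `L` with `L ≤ F` just to the left of `t` that
touches `F` at `t` with slope at most `K`, then `F b ≤ F a + K (b - a)`. -/
lemma le_of_left_minorant {F : ℝ → ℝ} {a b K : ℝ} (hab : a ≤ b)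
    (hF : ContinuousOn F (Set.Icc a b))
    (h : ∀ t ∈ Set.Ioc a b, ∃ (L : ℝ → ℝ) (L' : ℝ), HasDerivAt L L' t ∧ L t = F t ∧
      (∀ᶠ s in 𝓝[<] t, L s ≤ F s) ∧ L' ≤ K) :
    F b ≤ F a + K * (b - a) := by
  -- time is reversed: the minorant to the left of `t` bounds right slopes of `s ↦ -F (-s)`
  have key := image_le_of_liminf_slope_right_le_deriv_boundary (f := fun s => -F (-s)) (a := -b)
    (b := -a) (B := fun s => -F b + K * (s + b)) (B' := fun _ => K) ?_ (by simp)
    (by fun_prop) ?_ ?_ (x := -a) ⟨by linarith, le_rfl⟩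
  · simp only [neg_neg] at key
    linarith
  · refine (hF.comp continuousOn_neg fun s hs => ?_).neg
    exact ⟨by linarith [hs.2], by linarith [hs.1]⟩
  · intro x _
    have := (((hasDerivAt_id x).add_const b).const_mul K).const_add (-F b)
    simpa using this.hasDerivWithinAt
  · intro x hx r hr
    obtain ⟨L, L', hL, hLF, hle, hK⟩ := h (-x) ⟨by linarith [hx.2], by linarith [hx.1]⟩
    have hM : HasDerivAt (fun s => -L (-s)) L' x := by
      have := (HasDerivAt.comp x hL (hasDerivAt_neg x)).neg
      exact this.congr_deriv (by simp)
    have h1 : ∀ᶠ z in 𝓝[>] x, slope (fun s => -L (-s)) x z < r := by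
      have := hasDerivAt_iff_tendsto_slope.1 hM
      have h2 := this.mono_left (nhdsWithin_mono x fun z (hz : x < z) => hz.ne')
      exact h2.eventually (gt_mem_nhds (hK.trans_lt hr))
    have hneg : Tendsto (fun z : ℝ => -z) (𝓝[>] x) (𝓝[<] (-x)) := by
      refine tendsto_nhdsWithin_iff.2 ⟨(continuous_neg.tendsto x).mono_left nhdsWithin_le_nhds, ?_⟩
      filter_upwards [self_mem_nhdsWithin] with z hz
      simpa using hz
    refine Eventually.frequently ?_
    filter_upwards [h1, hneg.eventually hle, self_mem_nhdsWithin] with z hz hz2 hxz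
    refine lt_of_le_of_lt ?_ hz
    rw [slope_def_field, slope_def_field, hLF]
    have : 0 < z - x := sub_pos.2 hxz
    gcongr

/-- Differentiation under the integral for a smooth family of compactly supported functions
multiplied by a bounded weight `σ` that is only measurable and does not depend on time. -/
lemma hasDerivAt_integral_compact {N : ℕ} {T R : ℝ} {σ : Euc N → ℝ} {g g' : Euc N → ℝ → ℝ}
    (hσ : Measurable σ) (hσ1 : ∀ y, |σ y| ≤ 1)
    (hd : ∀ y, ∀ s ∈ Set.Ioo 0 T, HasDerivAt (g y) (g' y s) s)
    (hg : ContinuousOn (fun p : Euc N × ℝ => g p.1 p.2) (Set.univ ×ˢ Set.Ioo 0 T))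
    (hg' : ContinuousOn (fun p : Euc N × ℝ => g' p.1 p.2) (Set.univ ×ˢ Set.Ioo 0 T))
    (sg : ∀ y s, R < ‖y‖ → g y s = 0) (sg' : ∀ y s, R < ‖y‖ → g' y s = 0)
    {t : ℝ} (ht : t ∈ Set.Ioo 0 T) :
    HasDerivAt (fun s => ∫ y, σ y * g y s) (∫ y, σ y * g' y t) t := by
  have slice : ∀ {k : Euc N → ℝ → ℝ},
      ContinuousOn (fun p : Euc N × ℝ => k p.1 p.2) (Set.univ ×ˢ Set.Ioo 0 T) →
      ∀ s ∈ Set.Ioo 0 T, Continuous fun y => k y s := fun hk s hs =>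
    hk.comp_continuous (f := fun y : Euc N => (y, s)) (by fun_prop) fun y => ⟨trivial, hs⟩
  obtain ⟨c, d, hcd, hcdT⟩ : ∃ c d, t ∈ Set.Ioo c d ∧ Set.Icc c d ⊆ Set.Ioo 0 T := by
    refine ⟨t / 2, (t + T) / 2, ⟨by linarith [ht.1], by linarith [ht.2]⟩, fun s hs => ⟨?_, ?_⟩⟩
    · linarith [ht.1, hs.1]
    · linarith [ht.2, hs.2]
  have hK : IsCompact (Metric.closedBall (0 : Euc N) R ×ˢ Set.Icc c d) :=
    (isCompact_closedBall _ _).prod isCompact_Icc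
  obtain ⟨M, hM⟩ := hK.exists_bound_of_continuousOn
    (hg'.mono (Set.prod_mono (Set.subset_univ _) hcdT))
  have supp : HasCompactSupport fun y => g y t :=
    HasCompactSupport.intro (isCompact_closedBall (0 : Euc N) R) fun y hy => sg y t (by
      simpa using hy)
  refine (hasDerivAt_integral_of_dominated_loc_of_deriv_le (F := fun s y => σ y * g y s)
    (F' := fun s y => σ y * g' y s) (s := Set.Ioo c d)
    (bound := (Metric.closedBall (0 : Euc N) R).indicator fun _ => M)
    (Ioo_mem_nhds hcd.1 hcd.2) ?_ ?_ ?_ ?_ ?_ ?_).2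
  · filter_upwards [Ioo_mem_nhds ht.1 ht.2] with s hs
    exact (hσ.mul (slice hg s hs).measurable).aestronglyMeasurable
  · exact ((slice hg t ht).integrable_of_hasCompactSupport supp).bdd_mul (c := 1)
      hσ.aestronglyMeasurable (Eventually.of_forall hσ1)
  · exact (hσ.mul (slice hg' t ht).measurable).aestronglyMeasurable
  · refine Eventually.of_forall fun y s hs => ?_
    by_cases hy : y ∈ Metric.closedBall (0 : Euc N) R
    · rw [Set.indicator_of_mem hy, norm_mul]
      refine (mul_le_of_le_one_left (norm_nonneg _) (hσ1 y)).trans ?_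
      exact hM (y, s) ⟨hy, Set.Ioo_subset_Icc_self hs⟩
    · rw [Set.indicator_of_notMem hy, sg' y s (by simpa using hy)]; simp
  · exact (integrable_indicator_iff measurableSet_closedBall).2
      (integrableOn_const measure_closedBall_lt_top.ne)
  · refine Eventually.of_forall fun y s hs => ?_
    exact (hd y s (hcdT (Set.Ioo_subset_Icc_self hs))).const_mul _

/-! ### The time-dependent weight -/

lemma contDiff_slice {N : ℕ} {T : ℝ} {u : Euc N → ℝ → ℝ}
    (hu : ContDiffOn ℝ (⊤ : ℕ∞) (fun p : Euc N × ℝ => u p.1 p.2) (Set.univ ×ˢ Set.Ioo (0:ℝ) T))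
    {t : ℝ} (ht : t ∈ Set.Ioo 0 T) : ContDiff ℝ 2 fun y => u y t := by
  have h1 : ContDiff ℝ (⊤ : ℕ∞) fun y : Euc N => (y, t) := contDiff_id.prodMk contDiff_const
  have := hu.comp_contDiff h1 fun y => ⟨trivial, ht⟩
  exact contDiff_infty.1 this 2

/-- The time derivative of `u`, read off the full derivative so that its joint continuity is
immediate. -/
def timeD {N : ℕ} (u : Euc N → ℝ → ℝ) (y : Euc N) (t : ℝ) : ℝ :=
  fderiv ℝ (fun p : Euc N × ℝ => u p.1 p.2) (y, t) (0, 1)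

lemma isOpen_strip {N : ℕ} {T : ℝ} :
    IsOpen ((Set.univ : Set (Euc N)) ×ˢ Set.Ioo (0:ℝ) T) := isOpen_univ.prod isOpen_Ioo

lemma hasDerivAt_timeD {N : ℕ} {T : ℝ} {u : Euc N → ℝ → ℝ}
    (hu : ContDiffOn ℝ (⊤ : ℕ∞) (fun p : Euc N × ℝ => u p.1 p.2) (Set.univ ×ˢ Set.Ioo (0:ℝ) T))
    (y : Euc N) {t : ℝ} (ht : t ∈ Set.Ioo 0 T) : HasDerivAt (u y) (timeD u y t) t := by
  have h1 : DifferentiableAt ℝ (fun p : Euc N × ℝ => u p.1 p.2) (y, t) :=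
    (hu.contDiffAt (isOpen_strip.mem_nhds ⟨trivial, ht⟩)).differentiableAt (by simp)
  have h2 : HasDerivAt (fun s : ℝ => (y, s)) ((0 : Euc N), (1 : ℝ)) t :=
    (hasDerivAt_const t y).prodMk (hasDerivAt_id t)
  exact h1.hasFDerivAt.comp_hasDerivAt t h2

lemma continuousOn_timeD {N : ℕ} {T : ℝ} {u : Euc N → ℝ → ℝ}
    (hu : ContDiffOn ℝ (⊤ : ℕ∞) (fun p : Euc N × ℝ => u p.1 p.2) (Set.univ ×ˢ Set.Ioo (0:ℝ) T)) :
    ContinuousOn (fun p : Euc N × ℝ => timeD u p.1 p.2) (Set.univ ×ˢ Set.Ioo (0:ℝ) T) :=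
  (hu.continuousOn_fderiv_of_isOpen isOpen_strip (by simp)).clm_apply continuousOn_const

/-- The exponent `p` for which `B̃_k^α` is a multiple of `(1 + ‖x‖²/k)^(-p)`. -/
def pC (N : ℕ) (m : ℝ) : ℝ := ((N : ℝ) - 2) / 2 - 1 / (1 - m)

/-- The truncated weight at exponent `p + δ`, in the original variables, with a decaying factor
`exp(-lam t)` and a cutoff at `‖y‖² = r`. -/
def psi (N : ℕ) (m k T δ lam r : ℝ) (y : Euc N) (t : ℝ) : ℝ :=
  Real.exp (-lam * t) * radW (kap N m k T t) (pC N m + δ) r (‖y‖ ^ 2)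

/-- The time derivative of `psi`. -/
def psi' (N : ℕ) (m k T δ lam r : ℝ) (y : Euc N) (t : ℝ) : ℝ :=
  Real.exp (-lam * t) * (2 * bC N m * (pC N m + δ) / (T - t) * (kap N m k T t * ‖y‖ ^ 2)
    * (1 + kap N m k T t * ‖y‖ ^ 2) ^ (-(pC N m + δ) - 1) * (max 0 (1 - ‖y‖ ^ 2 / r)) ^ 3
    - lam * radW (kap N m k T t) (pC N m + δ) r (‖y‖ ^ 2))

lemma kap_pos {N : ℕ} {m k T t : ℝ} (hk : 0 < k) (ht : t < T) : 0 < kap N m k T t :=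
  div_pos (Real.rpow_pos_of_pos (by linarith) _) hk

lemma hasDerivAt_psi {N : ℕ} {m k T δ lam r : ℝ} (hk : 0 < k) (y : Euc N) {t : ℝ} (ht : t < T) :
    HasDerivAt (psi N m k T δ lam r y) (psi' N m k T δ lam r y t) t := by
  have hs : 0 < T - t := by linarith
  have hκ : HasDerivAt (kap N m k T) (-(2 * bC N m / (T - t) * kap N m k T t)) t := by
    have h1 : HasDerivAt (fun t => T - t) (-1) t := by simpa using (hasDerivAt_id t).const_sub T
    have := (h1.rpow_const (p := 2 * bC N m) (Or.inl hs.ne')).div_const k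
    refine this.congr_deriv ?_
    rw [kap, Real.rpow_sub_one hs.ne']; ring
  have hQ : 0 < 1 + kap N m k T t * ‖y‖ ^ 2 := by
    have := kap_pos (N := N) (m := m) hk ht; positivity
  have h2 := (((hκ.mul_const (‖y‖ ^ 2)).const_add 1).rpow_const (p := -(pC N m + δ))
    (Or.inl hQ.ne')).mul_const ((max 0 (1 - ‖y‖ ^ 2 / r)) ^ 3)
  have h3 : HasDerivAt (fun t => Real.exp (-lam * t)) (-lam * Real.exp (-lam * t)) t := by
    have := ((hasDerivAt_id t).const_mul (-lam)).exp
    refine this.congr_deriv ?_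
    simp; ring
  refine (h3.mul h2).congr_deriv ?_
  simp only [psi', radW]; ring

lemma continuousOn_kap {N : ℕ} {m k T : ℝ} : ContinuousOn (kap N m k T) (Set.Iio T) := by
  unfold kap
  refine ContinuousOn.div_const (ContinuousOn.rpow_const (by fun_prop) fun t ht => Or.inl ?_) _
  have : t < T := ht
  linarith

lemma continuousOn_Q {N : ℕ} {m k T : ℝ} : ContinuousOn
    (fun p : Euc N × ℝ => 1 + kap N m k T p.2 * ‖p.1‖ ^ 2) (Set.univ ×ˢ Set.Iio T) :=
  continuousOn_const.add ((continuousOn_kap.comp continuousOn_snd fun p hp => hp.2).mul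
    (by fun_prop))

lemma continuousOn_Q_rpow {N : ℕ} {m k T : ℝ} (hk : 0 < k) (a : ℝ) : ContinuousOn
    (fun p : Euc N × ℝ => (1 + kap N m k T p.2 * ‖p.1‖ ^ 2) ^ a) (Set.univ ×ˢ Set.Iio T) :=
  continuousOn_Q.rpow_const fun p hp => Or.inl (by
    have := kap_pos (N := N) (m := m) hk hp.2
    positivity)

lemma continuousOn_psi {N : ℕ} {m k T δ lam r : ℝ} (hk : 0 < k) : ContinuousOn
    (fun p : Euc N × ℝ => psi N m k T δ lam r p.1 p.2) (Set.univ ×ˢ Set.Iio T) := by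
  unfold psi radW
  have := continuousOn_Q_rpow (N := N) (m := m) (T := T) hk (-(pC N m + δ))
  have h2 : ContinuousOn (fun p : Euc N × ℝ => Real.exp (-lam * p.2)) (Set.univ ×ˢ Set.Iio T) := by
    fun_prop
  exact h2.mul (this.mul (by fun_prop))

lemma continuousOn_psi' {N : ℕ} {m k T δ lam r : ℝ} (hk : 0 < k) : ContinuousOn
    (fun p : Euc N × ℝ => psi' N m k T δ lam r p.1 p.2) (Set.univ ×ˢ Set.Iio T) := by
  unfold psi' radW
  have h0 := continuousOn_Q_rpow (N := N) (m := m) (T := T) hk (-(pC N m + δ))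
  have h1 := continuousOn_Q_rpow (N := N) (m := m) (T := T) hk (-(pC N m + δ) - 1)
  have h2 : ContinuousOn (fun p : Euc N × ℝ => Real.exp (-lam * p.2)) (Set.univ ×ˢ Set.Iio T) := by
    fun_prop
  have h3 : ContinuousOn (fun p : Euc N × ℝ => kap N m k T p.2 * ‖p.1‖ ^ 2)
      (Set.univ ×ˢ Set.Iio T) :=
    (continuousOn_kap.comp continuousOn_snd fun p hp => hp.2).mul (by fun_prop)
  have h4 : ContinuousOn (fun p : Euc N × ℝ => 2 * bC N m * (pC N m + δ) / (T - p.2))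
      (Set.univ ×ˢ Set.Iio T) := ContinuousOn.div continuousOn_const (by fun_prop) fun p hp => by
    have : p.2 < T := hp.2
    linarith
  have h5 : ContinuousOn (fun p : Euc N × ℝ => (max 0 (1 - ‖p.1‖ ^ 2 / r)) ^ 3)
      (Set.univ ×ˢ Set.Iio T) := by fun_prop
  exact h2.mul ((((h4.mul h3).mul h1).mul h5).sub (continuousOn_const.mul (h0.mul h5)))

lemma cut_eq_zero {r ρ : ℝ} (hr : 0 < r) (h : r ≤ ρ) : max 0 (1 - ρ / r) = 0 :=
  max_eq_left (by rw [sub_nonpos, le_div_iff₀ hr]; linarith)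

lemma radW_eq_zero {κ q r ρ : ℝ} (hr : 0 < r) (h : r ≤ ρ) : radW κ q r ρ = 0 := by
  simp [radW, cut_eq_zero hr h]

lemma psi_eq_zero {N : ℕ} {m k T δ lam r t : ℝ} {y : Euc N} (hr : 0 < r) (h : √r < ‖y‖) :
    psi N m k T δ lam r y t = 0 := by
  rw [psi, radW_eq_zero hr (Real.lt_sq_of_sqrt_lt h).le, mul_zero]

lemma psi'_eq_zero {N : ℕ} {m k T δ lam r t : ℝ} {y : Euc N} (hr : 0 < r) (h : √r < ‖y‖) :
    psi' N m k T δ lam r y t = 0 := by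
  have h := (Real.lt_sq_of_sqrt_lt h).le
  rw [psi', radW_eq_zero hr h, cut_eq_zero hr h]; simp

lemma psi_nonneg {N : ℕ} {m k T δ lam r t : ℝ} (hk : 0 < k) (ht : t < T) (y : Euc N) :
    0 ≤ psi N m k T δ lam r y t := by
  have := kap_pos (N := N) (m := m) hk ht
  unfold psi radW
  have : 0 ≤ max 0 (1 - ‖y‖ ^ 2 / r) := le_max_left _ _
  positivity

/-! ### Trapped pairs of solutions -/

/-- Two positive smooth solutions on the strip `0 < t < T`, continuous up to `t = 0` and trapped
between two Barenblatt solutions, together with the admissible range of parameters. -/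
structure TrapPair (N : ℕ) (m T k₁ k₂ : ℝ) (u v : Euc N → ℝ → ℝ) : Prop where
  hN : 4 < N
  hm0 : 0 < m
  hm1 : m < 1
  hb : 0 < bC N m
  hp : 0 < pC N m
  hT : 0 < T
  hk2 : 0 < k₂
  hk12 : k₂ < k₁
  su : ContDiffOn ℝ (⊤ : ℕ∞) (fun p : Euc N × ℝ => u p.1 p.2) (Set.univ ×ˢ Set.Ioo (0:ℝ) T)
  sv : ContDiffOn ℝ (⊤ : ℕ∞) (fun p : Euc N × ℝ => v p.1 p.2) (Set.univ ×ˢ Set.Ioo (0:ℝ) T)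
  cu : ContinuousOn (fun p : Euc N × ℝ => u p.1 p.2) (Set.univ ×ˢ Set.Ico (0:ℝ) T)
  cv : ContinuousOn (fun p : Euc N × ℝ => v p.1 p.2) (Set.univ ×ˢ Set.Ico (0:ℝ) T)
  eu : ∀ x : Euc N, ∀ t ∈ Set.Ioo (0:ℝ) T, deriv (fun s => u x s) t = lapl (fun y => u y t ^ m) x
  ev : ∀ x : Euc N, ∀ t ∈ Set.Ioo (0:ℝ) T, deriv (fun s => v x s) t = lapl (fun y => v y t ^ m) x
  tu : ∀ x : Euc N, ∀ t ∈ Set.Ioo (0:ℝ) T, Bb N m T k₁ x t ≤ u x t ∧ u x t ≤ Bb N m T k₂ x t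
  tv : ∀ x : Euc N, ∀ t ∈ Set.Ioo (0:ℝ) T, Bb N m T k₁ x t ≤ v x t ∧ v x t ≤ Bb N m T k₂ x t

/-- The constant in the bound `|u^m - v^m| ≤ zC · (1 + κ‖x‖²)^(-1/(1-m))`. -/
def zC (N : ℕ) (m T k₁ k₂ : ℝ) : ℝ :=
  (Cst N m * T ^ (1 + 2 * bC N m)) ^ (m / (1 - m)) * (m / (1 - m)) * (k₁ - k₂)
        * k₂ ^ (-(m / (1 - m)) - 1)

namespace TrapPair

variable {N : ℕ} {m T k₁ k₂ : ℝ} {u v : Euc N → ℝ → ℝ}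

lemma pos_u (H : TrapPair N m T k₁ k₂ u v) (x : Euc N) {t : ℝ} (ht : t ∈ Set.Ioo 0 T) :
    0 < u x t :=
  (Bb_pos (by have := H.hN; omega) (H.hk2.trans H.hk12) H.hm0 H.hm1 H.hb ht.2).trans_le
    (H.tu x t ht).1

lemma pos_v (H : TrapPair N m T k₁ k₂ u v) (x : Euc N) {t : ℝ} (ht : t ∈ Set.Ioo 0 T) :
    0 < v x t :=
  (Bb_pos (by have := H.hN; omega) (H.hk2.trans H.hk12) H.hm0 H.hm1 H.hb ht.2).trans_le
    (H.tv x t ht).1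

/-- The upper barrier `B_{k₂}` makes the diffusion at least as fast as that of `B_{k₂}`. -/
lemma z_ge (H : TrapPair N m T k₁ k₂ u v) (x : Euc N) {t : ℝ} (ht : t ∈ Set.Ioo 0 T) :
    (1 - m) * bC N m / (2 * (T - t) * kap N m k₂ T t) * (1 + kap N m k₂ T t * ‖x‖ ^ 2)
      * |u x t - v x t| ≤ |u x t ^ m - v x t ^ m| := by
  rw [← Bb_rpow_sub_one (by have := H.hN; omega) H.hk2 H.hm0 H.hm1 H.hb ht.2]
  exact abs_rpow_sub_ge H.hm0 H.hm1 (H.pos_u x ht) (H.pos_v x ht) (H.tu x t ht).2 (H.tv x t ht).2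

/-- The two barriers make `u^m - v^m` decay like `‖x‖^(-2/(1-m))` at infinity. -/
lemma z_le (H : TrapPair N m T k₁ k₂ u v) (x : Euc N) {t : ℝ} (ht : t ∈ Set.Ioo 0 T) :
    |u x t ^ m - v x t ^ m| ≤
      zC N m T k₁ k₂ * (1 + kap N m k₂ T t * ‖x‖ ^ 2) ^ (-(1 / (1 - m))) := by
  have hN0 : 0 < N := by have := H.hN; omega
  refine le_trans ?_ (Bb_rpow_sub_le hN0 H.hk2 H.hk12 H.hm0 H.hm1 H.hb ht.2 ht.1.le)
  have hB1 := Bb_pos (x := x) hN0 (H.hk2.trans H.hk12) H.hm0 H.hm1 H.hb ht.2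
  have a := Real.rpow_le_rpow hB1.le (H.tu x t ht).1 H.hm0.le
  have b := Real.rpow_le_rpow hB1.le (H.tv x t ht).1 H.hm0.le
  have c := Real.rpow_le_rpow (H.pos_u x ht).le (H.tu x t ht).2 H.hm0.le
  have d := Real.rpow_le_rpow (H.pos_v x ht).le (H.tv x t ht).2 H.hm0.le
  rw [abs_le]; constructor <;> linarith

lemma zC_pos (H : TrapPair N m T k₁ k₂ u v) : 0 < zC N m T k₁ k₂ := by
  have h1m : 0 < 1 - m := by linarith [H.hm1]
  have := H.hm0
  have := H.hk2
  have := H.hT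
  have hb := H.hb
  have hC : 0 < Cst N m := by rw [Cst_eq hb]; positivity
  have : 0 < k₁ - k₂ := by linarith [H.hk12]
  unfold zC; positivity

end TrapPair

/-- The contribution of the cutoff is dominated by an integrable function times a factor that
tends to `0` as `r → ∞`. -/
lemma err_le {N : ℕ} {m K Z Q c δ ρ r : ℝ} (hK : 0 < K)
    (hZ : Z ≤ K * Q ^ (-(1 / (1 - m)))) (hc : 0 < c) (hρ : 0 ≤ ρ) (hQ : c * (1 + ρ) ≤ Q)
    (hN : 4 < N) (hp : 0 < pC N m) (hδ : 0 < δ) (hδ1 : δ ≤ 1) (hr : 0 < r) :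
    Z * (24 * (pC N m + δ + 1) / r * Q ^ (-(pC N m + δ)) * (if ρ < r then 1 else 0)) ≤
      K * 24 * (pC N m + δ + 1) * c ^ (-(((N : ℝ) - 2) / 2 + δ)) * ((1 + r) ^ (1 - δ / 2) / r)
        * (1 + ρ) ^ (-((N : ℝ) + δ) / 2) := by
  have h1ρ : 0 < 1 + ρ := by linarith
  have hQ0 : 0 < Q := lt_of_lt_of_le (by positivity) hQ
  have hN' : (4 : ℝ) < N := by exact_mod_cast hN
  split_ifs with h
  · have e1 : Q ^ (-(1 / (1 - m))) * Q ^ (-(pC N m + δ)) = Q ^ (-(((N : ℝ) - 2) / 2 + δ)) := by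
      rw [← Real.rpow_add hQ0]; congr 1; unfold pC; ring
    have e2 : Q ^ (-(((N : ℝ) - 2) / 2 + δ)) ≤ (c * (1 + ρ)) ^ (-(((N : ℝ) - 2) / 2 + δ)) :=
      Real.rpow_le_rpow_of_nonpos (by positivity) hQ (by linarith)
    -- the integrable power is split off; what is left grows like `r^(1 - δ/2)`, slower than `r`
    have e3 : (1 + ρ) ^ (-(((N : ℝ) - 2) / 2 + δ))
        = (1 + ρ) ^ (1 - δ / 2) * (1 + ρ) ^ (-((N : ℝ) + δ) / 2) := by
      rw [← Real.rpow_add h1ρ]; congr 1; ring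
    have e4 : (1 + ρ) ^ (1 - δ / 2) ≤ (1 + r) ^ (1 - δ / 2) :=
      Real.rpow_le_rpow h1ρ.le (by linarith) (by linarith)
    rw [Real.mul_rpow hc.le h1ρ.le, e3] at e2
    calc _ ≤ K * Q ^ (-(1 / (1 - m))) * (24 * (pC N m + δ + 1) / r * Q ^ (-(pC N m + δ)) * 1) := by
          gcongr
      _ = K * 24 * (pC N m + δ + 1) / r * Q ^ (-(((N : ℝ) - 2) / 2 + δ)) := by rw [← e1]; ring
      _ ≤ K * 24 * (pC N m + δ + 1) / r * (c ^ (-(((N : ℝ) - 2) / 2 + δ)) *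
            ((1 + ρ) ^ (1 - δ / 2) * (1 + ρ) ^ (-((N : ℝ) + δ) / 2))) := by gcongr
      _ ≤ K * 24 * (pC N m + δ + 1) / r * (c ^ (-(((N : ℝ) - 2) / 2 + δ)) *
            ((1 + r) ^ (1 - δ / 2) * (1 + ρ) ^ (-((N : ℝ) + δ) / 2))) := by gcongr
      _ = _ := by ring
  · simp only [mul_zero]; positivity

/-! ### Differentiating the truncated norm -/

lemma integrable_sign_mul {N : ℕ} {σ g : Euc N → ℝ} {R : ℝ} (hσ : Measurable σ)
    (hσ1 : ∀ y, |σ y| ≤ 1) (hg : Continuous g) (sg : ∀ y, R < ‖y‖ → g y = 0) :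
    Integrable fun y => σ y * g y := by
  have hc : HasCompactSupport g := HasCompactSupport.intro (isCompact_closedBall (0 : Euc N) R)
    fun y hy => sg y (by simpa using hy)
  exact (hg.integrable_of_hasCompactSupport hc).bdd_mul (c := 1) hσ.aestronglyMeasurable
    (Eventually.of_forall fun y => by simpa using hσ1 y)

lemma continuous_one_add_rpow {N : ℕ} {κ : ℝ} (hκ : 0 < κ) (a : ℝ) :
    Continuous fun y : Euc N => (1 + κ * ‖y‖ ^ 2) ^ a :=
  Continuous.rpow_const (by fun_prop) fun y => Or.inl (by positivity)

lemma continuous_radW {N : ℕ} {κ q r : ℝ} (hκ : 0 < κ) :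
    Continuous fun y : Euc N => radW κ q r (‖y‖ ^ 2) := by
  have := continuous_one_add_rpow (N := N) hκ (-q)
  unfold radW; fun_prop

lemma continuous_radW1 {N : ℕ} {κ q r : ℝ} (hκ : 0 < κ) :
    Continuous fun y : Euc N => radW1 κ q r (‖y‖ ^ 2) := by
  have := continuous_one_add_rpow (N := N) hκ (-q)
  have := continuous_one_add_rpow (N := N) hκ (-q - 1)
  unfold radW1; fun_prop

lemma continuous_radW2 {N : ℕ} {κ q r : ℝ} (hκ : 0 < κ) :
    Continuous fun y : Euc N => radW2 κ q r (‖y‖ ^ 2) := by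
  have := continuous_one_add_rpow (N := N) hκ (-q)
  have := continuous_one_add_rpow (N := N) hκ (-q - 1)
  have := continuous_one_add_rpow (N := N) hκ (-q - 2)
  unfold radW2; fun_prop

lemma radW1_eq_zero {κ q r ρ : ℝ} (hr : 0 < r) (h : r ≤ ρ) : radW1 κ q r ρ = 0 := by
  simp [radW1, cut_eq_zero hr h]

lemma radW2_eq_zero {κ q r ρ : ℝ} (hr : 0 < r) (h : r ≤ ρ) : radW2 κ q r ρ = 0 := by
  simp [radW2, cut_eq_zero hr h]

/-- The Japanese-bracket majorant of the cutoff error; integrable for `δ > 0`. -/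
def tailC (N : ℕ) (δ : ℝ) : ℝ := ∫ y : Euc N, (1 + ‖y‖ ^ 2) ^ (-((N : ℝ) + δ) / 2)

lemma integrable_tail {N : ℕ} {δ : ℝ} (hδ : 0 < δ) :
    Integrable fun y : Euc N => (1 + ‖y‖ ^ 2) ^ (-((N : ℝ) + δ) / 2) :=
  integrable_rpow_neg_one_add_norm_sq (by simp [hδ])

/-- Density of the dissipation that makes the weighted norm strictly decrease. -/
def diss (N : ℕ) (m k T δ lam r : ℝ) (w : Euc N → ℝ → ℝ) (y : Euc N) (t : ℝ) : ℝ :=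
  Real.exp (-lam * t) * (bC N m * (pC N m + δ) * (1 - m) * N / (T - t)
    * (1 + kap N m k T t * ‖y‖ ^ 2) ^ (-(pC N m + δ) - 1) * |w y t|
    * (max 0 (1 - ‖y‖ ^ 2 / r)) ^ 3)

lemma integrable_diss {N : ℕ} {m k T δ lam r t : ℝ} {w : Euc N → ℝ → ℝ} (hr : 0 < r) (hk : 0 < k)
    (ht : t < T) (cw : Continuous fun y => w y t) :
    Integrable fun y => diss N m k T δ lam r w y t := by
  have hκ := kap_pos (N := N) (m := m) hk ht
  refine Continuous.integrable_of_hasCompactSupport ?_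
    (HasCompactSupport.intro (isCompact_closedBall (0 : Euc N) (√r)) fun y hy => ?_)
  · have := continuous_one_add_rpow (N := N) hκ (-(pC N m + δ) - 1)
    unfold diss
    fun_prop
  · have hy : √r < ‖y‖ := by simpa using hy
    rw [diss, cut_eq_zero hr (Real.lt_sq_of_sqrt_lt hy).le]; simp

/-- Coefficient of `tailC` in the cutoff error. -/
def errD (N : ℕ) (m K c δ r : ℝ) : ℝ :=
  K * 24 * (pC N m + δ + 1) * c ^ (-(((N : ℝ) - 2) / 2 + δ)) * ((1 + r) ^ (1 - δ / 2) / r)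

namespace TrapPair

variable {N : ℕ} {m T k₁ k₂ : ℝ} {u v : Euc N → ℝ → ℝ}

/-- The pointwise differential inequality, integrated: the hypotheses are those available at a
fixed time `t`. -/
lemma integral_le (H : TrapPair N m T k₁ k₂ u v) {δ lam r t c : ℝ} (hδ : 0 < δ) (hδ1 : δ ≤ 1)
    (hr : 0 < r) (ht : t ∈ Set.Ioo 0 T)
    (hlam : 2 * bC N m * (pC N m + δ) * (1 - m) * δ / (T - t) ≤ lam) (hlam0 : 0 ≤ lam)
    (hc : 0 < c) (hc1 : c ≤ 1) (hck : c ≤ kap N m k₂ T t) :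
    ∫ y, Real.sign (u y t - v y t) * ((timeD u y t - timeD v y t) * psi N m k₂ T δ lam r y t
        + (u y t - v y t) * psi' N m k₂ T δ lam r y t) ≤
      -(∫ y, diss N m k₂ T δ lam r (fun y t => u y t - v y t) y t)
        + errD N m (zC N m T k₁ k₂) c δ r * tailC N δ := by
  have hm0 := H.hm0
  have hm1 := H.hm1
  have h1m : 0 < 1 - m := by linarith
  have hs : 0 < T - t := by linarith [ht.2]
  have hq : 0 < pC N m + δ := by linarith [H.hp]
  have hκ := kap_pos (N := N) (m := m) H.hk2 ht.2
  set κ := kap N m k₂ T t with hκdef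
  set q := pC N m + δ with hqdef
  have cw : Continuous fun y => u y t - v y t :=
    ((contDiff_slice H.su ht).sub (contDiff_slice H.sv ht)).continuous
  have cum : ContDiff ℝ 2 fun y => u y t ^ m :=
    (contDiff_slice H.su ht).rpow_const_of_ne fun y => (H.pos_u y ht).ne'
  have cvm : ContDiff ℝ 2 fun y => v y t ^ m :=
    (contDiff_slice H.sv ht).rpow_const_of_ne fun y => (H.pos_v y ht).ne'
  have cz : ContDiff ℝ 2 fun y => u y t ^ m - v y t ^ m := cum.sub cvm
  have hlz : ∀ y, timeD u y t - timeD v y t = lapl (fun y => u y t ^ m - v y t ^ m) y := by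
    intro y
    rw [lapl_sub cum cvm, ← H.eu y t ht, ← H.ev y t ht, (hasDerivAt_timeD H.su y ht).deriv,
      (hasDerivAt_timeD H.sv y ht).deriv]
  have hsg : ∀ y, Real.sign (u y t - v y t) = Real.sign (u y t ^ m - v y t ^ m) := fun y =>
    (sign_rpow_sub hm0 (H.pos_u y ht) (H.pos_v y ht)).symm
  have cslice : Continuous fun y : Euc N => (y, t) := by fun_prop
  have clz : Continuous fun y => lapl (fun y => u y t ^ m - v y t ^ m) y := by
    simp_rw [← hlz]
    exact ((continuousOn_timeD H.su).comp_continuous cslice fun y => ⟨trivial, ht⟩).sub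
      ((continuousOn_timeD H.sv).comp_continuous cslice fun y => ⟨trivial, ht⟩)
  have cpsi' : Continuous fun y => psi' N m k₂ T δ lam r y t :=
    (continuousOn_psi' H.hk2).comp_continuous cslice fun y => ⟨trivial, ht.2⟩
  have hmσ : Measurable fun y => Real.sign (u y t ^ m - v y t ^ m) :=
    measurable_realSign.comp cz.continuous.measurable
  have big : ∀ {y : Euc N}, √r < ‖y‖ → r ≤ ‖y‖ ^ 2 := fun h => (Real.lt_sq_of_sqrt_lt h).le
  have cpt : ∀ {g : Euc N → ℝ}, Continuous g → (∀ y, √r < ‖y‖ → g y = 0) → Integrable g :=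
    fun {g} hg h0 => hg.integrable_of_hasCompactSupport
      (HasCompactSupport.intro (isCompact_closedBall (0 : Euc N) (√r))
        fun y hy => h0 y (by simpa using hy))
  have I1 : Integrable fun y => Real.sign (u y t ^ m - v y t ^ m)
      * (lapl (fun y => u y t ^ m - v y t ^ m) y * radW κ q r (‖y‖ ^ 2)) :=
    integrable_sign_mul (R := √r) hmσ (fun y => abs_realSign_le _) (clz.mul (continuous_radW hκ))
      fun y hy => by rw [radW_eq_zero hr (big hy), mul_zero]
  have I2 : Integrable fun y => |u y t - v y t| * psi' N m k₂ T δ lam r y t :=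
    cpt (cw.abs.mul cpsi') fun y hy => by rw [psi'_eq_zero hr hy, mul_zero]
  have I3 : Integrable fun y => |u y t ^ m - v y t ^ m|
      * (4 * ‖y‖ ^ 2 * radW2 κ q r (‖y‖ ^ 2) + 2 * N * radW1 κ q r (‖y‖ ^ 2)) := by
    refine cpt (cz.continuous.abs.mul ?_) fun y hy => ?_
    · have := continuous_radW1 (N := N) (q := q) (r := r) hκ
      have := continuous_radW2 (N := N) (q := q) (r := r) hκ
      fun_prop
    · rw [radW2_eq_zero hr (big hy), radW1_eq_zero hr (big hy)]; simp
  have I4 : Integrable fun y => diss N m k₂ T δ lam r (fun y t => u y t - v y t) y t :=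
    integrable_diss hr H.hk2 ht.2 cw
  have kato := kato_radial (r := r) cz (h := radW κ q r) (h1 := radW1 κ q r) (h2 := radW2 κ q r)
    (fun ρ hρ => hasDerivAt_radW (by positivity)) (fun ρ hρ => hasDerivAt_radW1 (by positivity))
    (by
      have hcont : ∀ a : ℝ, ContinuousOn (fun ρ : ℝ => (1 + κ * ρ) ^ a) (Set.Ici 0) := fun a =>
        ContinuousOn.rpow_const (by fun_prop) fun ρ hρ => Or.inl (by
          have : 0 ≤ ρ := hρ
          positivity)
      have := hcont (-q)
      have := hcont (-q - 1)
      have := hcont (-q - 2)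
      unfold radW2; fun_prop)
    (fun ρ => radW_eq_zero hr) (fun ρ => radW1_eq_zero hr) (fun ρ => radW2_eq_zero hr)
    (fun ρ hρ => by
      have : 0 ≤ max 0 (1 - ρ / r) := le_max_left _ _
      unfold radW; positivity)
  have he0 : 0 < Real.exp (-lam * t) := Real.exp_pos _
  have he1 : Real.exp (-lam * t) ≤ 1 := Real.exp_le_one_iff.2 (by nlinarith [ht.1])
  calc _ = ∫ y, (Real.exp (-lam * t) * (Real.sign (u y t ^ m - v y t ^ m)
            * (lapl (fun y => u y t ^ m - v y t ^ m) y * radW κ q r (‖y‖ ^ 2)))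
          + |u y t - v y t| * psi' N m k₂ T δ lam r y t) := by
        congr 1; ext y
        rw [← realSign_mul_self (u y t - v y t), hsg, hlz, psi]; ring
    _ = Real.exp (-lam * t) * (∫ y, Real.sign (u y t ^ m - v y t ^ m)
            * lapl (fun y => u y t ^ m - v y t ^ m) y * radW κ q r (‖y‖ ^ 2))
          + ∫ y, |u y t - v y t| * psi' N m k₂ T δ lam r y t := by
        rw [integral_add (I1.const_mul _) I2, integral_const_mul]
        simp only [mul_assoc]
    _ ≤ Real.exp (-lam * t) * (∫ y, |u y t ^ m - v y t ^ m|
            * (4 * ‖y‖ ^ 2 * radW2 κ q r (‖y‖ ^ 2) + 2 * N * radW1 κ q r (‖y‖ ^ 2)))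
          + ∫ y, |u y t - v y t| * psi' N m k₂ T δ lam r y t := by gcongr
    _ = ∫ y, (Real.exp (-lam * t) * (|u y t ^ m - v y t ^ m|
            * (4 * ‖y‖ ^ 2 * radW2 κ q r (‖y‖ ^ 2) + 2 * N * radW1 κ q r (‖y‖ ^ 2)))
          + |u y t - v y t| * psi' N m k₂ T δ lam r y t) := by
        rw [integral_add (I3.const_mul _) I2, integral_const_mul]
    _ ≤ ∫ y, (-diss N m k₂ T δ lam r (fun y t => u y t - v y t) y t
          + errD N m (zC N m T k₁ k₂) c δ r * (1 + ‖y‖ ^ 2) ^ (-((N : ℝ) + δ) / 2)) := by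
        refine integral_mono ((I3.const_mul _).add I2)
          (I4.neg.add ((integrable_tail hδ).const_mul _)) fun y => ?_
        have hρ : 0 ≤ ‖y‖ ^ 2 := by positivity
        have hZ0 := abs_nonneg (u y t ^ m - v y t ^ m)
        have hmq : (1 - m) * ((N : ℝ) - 2 * q - 2) = 2 - 2 * (1 - m) * δ := by
          rw [hqdef, pC]; field_simp; ring
        have hdq : 0 ≤ (N : ℝ) - 2 * q - 2 := by
          refine nonneg_of_mul_nonneg_right (?_ : 0 ≤ (1 - m) * ((N : ℝ) - 2 * q - 2)) h1m
          rw [hmq]; nlinarith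
        have p := pointwise_ineq (m := m) (δ := δ) (lam := lam) (W := |u y t - v y t|)
          (Z := |u y t ^ m - v y t ^ m|) (ρ := ‖y‖ ^ 2) (d := N) (b := bC N m) hκ hq hr hρ
          (Nat.cast_nonneg N) hs H.hb hmq hdq hlam hlam0 (abs_nonneg _) (H.z_ge y ht) hZ0
        have e := err_le (r := r) (δ := δ) (c := c) (ρ := ‖y‖ ^ 2) H.zC_pos (H.z_le y ht) hc hρ
          (by rw [← hκdef]; nlinarith) H.hN H.hp hδ hδ1 hr
        have hE : 0 ≤ errD N m (zC N m T k₁ k₂) c δ r * (1 + ‖y‖ ^ 2) ^ (-((N : ℝ) + δ) / 2) := by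
          have := H.zC_pos
          have := H.hp
          unfold errD; positivity
        have p' := mul_le_mul_of_nonneg_left (p.trans (add_le_add_right e _)) he0.le
        have : Real.exp (-lam * t) *
            (errD N m (zC N m T k₁ k₂) c δ r * (1 + ‖y‖ ^ 2) ^ (-((N : ℝ) + δ) / 2)) ≤
            errD N m (zC N m T k₁ k₂) c δ r * (1 + ‖y‖ ^ 2) ^ (-((N : ℝ) + δ) / 2) :=
          mul_le_of_le_one_left hE he1
        simp only [psi', diss, ← hκdef, ← hqdef]
        unfold errD at this ⊢
        linear_combination p' + this
    _ = _ := by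
        have := integral_add I4.neg ((integrable_tail hδ).const_mul (errD N m (zC N m T k₁ k₂) c δ r))
        simp only [Pi.neg_apply] at this
        rw [this, integral_neg, integral_const_mul, tailC]

/-- At each time the truncated weighted norm has a differentiable minorant touching it, obtained
by freezing the sign of `u - v`; its slope is controlled by `integral_le`. -/
lemma left_deriv (H : TrapPair N m T k₁ k₂ u v) {δ lam r t c : ℝ} (hδ : 0 < δ) (hδ1 : δ ≤ 1)
    (hr : 0 < r) (ht : t ∈ Set.Ioo 0 T)
    (hlam : 2 * bC N m * (pC N m + δ) * (1 - m) * δ / (T - t) ≤ lam) (hlam0 : 0 ≤ lam)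
    (hc : 0 < c) (hc1 : c ≤ 1) (hck : c ≤ kap N m k₂ T t) {F : ℝ → ℝ}
    (hF : ∀ s, F s = ∫ y, |u y s - v y s| * psi N m k₂ T δ lam r y s) :
    ∃ (L : ℝ → ℝ) (L' : ℝ), HasDerivAt L L' t ∧ L t = F t ∧ (∀ᶠ s in 𝓝[<] t, L s ≤ F s) ∧
      L' ≤ -(∫ y, diss N m k₂ T δ lam r (fun y t => u y t - v y t) y t)
        + errD N m (zC N m T k₁ k₂) c δ r * tailC N δ := by
  have sub : (Set.univ : Set (Euc N)) ×ˢ Set.Ioo 0 T ⊆ Set.univ ×ˢ Set.Iio T :=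
    Set.prod_mono le_rfl fun s hs => hs.2
  have cw : ContinuousOn (fun p : Euc N × ℝ => u p.1 p.2 - v p.1 p.2) (Set.univ ×ˢ Set.Ioo 0 T) :=
    H.su.continuousOn.sub H.sv.continuousOn
  have cpsi := (continuousOn_psi (N := N) (m := m) (T := T) (δ := δ) (lam := lam) (r := r)
    H.hk2).mono sub
  have cpsi' := (continuousOn_psi' (N := N) (m := m) (T := T) (δ := δ) (lam := lam) (r := r)
    H.hk2).mono sub
  have hmσ : Measurable fun y => Real.sign (u y t - v y t) :=
    measurable_realSign.comp
      ((contDiff_slice H.su ht).sub (contDiff_slice H.sv ht)).continuous.measurable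
  refine ⟨_, _, hasDerivAt_integral_compact (R := √r) (σ := fun y => Real.sign (u y t - v y t))
    (g := fun y s => (u y s - v y s) * psi N m k₂ T δ lam r y s)
    (g' := fun y s => (timeD u y s - timeD v y s) * psi N m k₂ T δ lam r y s
        + (u y s - v y s) * psi' N m k₂ T δ lam r y s) hmσ (fun y => abs_realSign_le _)
    (fun y s hs => ((hasDerivAt_timeD H.su y hs).sub (hasDerivAt_timeD H.sv y hs)).mul
      (hasDerivAt_psi H.hk2 y hs.2))
    (cw.mul cpsi)
    ((((continuousOn_timeD H.su).sub (continuousOn_timeD H.sv)).mul cpsi).add (cw.mul cpsi'))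
    (fun y s hy => by rw [psi_eq_zero hr hy, mul_zero])
    (fun y s hy => by rw [psi_eq_zero hr hy, psi'_eq_zero hr hy]; simp) ht, ?_, ?_,
    H.integral_le hδ hδ1 hr ht hlam hlam0 hc hc1 hck⟩
  · rw [hF]; congr 1; ext y; rw [← realSign_mul_self]; ring
  -- freezing the sign at time `t` can only lower the integral at other times
  · filter_upwards [Ioo_mem_nhdsLT ht.1] with s hs
    have hs : s ∈ Set.Ioo 0 T := ⟨hs.1, hs.2.trans ht.2⟩
    rw [hF]
    have cs : Continuous fun y : Euc N => (y, s) := by fun_prop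
    have c1 : Continuous fun y => u y s - v y s :=
      ((contDiff_slice H.su hs).sub (contDiff_slice H.sv hs)).continuous
    have c2 : Continuous fun y => psi N m k₂ T δ lam r y s :=
      cpsi.comp_continuous cs fun y => ⟨trivial, hs⟩
    refine integral_mono (integrable_sign_mul (R := √r) hmσ (fun y => abs_realSign_le _)
      (c1.mul c2) fun y hy => by rw [psi_eq_zero hr hy, mul_zero])
      ((c1.abs.mul c2).integrable_of_hasCompactSupport
        (HasCompactSupport.intro (isCompact_closedBall (0 : Euc N) (√r))
        fun y hy => ?_)) fun y => ?_
    · rw [Pi.mul_apply, psi_eq_zero hr (by simpa using hy), mul_zero]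
    · have hp := psi_nonneg (N := N) (m := m) (δ := δ) (lam := lam) (r := r) H.hk2 hs.2 y
      have : Real.sign (u y t - v y t) * (u y s - v y s) ≤ |u y s - v y s| := by
        refine (le_abs_self _).trans ?_
        rw [abs_mul]
        exact mul_le_of_le_one_left (abs_nonneg _) (abs_realSign_le _)
      rw [← mul_assoc]
      gcongr

end TrapPair

/-! ### Decrease of the truncated norms -/

/-- The truncated weighted norm of `u - v` at time `t`. -/
def FW (N : ℕ) (m k T δ lam r : ℝ) (u v : Euc N → ℝ → ℝ) (t : ℝ) : ℝ :=
  ∫ y, |u y t - v y t| * psi N m k T δ lam r y t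

lemma tendsto_errD {N : ℕ} {m K c δ : ℝ} (hδ : 0 < δ) :
    Tendsto (errD N m K c δ) atTop (𝓝 0) := by
  have h1 : Tendsto (fun r : ℝ => 1 + r) atTop atTop := tendsto_atTop_add_const_left _ _ tendsto_id
  have h2 : Tendsto (fun r : ℝ => (1 + r) ^ (-(δ / 2))) atTop (𝓝 0) :=
    (tendsto_rpow_neg_atTop (by positivity)).comp h1
  have h3 : Tendsto (fun r : ℝ => r⁻¹ + 1) atTop (𝓝 (0 + 1)) :=
    tendsto_inv_atTop_zero.add_const 1
  have h4 : Tendsto (fun r : ℝ => (1 + r) ^ (1 - δ / 2) / r) atTop (𝓝 0) := by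
    have := h3.mul h2
    rw [mul_zero] at this
    refine this.congr' ?_
    filter_upwards [eventually_gt_atTop 0] with r hr
    have : 1 - δ / 2 = -(δ / 2) + 1 := by ring
    rw [this, Real.rpow_add_one (by positivity)]
    field_simp
  have := h4.const_mul (K * 24 * (pC N m + δ + 1) * c ^ (-(((N : ℝ) - 2) / 2 + δ)))
  rw [mul_zero] at this
  exact this

lemma kap_anti {N : ℕ} {m k T s t : ℝ} (hb : 0 < bC N m) (hk : 0 < k) (hst : s ≤ t) (ht : t < T) :
    kap N m k T t ≤ kap N m k T s := by
  unfold kap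
  have : 0 ≤ T - t := by linarith
  gcongr

/-- Rate of the exponential factor for which `integral_le` holds on `(0, t₁]`. -/
def lamC (N : ℕ) (m T t₁ δ : ℝ) : ℝ := 2 * bC N m * (pC N m + δ) * (1 - m) * δ / (T - t₁)

namespace TrapPair

variable {N : ℕ} {m T k₁ k₂ : ℝ} {u v : Euc N → ℝ → ℝ}

lemma diss_nonneg (H : TrapPair N m T k₁ k₂ u v) {δ lam r t : ℝ} (hδ : 0 < δ) (ht : t < T)
    (w : Euc N → ℝ → ℝ) (y : Euc N) : 0 ≤ diss N m k₂ T δ lam r w y t := by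
  have := kap_pos (N := N) (m := m) H.hk2 ht
  have := H.hb
  have := H.hp
  have : 0 < 1 - m := by linarith [H.hm1]
  have : 0 < T - t := by linarith
  have : 0 ≤ max 0 (1 - ‖y‖ ^ 2 / r) := le_max_left _ _
  unfold diss
  positivity

lemma lamC_nonneg (H : TrapPair N m T k₁ k₂ u v) {t₁ δ : ℝ} (ht : t₁ < T) (hδ : 0 < δ) :
    0 ≤ lamC N m T t₁ δ := by
  have := H.hb
  have := H.hp
  have : 0 < 1 - m := by linarith [H.hm1]
  have : 0 < T - t₁ := by linarith
  unfold lamC; positivity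

lemma le_lamC (H : TrapPair N m T k₁ k₂ u v) {t t₁ δ : ℝ} (ht : t ≤ t₁) (ht₁ : t₁ < T)
    (hδ : 0 < δ) :
    2 * bC N m * (pC N m + δ) * (1 - m) * δ / (T - t) ≤ lamC N m T t₁ δ := by
  have := H.hb
  have := H.hp
  have : 0 < 1 - m := by linarith [H.hm1]
  have : 0 < T - t₁ := by linarith
  unfold lamC; gcongr

lemma lamC_mono (H : TrapPair N m T k₁ k₂ u v) {t₁ δ : ℝ} (ht : t₁ < T) (hδ : 0 < δ)
    (hδ1 : δ ≤ 1) : lamC N m T t₁ δ ≤ lamC N m T t₁ 1 := by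
  have := H.hb
  have := H.hp
  have : 0 < 1 - m := by linarith [H.hm1]
  have : 0 < T - t₁ := by linarith
  unfold lamC; gcongr

lemma continuousOn_FW (H : TrapPair N m T k₁ k₂ u v) {δ lam r t₁ : ℝ} (hr : 0 < r)
    (ht₁ : t₁ < T) : ContinuousOn (FW N m k₂ T δ lam r u v) (Set.Icc 0 t₁) := by
  refine continuousOn_integral_of_compact_support
    (f := fun t y => |u y t - v y t| * psi N m k₂ T δ lam r y t)
    (isCompact_closedBall (0 : Euc N) (√r)) ?_ fun t y _ hy => ?_
  · have cs : ContinuousOn (fun p : ℝ × Euc N => (p.2, p.1)) (Set.Icc 0 t₁ ×ˢ Set.univ) := by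
      fun_prop
    have m1 : Set.MapsTo (fun p : ℝ × Euc N => (p.2, p.1)) (Set.Icc 0 t₁ ×ˢ Set.univ)
        (Set.univ ×ˢ Set.Ico 0 T) := fun p hp => ⟨trivial, hp.1.1, hp.1.2.trans_lt ht₁⟩
    have m2 : Set.MapsTo (fun p : ℝ × Euc N => (p.2, p.1)) (Set.Icc 0 t₁ ×ˢ Set.univ)
        (Set.univ ×ˢ Set.Iio T) := fun p hp => ⟨trivial, hp.1.2.trans_lt ht₁⟩
    exact ((H.cu.comp cs m1).sub (H.cv.comp cs m1)).abs.mul ((continuousOn_psi H.hk2).comp cs m2)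
  · rw [psi_eq_zero hr (by simpa using hy), mul_zero]

/-- Where the initial data differ the dissipation is bounded below for a short time, uniformly in
the regularization parameters `δ` and `r`. -/
lemma diss_lower (H : TrapPair N m T k₁ k₂ u v) {x₀ : Euc N} (hx : u x₀ 0 ≠ v x₀ 0) {t₁ : ℝ}
    (ht1 : 0 < t₁) (ht1T : t₁ < T) :
    ∃ c₁ > 0, ∃ t₂, 0 < t₂ ∧ t₂ ≤ t₁ ∧ ∃ R₁ > 0, ∀ δ, 0 < δ → δ ≤ 1 → ∀ r, R₁ ≤ r →
      ∀ t ∈ Set.Ioc 0 t₂, c₁ ≤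
        ∫ y, diss N m k₂ T δ (lamC N m T t₁ δ) r (fun y t => u y t - v y t) y t := by
  have hb := H.hb
  have hp := H.hp
  have hk2 := H.hk2
  have h1m : 0 < 1 - m := by linarith [H.hm1]
  have hT := H.hT
  have hN0 : (0 : ℝ) < N := by have := H.hN; exact_mod_cast (by omega : 0 < N)
  have hw : 0 < |u x₀ 0 - v x₀ 0| := abs_pos.2 (sub_ne_zero.2 hx)
  set ε := |u x₀ 0 - v x₀ 0| / 2 with hε
  have hε0 : 0 < ε := by positivity
  have hev : ∀ᶠ p in 𝓝[Set.univ ×ˢ Set.Ico (0 : ℝ) T] (x₀, (0 : ℝ)), ε < |u p.1 p.2 - v p.1 p.2| := by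
    have c := ((H.cu.sub H.cv).abs (x₀, 0) ⟨trivial, le_rfl, hT⟩)
    exact c.tendsto.eventually (lt_mem_nhds (by simp only [Pi.sub_apply]; linarith))
  obtain ⟨η, hη, hηw⟩ := Metric.mem_nhdsWithin_iff.1 hev
  -- `M` bounds `‖y‖²` on the ball `B(x₀, η)`; for `r ≥ 2 * M` the cutoff is at least `1/2` there
  set M := (‖x₀‖ + η) ^ 2
  have hM : 0 < M := by positivity
  set Q₀ := 1 + kap N m k₂ T 0 * M
  have hκ0 := kap_pos (N := N) (m := m) hk2 hT
  have hQ0 : 1 ≤ Q₀ := by have := mul_pos hκ0 hM; simp only [Q₀]; linarith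
  set c₂ := Real.exp (-lamC N m T t₁ 1 * t₁) * (bC N m * pC N m * (1 - m) * N / T
    * Q₀ ^ (-(pC N m + 1) - 1) * ε * (1 / 2) ^ 3)
  have hc2 : 0 < c₂ := by positivity
  refine ⟨c₂ * volume.real (Metric.ball x₀ η),
    mul_pos hc2 (ENNReal.toReal_pos (Metric.measure_ball_pos _ _ hη).ne' measure_ball_lt_top.ne),
    min (η / 2) t₁, by positivity, min_le_right _ _, 2 * M, by positivity, ?_⟩
  intro δ hδ hδ1 r hr t ht
  have htη : t < η := by linarith [ht.2.trans (min_le_left _ _)]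
  have htt : t ≤ t₁ := ht.2.trans (min_le_right _ _)
  have htT : t ∈ Set.Ioo 0 T := ⟨ht.1, htt.trans_lt ht1T⟩
  have hr0 : 0 < r := by linarith
  have cw : Continuous fun y => u y t - v y t :=
    ((contDiff_slice H.su htT).sub (contDiff_slice H.sv htT)).continuous
  have hI := integrable_diss (N := N) (m := m) (δ := δ) (lam := lamC N m T t₁ δ) hr0 hk2 htT.2
    (w := fun y t => u y t - v y t) cw
  have hlow : ∀ y ∈ Metric.ball x₀ η,
      c₂ ≤ diss N m k₂ T δ (lamC N m T t₁ δ) r (fun y t => u y t - v y t) y t := by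
    intro y hy
    have hwy : ε < |u y t - v y t| := hηw (a := (y, t)) ⟨by
      rw [Metric.mem_ball, Prod.dist_eq]
      refine max_lt hy ?_
      rw [Real.dist_eq, sub_zero, abs_of_pos ht.1]; exact htη, trivial, ht.1.le, htT.2⟩
    have hyn : ‖y‖ ≤ ‖x₀‖ + η := by
      have : ‖y - x₀‖ < η := by simpa [dist_eq_norm] using hy
      have := norm_le_norm_add_norm_sub' y x₀
      linarith
    have hyM : ‖y‖ ^ 2 ≤ M := by simp only [M]; gcongr
    have hκt := kap_pos (N := N) (m := m) hk2 htT.2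
    have hκ := kap_anti (N := N) (m := m) hb hk2 ht.1.le htT.2
    have hQ1 : 1 ≤ 1 + kap N m k₂ T t * ‖y‖ ^ 2 := by
      have : 0 ≤ kap N m k₂ T t * ‖y‖ ^ 2 := by positivity
      linarith
    have hQ : 1 + kap N m k₂ T t * ‖y‖ ^ 2 ≤ Q₀ := by simp only [Q₀]; gcongr
    have a1 : Q₀ ^ (-(pC N m + 1) - 1) ≤
        (1 + kap N m k₂ T t * ‖y‖ ^ 2) ^ (-(pC N m + δ) - 1) :=
      (Real.rpow_le_rpow_of_exponent_le hQ0 (by linarith)).trans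
        (Real.rpow_le_rpow_of_nonpos (by linarith) hQ (by linarith))
    have a2 : (1 / 2 : ℝ) ≤ max 0 (1 - ‖y‖ ^ 2 / r) := by
      refine le_trans ?_ (le_max_right _ _)
      have : ‖y‖ ^ 2 / r ≤ 1 / 2 := by rw [div_le_iff₀ hr0]; linarith
      linarith
    have a3 : Real.exp (-lamC N m T t₁ 1 * t₁) ≤ Real.exp (-lamC N m T t₁ δ * t) := by
      rw [Real.exp_le_exp, neg_mul, neg_mul, neg_le_neg_iff]
      exact mul_le_mul (H.lamC_mono ht1T hδ hδ1) htt ht.1.le (H.lamC_nonneg ht1T one_pos)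
    have a4 : bC N m * pC N m * (1 - m) * N / T ≤
        bC N m * (pC N m + δ) * (1 - m) * N / (T - t) := by
      have : 0 < T - t := by linarith [htT.2]
      have : T - t ≤ T := by linarith [ht.1]
      gcongr
      linarith
    have : 0 < T - t := by linarith [htT.2]
    simp only [c₂, diss]
    gcongr
  calc c₂ * volume.real (Metric.ball x₀ η) = ∫ _ in Metric.ball x₀ η, c₂ := by
        rw [setIntegral_const, smul_eq_mul, mul_comm]
    _ ≤ ∫ y in Metric.ball x₀ η,
          diss N m k₂ T δ (lamC N m T t₁ δ) r (fun y t => u y t - v y t) y t :=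
        setIntegral_mono_on (integrableOn_const measure_ball_lt_top.ne) hI.integrableOn
          measurableSet_ball hlow
    _ ≤ _ := setIntegral_le_integral hI (Eventually.of_forall fun y => H.diss_nonneg hδ htT.2 _ y)

/-- The truncated norms decrease by a fixed amount, up to an error that vanishes as `r → ∞`. -/
lemma decay (H : TrapPair N m T k₁ k₂ u v) {x₀ : Euc N} (hx : u x₀ 0 ≠ v x₀ 0) {t₁ : ℝ}
    (ht1 : 0 < t₁) (ht1T : t₁ < T) :
    ∃ c₀ > 0, ∀ δ, 0 < δ → δ ≤ 1 → ∀ ε > 0, ∀ᶠ r in atTop,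
      FW N m k₂ T δ (lamC N m T t₁ δ) r u v t₁ ≤
        FW N m k₂ T δ (lamC N m T t₁ δ) r u v 0 - c₀ + ε := by
  obtain ⟨c₁, hc1, t₂, ht2, ht21, R₁, hR1, hlow⟩ := H.diss_lower hx ht1 ht1T
  refine ⟨c₁ * t₂, by positivity, fun δ hδ hδ1 ε hε => ?_⟩
  set c := min 1 (kap N m k₂ T t₁)
  have hc : 0 < c := lt_min one_pos (kap_pos H.hk2 ht1T)
  have hlim : Tendsto (fun r => errD N m (zC N m T k₁ k₂) c δ r * tailC N δ * t₁) atTop (𝓝 0) := by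
    simpa using ((tendsto_errD (N := N) (m := m) (K := zC N m T k₁ k₂) (c := c) hδ).mul_const
      (tailC N δ)).mul_const t₁
  filter_upwards [hlim.eventually (gt_mem_nhds hε), eventually_ge_atTop R₁] with r he hr
  have hr0 : 0 < r := hR1.trans_le hr
  set E := errD N m (zC N m T k₁ k₂) c δ r * tailC N δ
  have hcont := H.continuousOn_FW (δ := δ) (lam := lamC N m T t₁ δ) hr0 ht1T
  have hmin : ∀ t ∈ Set.Ioc 0 t₁, _ := fun t ht =>
    H.left_deriv (t := t) hδ hδ1 hr0 ⟨ht.1, ht.2.trans_lt ht1T⟩ (H.le_lamC ht.2 ht1T hδ)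
      (H.lamC_nonneg ht1T hδ) hc (min_le_left _ _)
      ((min_le_right _ _).trans (kap_anti H.hb H.hk2 ht.2 ht1T))
      (F := FW N m k₂ T δ (lamC N m T t₁ δ) r u v) fun s => rfl
  -- the dissipation is used on `[0, t₂]`, and only its sign on `[t₂, t₁]`
  have s1 := le_of_left_minorant (K := -c₁ + E) ht2.le
    (hcont.mono (Set.Icc_subset_Icc_right ht21)) fun t ht => by
      obtain ⟨L, L', h1, h2, h3, h4⟩ := hmin t ⟨ht.1, ht.2.trans ht21⟩
      exact ⟨L, L', h1, h2, h3, h4.trans (by have := hlow δ hδ hδ1 r hr t ht; linarith)⟩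
  have s2 := le_of_left_minorant (K := E) ht21
    (hcont.mono (Set.Icc_subset_Icc_left ht2.le)) fun t ht => by
      obtain ⟨L, L', h1, h2, h3, h4⟩ := hmin t ⟨ht2.trans ht.1, ht.2⟩
      refine ⟨L, L', h1, h2, h3, h4.trans ?_⟩
      have : 0 ≤ ∫ y, diss N m k₂ T δ (lamC N m T t₁ δ) r (fun y t => u y t - v y t) y t :=
        integral_nonneg fun y => H.diss_nonneg hδ (ht.2.trans_lt ht1T) _ y
      linarith
  linear_combination s1 + s2 + he

end TrapPair

/-! ### Removing the truncation -/

lemma lamC_tendsto {N : ℕ} {m T t₁ : ℝ} {δ : ℕ → ℝ} (hδ : Tendsto δ atTop (𝓝 0)) :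
    Tendsto (fun n => lamC N m T t₁ (δ n)) atTop (𝓝 0) := by
  have hc : Continuous (lamC N m T t₁) := by unfold lamC; fun_prop
  have := (hc.tendsto 0).comp hδ
  have h0 : lamC N m T t₁ 0 = 0 := by simp [lamC]
  rwa [h0] at this

lemma psi_tendsto {N : ℕ} {m k T t₁ : ℝ} (hk : 0 < k) (ht : t₁ < T) {δ r : ℕ → ℝ}
    (hδ : Tendsto δ atTop (𝓝 0)) (hr : Tendsto r atTop atTop) (y : Euc N) :
    Tendsto (fun n => psi N m k T (δ n) (lamC N m T t₁ (δ n)) (r n) y t₁) atTop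
      (𝓝 ((1 + kap N m k T t₁ * ‖y‖ ^ 2) ^ (-pC N m))) := by
  have hκ := kap_pos (N := N) (m := m) hk ht
  have h1 : Tendsto (fun n => Real.exp (-lamC N m T t₁ (δ n) * t₁)) atTop (𝓝 1) := by
    have := (((lamC_tendsto (N := N) (m := m) (T := T) (t₁ := t₁) hδ).neg).mul_const t₁).rexp
    simpa using this
  have h2 : Tendsto (fun n => (1 + kap N m k T t₁ * ‖y‖ ^ 2) ^ (-(pC N m + δ n))) atTop
      (𝓝 ((1 + kap N m k T t₁ * ‖y‖ ^ 2) ^ (-pC N m))) := by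
    refine Tendsto.rpow tendsto_const_nhds ?_ (Or.inl (by positivity))
    simpa using (hδ.const_add (pC N m)).neg
  have h3 : Tendsto (fun n => (max 0 (1 - ‖y‖ ^ 2 / r n)) ^ 3) atTop (𝓝 1) := by
    have := ((tendsto_const_nhds (x := (0 : ℝ))).max
      ((hr.const_div_atTop (‖y‖ ^ 2)).const_sub 1)).pow 3
    simpa using this
  have := h1.mul (h2.mul h3)
  simpa [psi, radW] using this

namespace TrapPair

variable {N : ℕ} {m T k₁ k₂ : ℝ} {u v : Euc N → ℝ → ℝ}

lemma continuous_slice (H : TrapPair N m T k₁ k₂ u v) {t : ℝ} (h0 : 0 ≤ t) (ht : t < T) :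
    Continuous fun y => u y t - v y t := by
  have cs : Continuous fun y : Euc N => (y, t) := by fun_prop
  exact (H.cu.comp_continuous cs fun y => ⟨trivial, h0, ht⟩).sub
    (H.cv.comp_continuous cs fun y => ⟨trivial, h0, ht⟩)

/-- Strict contraction in the original variables, where the weight is `(1 + κ(t)‖y‖²)^(-p)`. The
truncation is removed by monotonicity at time `0` and by Fatou's lemma at time `t₁`. -/
lemma strict (H : TrapPair N m T k₁ k₂ u v) {x₀ : Euc N} (hx : u x₀ 0 ≠ v x₀ 0) {t₁ : ℝ}
    (ht1 : 0 < t₁) (ht1T : t₁ < T)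
    (hfin : ∫⁻ y, ENNReal.ofReal (|u y 0 - v y 0| * (1 + kap N m k₂ T 0 * ‖y‖ ^ 2) ^ (-pC N m)) < ⊤) :
    ∫⁻ y, ENNReal.ofReal (|u y t₁ - v y t₁| * (1 + kap N m k₂ T t₁ * ‖y‖ ^ 2) ^ (-pC N m)) <
      ∫⁻ y, ENNReal.ofReal (|u y 0 - v y 0| * (1 + kap N m k₂ T 0 * ‖y‖ ^ 2) ^ (-pC N m)) := by
  set I₀ := ∫⁻ y, ENNReal.ofReal (|u y 0 - v y 0| * (1 + kap N m k₂ T 0 * ‖y‖ ^ 2) ^ (-pC N m))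
  obtain ⟨c₀, hc0, hdec⟩ := H.decay hx ht1 ht1T
  -- `c₀` does not depend on `δ`, so `δ → 0` and `r → ∞` together, with cutoff error at most `c₀ / 2`
  set δ : ℕ → ℝ := fun n => 1 / ((n : ℝ) + 1)
  have hδ : ∀ n, 0 < δ n := fun n => by positivity
  have hδ1 : ∀ n, δ n ≤ 1 := fun n => by
    simp only [δ]; rw [div_le_one (by positivity)]; have := Nat.cast_nonneg (α := ℝ) n; linarith
  have hex : ∀ n : ℕ, ∃ r : ℝ, (n : ℝ) + 1 ≤ r ∧
      FW N m k₂ T (δ n) (lamC N m T t₁ (δ n)) r u v t₁ ≤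
        FW N m k₂ T (δ n) (lamC N m T t₁ (δ n)) r u v 0 - c₀ + c₀ / 2 := fun n =>
    ((eventually_ge_atTop _).and (hdec (δ n) (hδ n) (hδ1 n) (c₀ / 2) (by positivity))).exists
  choose r hrn hr using hex
  have hr0 : ∀ n, 0 < r n := fun n => by
    have := hrn n; have := Nat.cast_nonneg (α := ℝ) n; linarith
  have hrT : Tendsto r atTop atTop := by
    refine tendsto_atTop_mono (fun n => ?_) (tendsto_natCast_atTop_atTop (R := ℝ))
    have := hrn n; linarith
  have hδT : Tendsto δ atTop (𝓝 0) := tendsto_one_div_add_atTop_nhds_zero_nat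
  have cpsi : ∀ n {t}, t < T → Continuous fun y =>
      psi N m k₂ T (δ n) (lamC N m T t₁ (δ n)) (r n) y t := fun n t ht =>
    (continuousOn_psi H.hk2).comp_continuous (f := fun y : Euc N => (y, t)) (by fun_prop)
      fun y => ⟨trivial, ht⟩
  have h0 : ∀ n, FW N m k₂ T (δ n) (lamC N m T t₁ (δ n)) (r n) u v 0 ≤ I₀.toReal := by
    intro n
    rw [FW, integral_eq_lintegral_of_nonneg_ae
      (Eventually.of_forall fun y => mul_nonneg (abs_nonneg _) (psi_nonneg H.hk2 H.hT y))
      ((H.continuous_slice le_rfl H.hT).abs.mul (cpsi n H.hT)).aestronglyMeasurable]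
    refine ENNReal.toReal_mono hfin.ne (lintegral_mono fun y => ENNReal.ofReal_le_ofReal ?_)
    have hκ := kap_pos (N := N) (m := m) H.hk2 H.hT
    have hQ : 1 ≤ 1 + kap N m k₂ T 0 * ‖y‖ ^ 2 := by
      have : 0 ≤ kap N m k₂ T 0 * ‖y‖ ^ 2 := by positivity
      linarith
    have hX0 : 0 ≤ max 0 (1 - ‖y‖ ^ 2 / r n) := le_max_left _ _
    have hX : max 0 (1 - ‖y‖ ^ 2 / r n) ≤ 1 := max_le zero_le_one (by
      have := div_nonneg (sq_nonneg ‖y‖) (hr0 n).le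
      linarith)
    have : psi N m k₂ T (δ n) (lamC N m T t₁ (δ n)) (r n) y 0 ≤
        (1 + kap N m k₂ T 0 * ‖y‖ ^ 2) ^ (-pC N m) := by
      simp only [psi, radW, mul_zero, Real.exp_zero, one_mul]
      refine (mul_le_of_le_one_right (by positivity) (pow_le_one₀ hX0 hX)).trans ?_
      exact Real.rpow_le_rpow_of_exponent_le hQ (by linarith [hδ n])
    gcongr
  have hle : ∀ n, FW N m k₂ T (δ n) (lamC N m T t₁ (δ n)) (r n) u v t₁ ≤ I₀.toReal - c₀ / 2 :=
    fun n => by linarith [h0 n, hr n]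
  have hpos : 0 ≤ FW N m k₂ T (δ 0) (lamC N m T t₁ (δ 0)) (r 0) u v t₁ :=
    integral_nonneg fun y => mul_nonneg (abs_nonneg _) (psi_nonneg H.hk2 ht1T y)
  have hlint : ∀ n, ∫⁻ y, ENNReal.ofReal (|u y t₁ - v y t₁| *
      psi N m k₂ T (δ n) (lamC N m T t₁ (δ n)) (r n) y t₁) ≤
      ENNReal.ofReal (I₀.toReal - c₀ / 2) := by
    intro n
    have := ofReal_integral_eq_lintegral_ofReal (μ := (volume : Measure (Euc N)))
      (((H.continuous_slice ht1.le ht1T).abs.mul (cpsi n ht1T)).integrable_of_hasCompactSupport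
        (HasCompactSupport.intro (isCompact_closedBall (0 : Euc N) (√(r n))) fun y hy => by
          rw [Pi.mul_apply, psi_eq_zero (hr0 n) (by simpa using hy), mul_zero]))
      (Eventually.of_forall fun y => mul_nonneg (abs_nonneg _) (psi_nonneg H.hk2 ht1T y))
    simp only [Pi.mul_apply] at this
    rw [← this]
    exact ENNReal.ofReal_le_ofReal (hle n)
  calc _ = ∫⁻ y, liminf (fun n => ENNReal.ofReal (|u y t₁ - v y t₁| *
          psi N m k₂ T (δ n) (lamC N m T t₁ (δ n)) (r n) y t₁)) atTop := by
        refine lintegral_congr fun y => ?_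
        exact (ENNReal.tendsto_ofReal ((psi_tendsto H.hk2 ht1T hδT hrT y).const_mul _)).liminf_eq.symm
    _ ≤ liminf (fun n => ∫⁻ y, ENNReal.ofReal (|u y t₁ - v y t₁| *
          psi N m k₂ T (δ n) (lamC N m T t₁ (δ n)) (r n) y t₁)) atTop :=
        lintegral_liminf_le fun n => ENNReal.measurable_ofReal.comp
          ((H.continuous_slice ht1.le ht1T).abs.mul (cpsi n ht1T)).measurable
    _ ≤ ENNReal.ofReal (I₀.toReal - c₀ / 2) := by
        refine (liminf_le_liminf (Eventually.of_forall hlint)).trans ?_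
        simp
    _ < ENNReal.ofReal I₀.toReal :=
        (ENNReal.ofReal_lt_ofReal_iff (by have := hpos.trans (hle 0); linarith)).2 (by linarith)
    _ = I₀ := ENNReal.ofReal_toReal hfin.ne

end TrapPair

/-! ### Rescaled variables -/

lemma lintegral_comp_smul_pos {N : ℕ} (f : Euc N → ENNReal) {c : ℝ} (hc : 0 < c) :
    ∫⁻ x, f (c • x) = ENNReal.ofReal ((c ^ N)⁻¹) * ∫⁻ y, f y := by
  rw [← (measurableEmbedding_const_smul₀ hc.ne').lintegral_map,
    Measure.map_addHaar_smul _ hc.ne', lintegral_smul_measure, smul_eq_mul]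
  rw [finrank_euclideanSpace_fin, abs_of_pos (by positivity)]

/-- The weighted norm in the rescaled variables is a fixed multiple of the weighted norm in the
original variables: the Jacobian of `x ↦ c • x` cancels the factor `e^(βτ) = c^N`. -/
lemma lintegral_rescale {N : ℕ} {m T k : ℝ} {u v : Euc N → ℝ → ℝ} (hN : 0 < N) (hk : 0 < k)
    (hm0 : 0 < m) (hm1 : m < 1) (hb : 0 < bC N m) (τ : ℝ) :
    ∫⁻ x, ENNReal.ofReal (|rescaleSol N m T u x τ - rescaleSol N m T v x τ|
        * BbTil N m k x ^ (((N : ℝ) - 2) * (1 - m) / 2 - 1)) =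
      ENNReal.ofReal ((Cst N m / k) ^ pC N m) *
        ∫⁻ y, ENNReal.ofReal (|u y (T - Real.exp (-τ)) - v y (T - Real.exp (-τ))|
          * (1 + kap N m k T (T - Real.exp (-τ)) * ‖y‖ ^ 2) ^ (-pC N m)) := by
  have h1m : 0 < 1 - m := by linarith
  have hN0 : (N : ℝ) ≠ 0 := by exact_mod_cast hN.ne'
  have hC : 0 < Cst N m := by rw [Cst_eq hb]; positivity
  set t := T - Real.exp (-τ) with ht
  set c := Real.exp (bC N m * τ) with hc
  have hc0 : 0 < c := Real.exp_pos _
  have hβ : Real.exp (betaC N m * τ) = c ^ N := by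
    rw [hc, ← Real.exp_nat_mul]; congr 1
    unfold betaC bC; rw [mul_comm (N : ℝ) m]; ring
  have hκ : kap N m k T t = (c ^ 2)⁻¹ / k := by
    unfold kap
    rw [ht, sub_sub_cancel, ← Real.exp_mul, hc, ← Real.exp_nat_mul, ← Real.exp_neg]
    congr 2; push_cast; ring
  have hpt : ∀ x : Euc N, |rescaleSol N m T u x τ - rescaleSol N m T v x τ|
        * BbTil N m k x ^ (((N : ℝ) - 2) * (1 - m) / 2 - 1) =
      (c ^ N * (Cst N m / k) ^ pC N m) * (|u (c • x) t - v (c • x) t|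
          * (1 + kap N m k T t * ‖c • x‖ ^ 2) ^ (-pC N m)) := by
    intro x
    have hB : BbTil N m k x ^ (((N : ℝ) - 2) * (1 - m) / 2 - 1) =
        (Cst N m / k) ^ pC N m * (1 + kap N m k T t * ‖c • x‖ ^ 2) ^ (-pC N m) := by
      have hQ : 0 < 1 + kap N m k T t * ‖c • x‖ ^ 2 := by rw [hκ]; positivity
      rw [BbTil, ← Real.rpow_mul (by positivity), Real.rpow_neg hQ.le, ← Real.inv_rpow hQ.le,
        ← Real.mul_rpow (by positivity) (by positivity)]
      congr 1
      · rw [hκ, norm_smul, Real.norm_of_nonneg hc0.le]; field_simp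
      · unfold pC; field_simp
    have hR : ∀ w : Euc N → ℝ → ℝ, rescaleSol N m T w x τ = c ^ N * w (c • x) t := by
      intro w
      rw [rescaleSol, hβ, gammaC_eq hN, neg_neg]
    rw [hB, hR, hR, ← mul_sub, abs_mul, abs_of_pos (by positivity : 0 < c ^ N)]
    ring
  have hA : 0 ≤ c ^ N * (Cst N m / k) ^ pC N m := by positivity
  simp_rw [hpt, ENNReal.ofReal_mul hA]
  rw [lintegral_const_mul' _ _ ENNReal.ofReal_ne_top,
    lintegral_comp_smul_pos (fun y => ENNReal.ofReal (|u y t - v y t|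
          * (1 + kap N m k T t * ‖y‖ ^ 2) ^ (-pC N m))) hc0, ← mul_assoc,
    ← ENNReal.ofReal_mul hA]
  congr 2
  field_simp

/-- Weighted strong contraction: with weight B̃^α, α = (N-2)(1-m)/2 - 1, for
two trapped solutions with ũ₀ - ṽ₀ ∈ L¹(B̃^α) nonzero, the weighted L¹ distance of the
rescaled solutions strictly decreases. -/
theorem weighted_strong_contraction (N : ℕ) (hN : 4 < N) (m T k₁ k₂ : ℝ)
    (hm0 : 0 < m) (hm1 : m < ((N : ℝ) - 4) / ((N : ℝ) - 2))
    (hT : 0 < T) (hk2 : 0 < k₂) (hk12 : k₂ < k₁)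
    (u v : Euc N → ℝ → ℝ) (u₀ v₀ : Euc N → ℝ)
    (hu : IsFDESol N m T u u₀) (hv : IsFDESol N m T v v₀)
    (htrap0u : ∀ x : Euc N,
      (Cst N m * T / (k₁ + ‖x‖ ^ 2)) ^ (1 / (1 - m)) ≤ u₀ x ∧
        u₀ x ≤ (Cst N m * T / (k₂ + ‖x‖ ^ 2)) ^ (1 / (1 - m)))
    (htrap0v : ∀ x : Euc N,
      (Cst N m * T / (k₁ + ‖x‖ ^ 2)) ^ (1 / (1 - m)) ≤ v₀ x ∧
        v₀ x ≤ (Cst N m * T / (k₂ + ‖x‖ ^ 2)) ^ (1 / (1 - m)))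
    (htrapu : ∀ x : Euc N, ∀ t ∈ Set.Ioo (0:ℝ) T,
      Bb N m T k₁ x t ≤ u x t ∧ u x t ≤ Bb N m T k₂ x t)
    (htrapv : ∀ x : Euc N, ∀ t ∈ Set.Ioo (0:ℝ) T,
      Bb N m T k₁ x t ≤ v x t ∧ v x t ≤ Bb N m T k₂ x t)
    (hwint : (∫⁻ x, ENNReal.ofReal
        (|rescaleSol N m T u x (-Real.log T) - rescaleSol N m T v x (-Real.log T)|
          * BbTil N m k₂ x ^ (((N : ℝ) - 2) * (1 - m) / 2 - 1))) < ⊤)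
    (hne : ∃ x : Euc N,
      rescaleSol N m T u x (-Real.log T) ≠ rescaleSol N m T v x (-Real.log T)) :
    ∀ τ : ℝ, -Real.log T < τ →
      (∫⁻ x, ENNReal.ofReal (|rescaleSol N m T u x τ - rescaleSol N m T v x τ|
          * BbTil N m k₂ x ^ (((N : ℝ) - 2) * (1 - m) / 2 - 1)))
        < ∫⁻ x, ENNReal.ofReal
            (|rescaleSol N m T u x (-Real.log T) - rescaleSol N m T v x (-Real.log T)|
              * BbTil N m k₂ x ^ (((N : ℝ) - 2) * (1 - m) / 2 - 1)) := by
  have hN4 : (4 : ℝ) < N := by exact_mod_cast hN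
  have hN2 : 0 < (N : ℝ) - 2 := by linarith
  have hmN : m * ((N : ℝ) - 2) < (N : ℝ) - 4 := (lt_div_iff₀ hN2).1 hm1
  have hm1' : m < 1 := hm1.trans ((div_lt_one hN2).2 (by linarith))
  have h1m : 0 < 1 - m := by linarith
  have hb : 0 < bC N m := one_div_pos.2 (by nlinarith)
  -- this is where `m < (N-4)/(N-2)` enters
  have hp : 0 < pC N m := by
    unfold pC
    rw [sub_pos, div_lt_div_iff₀ h1m two_pos]
    linarith
  have hN0 : 0 < N := by omega
  have H : TrapPair N m T k₁ k₂ u v :=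
    ⟨hN, hm0, hm1', hb, hp, hT, hk2, hk12, hu.2.1, hv.2.1, hu.2.2.1, hv.2.2.1, hu.2.2.2.2,
      hv.2.2.2.2, htrapu, htrapv⟩
  have hC : 0 < Cst N m := by rw [Cst_eq hb]; positivity
  have hA : 0 < (Cst N m / k₂) ^ pC N m := by positivity
  have ht0 : T - Real.exp (-(-Real.log T)) = 0 := by rw [neg_neg, Real.exp_log hT, sub_self]
  obtain ⟨x, hx⟩ := hne
  have hx' : ∃ x₀, u x₀ 0 ≠ v x₀ 0 := by
    refine ⟨Real.exp (-gammaC N m * -Real.log T) • x, fun h => hx ?_⟩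
    rw [rescaleSol, rescaleSol, ht0, h]
  obtain ⟨x₀, hx₀⟩ := hx'
  intro τ hτ
  have hexp : Real.exp (-τ) < T := by
    rw [← Real.exp_log hT]
    exact Real.exp_lt_exp.2 (by linarith)
  rw [lintegral_rescale hN0 hk2 hm0 hm1' hb, ht0] at hwint
  rw [lintegral_rescale hN0 hk2 hm0 hm1' hb, lintegral_rescale hN0 hk2 hm0 hm1' hb, ht0]
  have hA0 : ENNReal.ofReal ((Cst N m / k₂) ^ pC N m) ≠ 0 := (ENNReal.ofReal_pos.2 hA).ne'
  refine (ENNReal.mul_lt_mul_iff_right hA0 ENNReal.ofReal_ne_top).2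
    (H.strict hx₀ (by linarith) (by linarith [Real.exp_pos (-τ)]) ?_)
  exact lt_top_iff_ne_top.2 fun h => by
    rw [h, ENNReal.mul_top hA0] at hwint
    exact lt_irrefl _ hwint
end
end
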